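/- arXiv:2305.00728 — 4 statements merged into one kernel-verified Lean document; each statement's English description precedes it below -/
import Mathlib

section
/- Let 0 < γ < 2. Then the radial principal eigenvalue λ̄'_γ(F) is strictly positive, and there exists a function u : [0,1] → ℝ, continuous on [0,1], twice continuously differentiable on (0,1), with u > 0 on [0,1) and u(1) = 0, satisfying F(D(u''(r), u'(r)/r)) + λ̄'_γ(F)·u(r)·r^{−γ} = 0 for all r ∈ (0,1). Moreover u is Lipschitz continuous on [0,1] if γ ≤ 1, is C¹ on [0,1) if γ < 1, and is Hölder continuous with exponent 2−γ on [0,1] if 1 < γ < 2. -/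
open Set Real Filter MeasureTheory Matrix

noncomputable section

/-- The `N × N` diagonal matrix with first diagonal entry `a` and the remaining
`N - 1` diagonal entries equal to `b`. -/
def Dmat (N : ℕ) (a b : ℝ) : Matrix (Fin N) (Fin N) ℝ :=
  Matrix.diagonal (fun i => if (i : ℕ) = 0 then a else b)

/-- Uniform ellipticity with constants `0 < lam ≤ Lam`. -/
def UnifElliptic (N : ℕ) (lam Lam : ℝ) (F : Matrix (Fin N) (Fin N) ℝ → ℝ) : Prop :=
  ∀ M P : Matrix (Fin N) (Fin N) ℝ, M.IsSymm → P.PosSemidef →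
    lam * P.trace ≤ F (M + P) - F M ∧ F (M + P) - F M ≤ Lam * P.trace

/-- Rotation invariance. -/
def RotInvariant (N : ℕ) (F : Matrix (Fin N) (Fin N) ℝ → ℝ) : Prop :=
  ∀ O M : Matrix (Fin N) (Fin N) ℝ, Oᵀ * O = 1 → F (Oᵀ * M * O) = F M

/-- Positive one-homogeneity. -/
def PosHomog (N : ℕ) (F : Matrix (Fin N) (Fin N) ℝ → ℝ) : Prop :=
  ∀ t : ℝ, 0 < t → ∀ M : Matrix (Fin N) (Fin N) ℝ, F (t • M) = t * F M

/-- The radial principal eigenvalue `λ̄'_γ(F)` on the punctured unit ball. -/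
def radialEV (N : ℕ) (F : Matrix (Fin N) (Fin N) ℝ → ℝ) (γ : ℝ) : ℝ :=
  sSup {μ : ℝ | ∃ u : ℝ → ℝ, ContDiffOn ℝ 2 u (Ioo 0 1) ∧
    (∀ r ∈ Ioo (0:ℝ) 1, 0 < u r) ∧
    (∀ r ∈ Ioo (0:ℝ) 1,
      F (Dmat N (deriv (deriv u) r) (deriv u r / r)) + μ * u r * r ^ (-γ) ≤ 0)}

structure EllF (f : ℝ → ℝ → ℝ) (lam Lam n : ℝ) : Prop where
  lam_pos : 0 < lam
  le : lam ≤ Lam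
  n_pos : 0 < n
  ell : ∀ a b a' b' : ℝ, a ≤ a' → b ≤ b' →
    lam * ((a' - a) + n * (b' - b)) ≤ f a' b' - f a b ∧
    f a' b' - f a b ≤ Lam * ((a' - a) + n * (b' - b))
  homog : ∀ t a b : ℝ, 0 < t → f (t * a) (t * b) = t * f a b

theorem EllF.zero {f : ℝ → ℝ → ℝ} {lam Lam n : ℝ} (h : EllF f lam Lam n) : f 0 0 = 0 := by
  have := h.homog 2 0 0 (by norm_num)
  simp at this
  linarith

theorem EllF.exG {f : ℝ → ℝ → ℝ} {lam Lam n : ℝ} (h : EllF f lam Lam n) :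
    ∃ G : ℝ → ℝ → ℝ, ∀ b c, f (G b c) b = c := by
  have hl := h.lam_pos
  have hle := h.le
  have key : ∀ b, Function.Surjective (fun a => f a b) := by
    intro b
    apply Continuous.surjective
    · have : LipschitzWith (Real.toNNReal Lam) (fun a => f a b) := by
        apply LipschitzWith.of_dist_le_mul
        intro x y
        rw [Real.dist_eq, Real.dist_eq, Real.coe_toNNReal _ (by linarith)]
        rcases le_total x y with hxy | hxy
        · have := h.ell x b y b hxy le_rfl
          rw [abs_sub_comm, abs_sub_comm x y, abs_of_nonneg (sub_nonneg.2 hxy), abs_le]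
          constructor <;> nlinarith
        · have := h.ell y b x b hxy le_rfl
          rw [abs_of_nonneg (sub_nonneg.2 hxy), abs_le]
          constructor <;> nlinarith
      exact this.continuous
    · have h1 : Tendsto (fun a : ℝ => lam * a + f 0 b) atTop atTop :=
        tendsto_atTop_add_const_right _ _ (tendsto_id.const_mul_atTop hl)
      refine tendsto_atTop_mono' _ ?_ h1
      filter_upwards [eventually_ge_atTop 0] with a ha
      have := (h.ell 0 b a b ha le_rfl).1
      nlinarith
    · have h1 : Tendsto (fun a : ℝ => lam * a + f 0 b) atBot atBot :=
        tendsto_atBot_add_const_right _ _ (tendsto_id.const_mul_atBot hl)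
      refine tendsto_atBot_mono' _ ?_ h1
      filter_upwards [eventually_le_atBot 0] with a ha
      have := (h.ell a b 0 b ha le_rfl).1
      nlinarith
  choose G hG using key
  exact ⟨G, hG⟩

theorem EllF.cmp {f : ℝ → ℝ → ℝ} {lam Lam n : ℝ} (h : EllF f lam Lam n)
    {a b a' b' : ℝ} (hb : b' ≤ b) (hf : f a b ≤ f a' b') :
    a - a' ≤ -(lam / Lam * n) * (b - b') := by
  have hl := h.lam_pos
  have hle := h.le
  have hn := h.n_pos
  have hL : 0 < Lam := by linarith
  rcases le_total a' a with ha | ha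
  · have h1 := (h.ell a' b' a b ha hb).1
    have h2 : lam * ((a - a') + n * (b - b')) ≤ 0 := by linarith
    have h3 : (a - a') + n * (b - b') ≤ 0 := by
      by_contra hc
      push Not at hc
      have := mul_pos hl hc
      linarith
    have h4 : 0 ≤ n * (b - b') := mul_nonneg hn.le (by linarith)
    have h5 : a - a' = 0 := by linarith
    have h6 : n * (b - b') = 0 := by linarith
    have h7 : lam / Lam * n * (b - b') = lam / Lam * (n * (b - b')) := by ring
    rw [neg_mul, h7, h5, h6]; simp
  · have h1 := (h.ell a b' a b le_rfl hb).1
    have h2 := (h.ell a b' a' b' ha le_rfl).2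
    have h3 : lam * n * (b - b') ≤ Lam * (a' - a) := by nlinarith
    have h4 : lam / Lam * n * (b - b') = (lam * n * (b - b')) / Lam := by ring
    have h5 : lam / Lam * n * (b - b') ≤ a' - a := by
      rw [h4, div_le_iff₀ hL]; linarith
    linarith

theorem EllF.lipb {f : ℝ → ℝ → ℝ} {lam Lam n : ℝ} (h : EllF f lam Lam n)
    {a b a' b' : ℝ} (hb : b' ≤ b) (hf : f a b = f a' b') :
    -(Lam / lam * n) * (b - b') ≤ a - a' := by
  have hl := h.lam_pos
  have hle := h.le
  have hn := h.n_pos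
  rcases le_total a' a with ha | ha
  · have : 0 ≤ (Lam / lam * n) * (b - b') :=
      mul_nonneg (mul_nonneg (div_nonneg (by linarith) hl.le) hn.le) (by linarith)
    linarith
  · have h1 := (h.ell a b' a b le_rfl hb).2
    have h2 := (h.ell a b' a' b' ha le_rfl).1
    have h3 : lam * (a' - a) ≤ Lam * n * (b - b') := by nlinarith
    have h4 : Lam / lam * n * (b - b') = (Lam * n * (b - b')) / lam := by ring
    have h5 : a' - a ≤ Lam / lam * n * (b - b') := by
      rw [h4, le_div_iff₀ hl]; linarith
    linarith

theorem EllF.lipc {f : ℝ → ℝ → ℝ} {lam Lam n : ℝ} (h : EllF f lam Lam n)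
    {a b a' : ℝ} : |a - a'| ≤ |f a b - f a' b| / lam := by
  have hl := h.lam_pos
  rw [le_div_iff₀ hl]
  rcases le_total a' a with ha | ha
  · have h1 := (h.ell a' b a b ha le_rfl).1
    rw [abs_of_nonneg (sub_nonneg.2 ha)]
    refine le_trans ?_ (le_abs_self _)
    nlinarith
  · have h1 := (h.ell a b a' b ha le_rfl).1
    rw [abs_sub_comm, abs_of_nonneg (sub_nonneg.2 ha), abs_sub_comm]
    refine le_trans ?_ (le_abs_self _)
    nlinarith

/-- The nonlinearity of the singular ODE. -/
theorem EllF.exM {f : ℝ → ℝ → ℝ} {lam Lam n : ℝ} (h : EllF f lam Lam n)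
    (hl1 : 1 < lam / Lam * n) (β : ℝ) (hβ : 0 < β) :
    ∃ (k : ℕ) (L c : ℝ) (M : ℝ → ℝ → ℝ), 0 < L ∧ 0 < c ∧
      (∀ p p' u u', |M p u - M p' u'| ≤ k * |p - p'| + L * |u - u'|) ∧
      (∀ p p' u, p ≤ p' → M p u ≤ M p' u) ∧
      (∀ u, 0 ≤ u → M 0 u ≤ - c * u) ∧
      (∀ p u, f (β * ((β - 1) * p + β * (M p u - (k + 1) * p))) (β * p) = - u) := by
  have hl := h.lam_pos
  have hle := h.le
  have hn := h.n_pos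
  have hL : 0 < Lam := by linarith
  obtain ⟨G, hG⟩ := h.exG
  obtain ⟨k, hk⟩ := exists_nat_ge ((Lam / lam * n + β) / β)
  rw [div_le_iff₀ hβ] at hk
  refine ⟨k, 1 / (lam * β ^ 2), 1 / (Lam * β ^ 2),
    fun p u => (G p (-u / β) - (β - 1) * p) / β + (k + 1) * p, by positivity, by positivity,
    ?_, ?_, ?_, ?_⟩
  · -- Lipschitz
    have hp : ∀ p p' u, p' ≤ p →
        |((G p (-u / β) - (β - 1) * p) / β + (k + 1) * p)
          - ((G p' (-u / β) - (β - 1) * p') / β + (k + 1) * p')| ≤ k * |p - p'| := by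
      intro p p' u hpp
      have e : f (G p (-u / β)) p = f (G p' (-u / β)) p' := by rw [hG, hG]
      have h1 := h.cmp hpp e.le
      have h2 := h.lipb hpp e
      have h0 : ((G p (-u / β) - (β - 1) * p) / β + (k + 1) * p)
          - ((G p' (-u / β) - (β - 1) * p') / β + (k + 1) * p')
          = ((G p (-u / β) - G p' (-u / β)) + (k * β + 1) * (p - p')) / β := by
        field_simp; ring
      rw [h0, abs_of_nonneg (sub_nonneg.2 hpp), abs_le, le_div_iff₀ hβ, div_le_iff₀ hβ]
      have h3 : 0 ≤ p - p' := by linarith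
      constructor
      · have hk0 : (0:ℝ) ≤ k := Nat.cast_nonneg k
        have : 0 ≤ k * (p - p') * β := by positivity
        nlinarith
      · nlinarith
    have hp2 : ∀ p p' u, 
        |((G p (-u / β) - (β - 1) * p) / β + (k + 1) * p)
          - ((G p' (-u / β) - (β - 1) * p') / β + (k + 1) * p')| ≤ k * |p - p'| := by
      intro p p' u
      rcases le_total p' p with hh | hh
      · exact hp p p' u hh
      · rw [abs_sub_comm, abs_sub_comm p]; exact hp p' p u hh
    intro p p' u u'
    refine le_trans (abs_sub_le _ ((G p' (-u / β) - (β - 1) * p') / β + (k + 1) * p') _) ?_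
    refine add_le_add (hp2 p p' u) ?_
    have h0 : ((G p' (-u / β) - (β - 1) * p') / β + (k + 1) * p')
          - ((G p' (-u' / β) - (β - 1) * p') / β + (k + 1) * p')
          = (G p' (-u / β) - G p' (-u' / β)) / β := by ring
    rw [h0, abs_div, abs_of_pos hβ, div_le_iff₀ hβ]
    refine le_trans (h.lipc (b := p')) ?_
    rw [hG, hG]
    have : -u / β - -u' / β = -((u - u') / β) := by ring
    rw [this, abs_neg, abs_div, abs_of_pos hβ]
    apply le_of_eq
    field_simp
  · intro p p' u hpp
    have e : f (G p' (-u / β)) p' = f (G p (-u / β)) p := by rw [hG, hG]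
    have h2 := h.lipb hpp e
    have h0 : ((G p' (-u / β) - (β - 1) * p') / β + (k + 1) * p')
          - ((G p (-u / β) - (β - 1) * p) / β + (k + 1) * p)
          = ((G p' (-u / β) - G p (-u / β)) + (k * β + 1) * (p' - p)) / β := by
        field_simp; ring
    have h3 : 0 ≤ p' - p := by linarith
    have : 0 ≤ ((G p' (-u / β) - G p (-u / β)) + (k * β + 1) * (p' - p)) / β := by
      apply div_nonneg _ hβ.le
      nlinarith
    simp only
    linarith
  · intro u hu
    have e := hG 0 (-u / β)
    set a := G 0 (-u / β)
    have hz := h.zero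
    have hub : 0 ≤ u / β := by positivity
    have hneg : -u / β = -(u / β) := by ring
    have ha : a ≤ 0 := by
      by_contra hc
      push Not at hc
      have := (h.ell 0 0 a 0 hc.le le_rfl).1
      nlinarith [mul_pos hl hc]
    have h1 := (h.ell a 0 0 0 ha le_rfl).2
    have h2 : u / β ≤ Lam * (-a) := by nlinarith
    have h3 : u ≤ Lam * (-a) * β := by rwa [div_le_iff₀ hβ] at h2
    simp only [mul_zero, sub_zero, add_zero]
    rw [div_le_iff₀ hβ]
    have : -(1 / (Lam * β ^ 2)) * u * β = - (u / (Lam * β)) := by field_simp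
    rw [this]
    have : u / (Lam * β) ≤ -a := by
      rw [div_le_iff₀ (by positivity)]; linarith
    linarith
  · intro p u
    have : β * ((β - 1) * p + β * ((G p (-u / β) - (β - 1) * p) / β + (k + 1) * p - (k + 1) * p))
        = β * G p (-u / β) := by field_simp; ring
    simp only
    rw [this, h.homog _ _ _ hβ, hG]
    field_simp

/-- Comparison for Riccati-type inequalities. -/
theorem riccati_cmp (x y x' y' : ℝ → ℝ) (R l : ℝ)
    (hx : ∀ r ∈ Ioo 0 R, HasDerivAt x (x' r) r) (hy : ∀ r ∈ Ioo 0 R, HasDerivAt y (y' r) r)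
    (hl : 0 ≤ l)
    (hD : ∀ r ∈ Ioo 0 R, y r < x r →
      x' r - y' r ≤ - l * ((x r - y r) / r) - (x r ^ 2 - y r ^ 2))
    (hd : ∃ δ > 0, ∀ r ∈ Ioo 0 δ, -(l - 1) ≤ 2 * (r * y r)) :
    ∀ r ∈ Ioo 0 R, x r ≤ y r := by
  intro r1 hr1
  by_contra hc
  push Not at hc
  have hder : ∀ r ∈ Ioo 0 R, HasDerivAt (fun r => x r - y r) (x' r - y' r) r :=
    fun r hr => (hx r hr).sub (hy r hr)
  -- Step 1
  have step1 : ∀ r ∈ Ioc 0 r1, y r < x r := by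
    intro r0 hr0
    by_contra hcr
    push Not at hcr
    have hsub : Icc r0 r1 ⊆ Ioo 0 R := fun s hs => ⟨hr0.1.trans_le hs.1, hs.2.trans_lt hr1.2⟩
    have hxc : ContinuousOn x (Icc r0 r1) := fun s hs => (hx s (hsub hs)).continuousAt.continuousWithinAt
    have hyc : ContinuousOn y (Icc r0 r1) := fun s hs => (hy s (hsub hs)).continuousAt.continuousWithinAt
    have hcomp : IsCompact {s ∈ Icc r0 r1 | x s ≤ y s} := by
      apply IsCompact.of_isClosed_subset isCompact_Icc _ (fun s hs => hs.1)
      exact isClosed_Icc.isClosed_le hxc hyc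
    obtain ⟨s, hs, hsmax⟩ := hcomp.exists_isGreatest ⟨r0, ⟨le_rfl, hr0.2⟩, hcr⟩
    have hs1 : s < r1 := lt_of_le_of_ne hs.1.2 (by rintro rfl; exact absurd hs.2 (not_le.2 hc))
    obtain ⟨C, hC⟩ := isCompact_Icc.exists_bound_of_continuousOn (hxc.add hyc)
    have hpos : ∀ t ∈ Ioc s r1, y t < x t := by
      intro t ht
      by_contra hh
      push Not at hh
      exact absurd (hsmax ⟨⟨hs.1.1.trans ht.1.le, ht.2⟩, hh⟩) (not_le.2 ht.1)
    have hsub2 : Icc s r1 ⊆ Icc r0 r1 := Icc_subset_Icc hs.1.1 le_rfl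
    have hgd : ∀ t ∈ Ioo 0 R, HasDerivAt (fun t => (x t - y t) * exp (-C * t))
        ((x' t - y' t) * exp (-C * t) + (x t - y t) * (exp (-C * t) * (-C * 1))) t := by
      intro t ht
      exact (hder t ht).mul (((hasDerivAt_id t).const_mul (-C)).exp)
    have hanti : AntitoneOn (fun t => (x t - y t) * exp (-C * t)) (Icc s r1) := by
      apply antitoneOn_of_deriv_nonpos (convex_Icc _ _)
      · exact fun t ht => (hgd t (hsub (hsub2 ht))).continuousAt.continuousWithinAt
      · intro t ht
        rw [interior_Icc] at ht
        exact (hgd t (hsub (hsub2 (Ioo_subset_Icc_self ht)))).differentiableAt.differentiableWithinAt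
      · intro t ht
        rw [interior_Icc] at ht
        have ht2 := hsub (hsub2 (Ioo_subset_Icc_self ht))
        rw [(hgd t ht2).deriv]
        have h1 := hpos t ⟨ht.1, ht.2.le⟩
        have h2 := hD t ht2 h1
        have h3 := hC t (hsub2 (Ioo_subset_Icc_self ht))
        have h3' : -(C) ≤ x t + y t := (abs_le.1 h3).1
        have h4 : 0 ≤ l * ((x t - y t) / t) :=
          mul_nonneg hl (div_nonneg (by linarith) ht2.1.le)
        have h5 : x' t - y' t - C * (x t - y t) ≤ 0 := by nlinarith
        have h6 : (x' t - y' t) * exp (-C * t) + (x t - y t) * (exp (-C * t) * (-C * 1))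
          = (x' t - y' t - C * (x t - y t)) * exp (-C * t) := by ring
        rw [h6]
        exact mul_nonpos_of_nonpos_of_nonneg h5 (exp_pos _).le
    have h7 := hanti ⟨le_rfl, hs1.le⟩ ⟨hs1.le, le_rfl⟩ hs1.le
    simp only at h7
    have h8 : (x s - y s) * exp (-C * s) ≤ 0 :=
      mul_nonpos_of_nonpos_of_nonneg (by linarith [hs.2]) (exp_pos _).le
    have h9 : 0 < (x r1 - y r1) * exp (-C * r1) := mul_pos (by linarith) (exp_pos _)
    linarith
  -- Step 2
  obtain ⟨δ, hδ, hδy⟩ := hd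
  set ρ := min (δ / 2) r1 with hρ
  have hρ0 : 0 < ρ := lt_min (by linarith) hr1.1
  have hρδ : ρ < δ := (min_le_left _ _).trans_lt (by linarith)
  have hρr : ρ ≤ r1 := min_le_right _ _
  have hJd : ∀ r ∈ Ioc 0 ρ, HasDerivAt (fun r => (r * (x r - y r))⁻¹ - log r)
      (-(1 * (x r - y r) + r * (x' r - y' r)) / (r * (x r - y r)) ^ 2 - r⁻¹) r := by
    intro r hr
    have hrR : r ∈ Ioo 0 R := ⟨hr.1, (hr.2.trans hρr).trans_lt hr1.2⟩
    have h1 := step1 r ⟨hr.1, hr.2.trans hρr⟩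
    have h2 : r * (x r - y r) ≠ 0 := (mul_pos hr.1 (by linarith)).ne'
    exact ((((hasDerivAt_id r).mul (hder r hrR)).inv h2).sub (hasDerivAt_log hr.1.ne'))
  have hmono : MonotoneOn (fun r => (r * (x r - y r))⁻¹ - log r) (Ioc 0 ρ) := by
    apply monotoneOn_of_deriv_nonneg (convex_Ioc _ _)
    · exact fun t ht => (hJd t ht).continuousAt.continuousWithinAt
    · intro t ht
      rw [interior_Ioc] at ht
      exact (hJd t (Ioo_subset_Ioc_self ht)).differentiableAt.differentiableWithinAt
    · intro t ht
      rw [interior_Ioc] at ht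
      rw [(hJd t (Ioo_subset_Ioc_self ht)).deriv]
      have htR : t ∈ Ioo 0 R := ⟨ht.1, (ht.2.le.trans hρr).trans_lt hr1.2⟩
      have h1 := step1 t ⟨ht.1, ht.2.le.trans hρr⟩
      have h2 := hD t htR h1
      have h3 := hδy t ⟨ht.1, ht.2.trans hρδ⟩
      obtain ⟨D, hDe⟩ : ∃ D, D = x t - y t := ⟨_, rfl⟩
      have hDp : 0 < D := by linarith
      have hxe : x t = y t + D := by linarith
      have ht0 := ht.1
      have h4 : -(1 * (x t - y t) + t * (x' t - y' t)) / (t * (x t - y t)) ^ 2 - t⁻¹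
        = (-(D + t * (x' t - y' t)) - t * D ^ 2) / (t * D) ^ 2 := by
        rw [← hDe]; field_simp
      rw [h4]
      apply div_nonneg _ (by positivity)
      rw [← hDe, hxe] at h2
      have h5 : t * (x' t - y' t) ≤ - l * D - t * (2 * y t * D + D ^ 2) := by
        have h6 := mul_le_mul_of_nonneg_left h2 ht0.le
        have h7 : t * (-l * (D / t) - ((y t + D) ^ 2 - y t ^ 2))
          = - l * D - t * (2 * y t * D + D ^ 2) := by field_simp; ring
        linarith
      nlinarith
  have hlog := tendsto_log_nhdsGT_zero.eventually
    (eventually_lt_atBot (-((ρ * (x ρ - y ρ))⁻¹ - log ρ)))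
  have hmem : ∀ᶠ r in nhdsWithin (0:ℝ) (Ioi 0), r ∈ Ioc 0 ρ := Ioc_mem_nhdsGT hρ0
  obtain ⟨r, hr, hrl⟩ := (hmem.and hlog).exists
  have h1 := hmono hr ⟨hρ0, le_rfl⟩ hr.2
  simp only at h1
  have h2 := step1 r ⟨hr.1, hr.2.trans hρr⟩
  have h3 : 0 < (r * (x r - y r))⁻¹ := inv_pos.2 (mul_pos hr.1 (by linarith))
  linarith

theorem lip_cont2 (M : ℝ → ℝ → ℝ) (A L : ℝ)
    (hM : ∀ p p' u u', |M p u - M p' u'| ≤ A * |p - p'| + L * |u - u'|) :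
    Continuous (fun z : ℝ × ℝ => M z.1 z.2) := by
  rw [continuous_iff_continuousAt]
  intro z
  rw [ContinuousAt, tendsto_iff_dist_tendsto_zero]
  refine squeeze_zero (fun _ => dist_nonneg) (fun w => ?_)
    (g := fun w : ℝ × ℝ => A * |w.1 - z.1| + L * |w.2 - z.2|) ?_
  · rw [Real.dist_eq]; exact hM _ _ _ _
  · have : Continuous (fun w : ℝ × ℝ => A * |w.1 - z.1| + L * |w.2 - z.2|) := by fun_prop
    have := this.tendsto z
    simpa using this

/-- Global solvability of the singular integral equation. -/
theorem singular_exists (M : ℝ → ℝ → ℝ) (k : ℕ) (L : ℝ) (hL : 0 < L)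
    (hM : ∀ p p' u u', |M p u - M p' u'| ≤ k * |p - p'| + L * |u - u'|) :
    ∃ p : ℝ → ℝ, Continuous p ∧ ∀ t, 0 ≤ t →
      p t = ∫ σ in (0:ℝ)..1, σ ^ k * M (p (σ * t)) (1 + ∫ τ in (0:ℝ)..(σ * t), p τ) := by
  have hMc := lip_cont2 M k L hM
  set C : ℝ := 2 * L with hC
  have hC0 : 0 < C := by positivity
  -- the integrand
  let I : (BoundedContinuousFunction ℝ ℝ) → ℝ → ℝ := fun q s => ∫ τ in (0:ℝ)..s, exp (C * τ) * q τ
  have hqc : ∀ q : BoundedContinuousFunction ℝ ℝ, Continuous (fun τ => exp (C * τ) * q τ) :=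
    fun q => by have := q.continuous; fun_prop
  have hIc : ∀ q, Continuous (I q) := by
    intro q
    exact intervalIntegral.continuous_primitive (fun a b => (hqc q).intervalIntegrable a b) 0
  let J : (BoundedContinuousFunction ℝ ℝ) → ℝ → ℝ → ℝ := fun q t σ =>
    σ ^ k * M (exp (C * (σ * t)) * q (σ * t)) (1 + I q (σ * t))
  have hJc : ∀ q, Continuous (fun z : ℝ × ℝ => J q z.1 z.2) := by
    intro q
    have h1 : Continuous (fun z : ℝ × ℝ => exp (C * (z.2 * z.1)) * q (z.2 * z.1)) :=
      (hqc q).comp (continuous_snd.mul continuous_fst)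
    have h2 : Continuous (fun z : ℝ × ℝ => 1 + I q (z.2 * z.1)) :=
      continuous_const.add ((hIc q).comp (continuous_snd.mul continuous_fst))
    exact (continuous_snd.pow k).mul (hMc.comp (h1.prodMk h2))
  let Ψ : (BoundedContinuousFunction ℝ ℝ) → ℝ → ℝ := fun q t =>
    exp (-(C * (max t 0))) * ∫ σ in (0:ℝ)..1, J q (max t 0) σ
  have hΨc : ∀ q, Continuous (Ψ q) := by
    intro q
    have h1 : Continuous (fun t => ∫ σ in (0:ℝ)..1, J q t σ) :=
      intervalIntegral.continuous_parametric_intervalIntegral_of_continuous' (hJc q) 0 1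
    have hm : Continuous (fun t : ℝ => max t 0) := by fun_prop
    exact (by fun_prop : Continuous (fun t : ℝ => exp (-(C * (max t 0))))).mul (h1.comp hm)
  have hIdiff : ∀ q q' s, 0 ≤ s → |I q s - I q' s| ≤ exp (C * s) * (dist q q' / C) := by
    intro q q' s hs
    have h1 : I q s - I q' s = ∫ τ in (0:ℝ)..s, exp (C * τ) * (q τ - q' τ) := by
      simp only [I]
      rw [← intervalIntegral.integral_sub ((hqc q).intervalIntegrable _ _)
        ((hqc q').intervalIntegrable _ _)]
      congr 1; ext τ; ring
    have h2 : ∫ τ in (0:ℝ)..s, exp (C * τ) * dist q q' = (exp (C * s) - 1) / C * dist q q' := by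
      rw [intervalIntegral.integral_mul_const, intervalIntegral.integral_comp_mul_left (fun x => exp x) hC0.ne', integral_exp, smul_eq_mul, mul_zero, exp_zero]; ring
    have h3 : |∫ τ in (0:ℝ)..s, exp (C * τ) * (q τ - q' τ)|
        ≤ ∫ τ in (0:ℝ)..s, exp (C * τ) * dist q q' := by
      rw [← Real.norm_eq_abs]
      apply intervalIntegral.norm_integral_le_of_norm_le hs
      · filter_upwards with τ hτ
        rw [norm_mul, Real.norm_eq_abs, abs_of_pos (exp_pos _), ← dist_eq_norm]
        exact mul_le_mul_of_nonneg_left (BoundedContinuousFunction.dist_coe_le_dist τ) (exp_pos _).le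
      · exact (by fun_prop : Continuous fun τ => exp (C * τ) * dist q q').intervalIntegrable _ _
    rw [h1]
    refine h3.trans ?_
    rw [h2]
    have : 0 ≤ dist q q' / C := by positivity
    have h5 : (exp (C * s) - 1) / C * dist q q' = (exp (C * s) - 1) * (dist q q' / C) := by ring
    rw [h5]
    nlinarith
  have hpow : ∫ σ in (0:ℝ)..1, σ ^ k = 1 / (k + 1) := by
    rw [integral_pow]; simp
  have hk1 : (0:ℝ) < k + 1 := by positivity
  -- pointwise contraction
  have hcontr : ∀ q q' t, |Ψ q t - Ψ q' t| ≤ (k + 1 / 2) / (k + 1) * dist q q' := by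
    intro q q' t
    set s := max t 0
    have hs : 0 ≤ s := le_max_right _ _
    have h1 : Ψ q t - Ψ q' t = exp (-(C * s)) * ∫ σ in (0:ℝ)..1, (J q s σ - J q' s σ) := by
      rw [intervalIntegral.integral_sub]
      · simp only [Ψ]; ring
      · exact ((hJc q).comp (continuous_const.prodMk continuous_id)).intervalIntegrable _ _
      · exact ((hJc q').comp (continuous_const.prodMk continuous_id)).intervalIntegrable _ _
    have h2 : |∫ σ in (0:ℝ)..1, (J q s σ - J q' s σ)| ≤
        ∫ σ in (0:ℝ)..1, σ ^ k * (exp (C * s) * ((k + 1 / 2) * dist q q')) := by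
      rw [← Real.norm_eq_abs]
      apply intervalIntegral.norm_integral_le_of_norm_le zero_le_one
      · filter_upwards with σ hσ
        have h3 : J q s σ - J q' s σ = σ ^ k * (M (exp (C * (σ * s)) * q (σ * s)) (1 + I q (σ * s))
          - M (exp (C * (σ * s)) * q' (σ * s)) (1 + I q' (σ * s))) := by simp only [J]; ring
        rw [h3, Real.norm_eq_abs, abs_mul, abs_of_nonneg (pow_nonneg hσ.1.le k)]
        apply mul_le_mul_of_nonneg_left _ (pow_nonneg hσ.1.le k)
        refine (hM _ _ _ _).trans ?_
        have hσs : 0 ≤ σ * s := mul_nonneg hσ.1.le hs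
        have h4 : |exp (C * (σ * s)) * q (σ * s) - exp (C * (σ * s)) * q' (σ * s)|
            ≤ exp (C * (σ * s)) * dist q q' := by
          rw [← mul_sub, abs_mul, abs_of_pos (exp_pos _), ← Real.dist_eq]
          exact mul_le_mul_of_nonneg_left (BoundedContinuousFunction.dist_coe_le_dist _) (exp_pos _).le
        have h5 : |1 + I q (σ * s) - (1 + I q' (σ * s))| ≤ exp (C * (σ * s)) * (dist q q' / C) := by
          rw [add_sub_add_left_eq_sub]; exact hIdiff q q' _ hσs
        have h6 : exp (C * (σ * s)) ≤ exp (C * s) := by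
          apply exp_le_exp.2
          apply mul_le_mul_of_nonneg_left _ hC0.le
          nlinarith [hσ.2]
        have h7 : k * (exp (C * (σ * s)) * dist q q') + L * (exp (C * (σ * s)) * (dist q q' / C))
            = exp (C * (σ * s)) * ((k + 1 / 2) * dist q q') := by
          rw [hC]; field_simp
        calc _ ≤ k * (exp (C * (σ * s)) * dist q q') + L * (exp (C * (σ * s)) * (dist q q' / C)) := by
              gcongr
          _ = _ := h7
          _ ≤ _ := by gcongr
      · exact (by fun_prop : Continuous fun σ : ℝ => σ ^ k *
          (exp (C * s) * ((k + 1 / 2) * dist q q'))).intervalIntegrable _ _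
    rw [intervalIntegral.integral_mul_const, hpow] at h2
    rw [h1, abs_mul, abs_of_pos (exp_pos _)]
    calc _ ≤ exp (-(C * s)) * (1 / (k + 1) * (exp (C * s) * ((k + 1 / 2) * dist q q'))) := by gcongr
      _ = (exp (-(C * s)) * exp (C * s)) * ((k + 1 / 2) / (k + 1) * dist q q') := by
          ring
      _ = _ := by rw [← exp_add]; simp
  -- boundedness at zero
  have hzero : ∀ t, |Ψ 0 t| ≤ |M 0 1| := by
    intro t
    have h1 : Ψ 0 t = exp (-(C * max t 0)) * (1 / (k + 1) * M 0 1) := by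
      simp only [Ψ, J, I]
      simp only [BoundedContinuousFunction.coe_zero, Pi.zero_apply, mul_zero,
        intervalIntegral.integral_zero, add_zero]
      rw [intervalIntegral.integral_mul_const, hpow]
    rw [h1, abs_mul, abs_mul, abs_of_pos (exp_pos _), abs_of_pos (by positivity : (0:ℝ) < 1 / (k+1))]
    have h2 : exp (-(C * max t 0)) ≤ 1 := by
      rw [exp_le_one_iff]
      have : 0 ≤ C * max t 0 := mul_nonneg hC0.le (le_max_right _ _)
      linarith
    have h3 : (1:ℝ) / (k + 1) ≤ 1 := by
      rw [div_le_one hk1]; have : (0:ℝ) ≤ k := Nat.cast_nonneg k; linarith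
    calc _ ≤ 1 * (1 * |M 0 1|) := by gcongr
      _ = _ := by ring
  have hbd : ∀ q t, ‖Ψ q t‖ ≤ |M 0 1| + (k + 1 / 2) / (k + 1) * dist q 0 := by
    intro q t
    rw [Real.norm_eq_abs]
    have h1 := hcontr q 0 t
    have h2 := hzero t
    have h3 := abs_sub_abs_le_abs_sub (Ψ q t) (Ψ 0 t)
    linarith
  let Φ : (BoundedContinuousFunction ℝ ℝ) → (BoundedContinuousFunction ℝ ℝ) := fun q =>
    BoundedContinuousFunction.ofNormedAddCommGroup (Ψ q) (hΨc q) _ (hbd q)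
  have hK0 : (0:ℝ) ≤ (k + 1 / 2) / (k + 1) := by positivity
  have hlip : ContractingWith (Real.toNNReal ((k + 1 / 2) / (k + 1))) Φ := by
    constructor
    · rw [← NNReal.coe_lt_coe, Real.coe_toNNReal _ hK0, NNReal.coe_one, div_lt_one hk1]
      linarith
    · apply LipschitzWith.of_dist_le_mul
      intro q q'
      rw [Real.coe_toNNReal _ hK0, BoundedContinuousFunction.dist_le (by positivity)]
      intro t
      rw [Real.dist_eq]
      exact hcontr q q' t
  obtain ⟨q, hq⟩ : ∃ q, Φ q = q := ⟨_, hlip.fixedPoint_isFixedPt⟩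
  refine ⟨fun t => exp (C * t) * q t, hqc q, ?_⟩
  intro t ht
  have h1 : q t = Ψ q t := by
    conv_lhs => rw [← hq]
    rfl
  simp only
  rw [h1]
  simp only [Ψ, max_eq_left ht]
  rw [← mul_assoc, ← exp_add]
  simp [J, I]

/-- Data of the singular ODE solution. -/
theorem singular_solution (M : ℝ → ℝ → ℝ) (k : ℕ) (L c : ℝ) (hL : 0 < L) (hc : 0 < c)
    (hM : ∀ p p' u u', |M p u - M p' u'| ≤ k * |p - p'| + L * |u - u'|)
    (hmono : ∀ p p' u, p ≤ p' → M p u ≤ M p' u)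
    (hM0 : ∀ u, 0 ≤ u → M 0 u ≤ - c * u) :
    ∃ (p U : ℝ → ℝ) (T : ℝ), Continuous p ∧ (∀ t, HasDerivAt U (p t) t) ∧
      (∀ t, 0 < t → HasDerivAt p ((M (p t) (U t) - (k + 1) * p t) / t) t) ∧
      U 0 = 1 ∧ 0 < T ∧ U T = 0 ∧ (∀ t ∈ Ico 0 T, 0 < U t) ∧ (∀ t ∈ Icc 0 T, p t < 0) := by
  have hMc := lip_cont2 M k L hM
  obtain ⟨p, hp, hpe⟩ := singular_exists M k L hL hM
  obtain ⟨U, hU⟩ : ∃ U : ℝ → ℝ, U = fun t => 1 + ∫ τ in (0:ℝ)..t, p τ := ⟨_, rfl⟩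
  have hUd : ∀ t, HasDerivAt U (p t) t := by
    intro t
    rw [hU]
    exact (intervalIntegral.integral_hasDerivAt_right (hp.intervalIntegrable _ _)
      (hp.stronglyMeasurableAtFilter _ _) hp.continuousAt).const_add 1
  have hUc : Continuous U := continuous_iff_continuousAt.2 fun t => (hUd t).continuousAt
  have hU0 : U 0 = 1 := by rw [hU]; simp
  have hpe' : ∀ t, 0 ≤ t → p t = ∫ σ in (0:ℝ)..1, σ ^ k * M (p (σ * t)) (U (σ * t)) := by
    intro t ht
    rw [hpe t ht, hU]
  have hgc : Continuous (fun τ => τ ^ k * M (p τ) (U τ)) :=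
    (continuous_id.pow k).mul (hMc.comp (hp.prodMk hUc))
  have hk1 : (0:ℝ) < k + 1 := by positivity
  have hpd : ∀ t, 0 < t → HasDerivAt p ((M (p t) (U t) - (k + 1) * p t) / t) t := by
    intro t ht
    have hrep : ∀ s, 0 < s → p s = (s ^ (k + 1))⁻¹ * ∫ τ in (0:ℝ)..s, τ ^ k * M (p τ) (U τ) := by
      intro s hs
      have h1 := intervalIntegral.integral_comp_mul_right
        (fun τ => τ ^ k * M (p τ) (U τ)) hs.ne' (a := 0) (b := 1)
      simp only [zero_mul, one_mul, smul_eq_mul] at h1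
      have h2 : ∫ σ in (0:ℝ)..1, (σ * s) ^ k * M (p (σ * s)) (U (σ * s))
          = s ^ k * p s := by
        rw [hpe' s hs.le, ← intervalIntegral.integral_const_mul]
        congr 1; ext σ; rw [mul_pow]; ring
      rw [h2] at h1
      have h3 : ∫ τ in (0:ℝ)..s, τ ^ k * M (p τ) (U τ) = s * (s ^ k * p s) := by
        rw [h1]; field_simp
      rw [h3, pow_succ]; field_simp
    have h1 : HasDerivAt (fun s => ∫ τ in (0:ℝ)..s, τ ^ k * M (p τ) (U τ))
        (t ^ k * M (p t) (U t)) t :=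
      intervalIntegral.integral_hasDerivAt_right (hgc.intervalIntegrable _ _)
        (hgc.stronglyMeasurableAtFilter _ _) hgc.continuousAt
    have h2 : HasDerivAt (fun s : ℝ => (s ^ (k + 1))⁻¹)
        (-(((k + 1 : ℕ) : ℝ) * t ^ k) / (t ^ (k + 1)) ^ 2) t := by
      have := (hasDerivAt_pow (k + 1) t).inv (by positivity)
      exact this.congr_deriv (by simp)
    have h3 := h2.mul h1
    have h4 := hrep t ht
    have h5 : HasDerivAt p _ t := h3.congr_of_eventuallyEq (by
      filter_upwards [lt_mem_nhds ht] with s hs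
      rw [hrep s hs]; rfl)
    convert h5 using 1
    have h6 : ∫ τ in (0:ℝ)..t, τ ^ k * M (p τ) (U τ) = t ^ (k + 1) * p t := by
      rw [h4]; field_simp
    rw [h6]
    push_cast
    field_simp
    ring
  have hneg : ∀ T, 0 < T → (∀ t ∈ Ico 0 T, 0 < U t) → ∀ t ∈ Icc 0 T, p t < 0 := by
    intro T hT hpos t ht
    by_contra hcon
    push Not at hcon
    obtain ⟨t1, ht1, hmax⟩ := isCompact_Icc.exists_isMaxOn (nonempty_Icc.2 hT.le) hp.continuousOn
    have hm : 0 ≤ p t1 := hcon.trans (hmax ht)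
    have hc1 : Continuous (fun σ => σ ^ k * (k * p t1) - σ ^ k * M (p (σ * t1)) (U (σ * t1))) := by
      have h1 : Continuous (fun σ : ℝ => p (σ * t1)) := hp.comp (by fun_prop)
      have h2 : Continuous (fun σ : ℝ => U (σ * t1)) := hUc.comp (by fun_prop)
      exact ((continuous_id.pow k).mul continuous_const).sub
        ((continuous_id.pow k).mul (hMc.comp (h1.prodMk h2)))
    have hc2 : Continuous (fun σ => σ ^ k * M (p (σ * t1)) (U (σ * t1))) := by
      have h1 : Continuous (fun σ : ℝ => p (σ * t1)) := hp.comp (by fun_prop)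
      have h2 : Continuous (fun σ : ℝ => U (σ * t1)) := hUc.comp (by fun_prop)
      exact ((continuous_id.pow k).mul (hMc.comp (h1.prodMk h2)))
    have hpos_int : 0 < ∫ σ in (0:ℝ)..1,
        (σ ^ k * (k * p t1) - σ ^ k * M (p (σ * t1)) (U (σ * t1))) := by
      apply intervalIntegral.intervalIntegral_pos_of_pos_on (hc1.intervalIntegrable _ _) _ zero_lt_one
      intro σ hσ
      have hs0 : 0 ≤ σ * t1 := mul_nonneg hσ.1.le ht1.1
      have hs1 : σ * t1 < T := by nlinarith [hσ.1, hσ.2, ht1.1, ht1.2]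
      have hu := hpos _ ⟨hs0, hs1⟩
      have h1 := hmono (p (σ * t1)) (p t1) (U (σ * t1)) (hmax ⟨hs0, hs1.le⟩)
      have h2 := (abs_le.1 (hM (p t1) 0 (U (σ * t1)) (U (σ * t1)))).2
      simp only [sub_zero, sub_self, abs_zero, mul_zero, add_zero, abs_of_nonneg hm] at h2
      have h3 := hM0 _ hu.le
      have h4 : 0 < c * U (σ * t1) := mul_pos hc hu
      rw [← mul_sub]
      apply mul_pos (pow_pos hσ.1 k)
      linarith
    rw [intervalIntegral.integral_sub, ← hpe' t1 ht1.1, intervalIntegral.integral_mul_const,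
      integral_pow] at hpos_int
    · simp only [one_pow, ne_eq, Nat.add_eq_zero_iff, one_ne_zero, and_false, not_false_eq_true,
        zero_pow, sub_zero] at hpos_int
      have h5 : 1 / ((k:ℝ) + 1) * (k * p t1) ≤ p t1 := by
        have : 1 / ((k:ℝ) + 1) * (k * p t1) = (k * p t1) / (k + 1) := by ring
        rw [this, div_le_iff₀ hk1]
        nlinarith
      linarith
    · exact (by fun_prop : Continuous fun σ : ℝ => σ ^ k * (k * p t1)).intervalIntegrable _ _
    · exact hc2.intervalIntegrable _ _
  have hex : ∃ t, 0 ≤ t ∧ U t ≤ 0 := by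
    by_contra hcon
    push Not at hcon
    have hpn : ∀ t, 0 ≤ t → p t < 0 := by
      intro t ht
      exact hneg (t + 1) (by linarith) (fun s hs => hcon s hs.1) t ⟨ht, by linarith⟩
    obtain ⟨t0, ht0⟩ : ∃ t0 : ℝ, t0 = (k + 1) ^ 2 / (2 * c) := ⟨_, rfl⟩
    have ht0p : 0 < t0 := by rw [ht0]; positivity
    have hQd : ∀ t, t0 ≤ t → HasDerivAt (fun t => U t / (-p t) + t / 2)
        ((p t * (-p t) - U t * (-((M (p t) (U t) - (k + 1) * p t) / t))) / (-p t) ^ 2 + 1 / 2) t := by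
      intro t ht
      have h1 := hpn t (by linarith)
      exact ((hUd t).div (hpd t (by linarith)).neg (neg_pos.2 h1).ne').add ((hasDerivAt_id t).div_const 2)
    have hanti : AntitoneOn (fun t => U t / (-p t) + t / 2) (Ici t0) := by
      apply antitoneOn_of_deriv_nonpos (convex_Ici _)
      · exact fun t ht => (hQd t ht).continuousAt.continuousWithinAt
      · intro t ht
        rw [interior_Ici] at ht
        exact (hQd t (le_of_lt ht)).differentiableAt.differentiableWithinAt
      · intro t ht
        rw [interior_Ici] at ht
        have ht' : t0 < t := ht
        have htp : 0 < t := ht0p.trans ht'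
        rw [(hQd t ht'.le).deriv]
        have h1 := hpn t htp.le
        have h2 := hcon t htp.le
        have h3 := hmono (p t) 0 (U t) h1.le
        have h4 := hM0 (U t) h2.le
        have h5 : (p t * (-p t) - U t * (-((M (p t) (U t) - (k + 1) * p t) / t))) / (-p t) ^ 2 + 1 / 2
          = (U t * (M (p t) (U t) - (k + 1) * p t) - t * (p t) ^ 2 / 2) / (t * p t ^ 2) := by
          have := h1.ne
          field_simp
          ring
        rw [h5]
        apply div_nonpos_of_nonpos_of_nonneg _ (by positivity)
        have h6 : U t * (M (p t) (U t) - (k + 1) * p t) ≤ U t * (-c * U t - (k + 1) * p t) := by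
          apply mul_le_mul_of_nonneg_left _ h2.le
          linarith
        have h7 : (k + 1) ^ 2 ≤ 2 * c * t := by
          have := ht'.le
          rw [ht0, div_le_iff₀ (by positivity)] at this
          linarith
        have h8 : (k + 1) ^ 2 * p t ^ 2 ≤ 2 * c * t * p t ^ 2 :=
          mul_le_mul_of_nonneg_right h7 (sq_nonneg _)
        have h9 : 0 ≤ (2 * c * U t + (k + 1) * p t) ^ 2 := sq_nonneg _
        have h10 : 0 ≤ (4 * c) * (t * p t ^ 2 / 2 - U t * (-c * U t - (k + 1) * p t)) := by
          nlinarith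
        have h11 : 0 ≤ t * p t ^ 2 / 2 - U t * (-c * U t - (k + 1) * p t) :=
          nonneg_of_mul_nonneg_right h10 (by positivity)
        linarith
    have hQ0 : 0 < U t0 / (-p t0) := div_pos (hcon _ ht0p.le) (by linarith [hpn t0 ht0p.le])
    obtain ⟨t1, ht1⟩ : ∃ t1, t1 = t0 + 2 * (U t0 / (-p t0)) := ⟨_, rfl⟩
    have h1 := hanti (mem_Ici.2 le_rfl) (mem_Ici.2 (by linarith : t0 ≤ t1)) (by linarith)
    simp only at h1
    have ht1p : 0 ≤ t1 := by linarith
    have h2 : 0 < U t1 / (-p t1) := div_pos (hcon _ ht1p) (by linarith [hpn t1 ht1p])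
    linarith
  obtain ⟨t2, ht2, hUt2⟩ := hex
  have hcomp : IsCompact {s ∈ Icc 0 t2 | U s ≤ 0} := by
    apply IsCompact.of_isClosed_subset isCompact_Icc _ (fun s hs => hs.1)
    exact isClosed_Icc.isClosed_le hUc.continuousOn continuousOn_const
  obtain ⟨T, hT, hTmin⟩ := hcomp.exists_isLeast ⟨t2, ⟨ht2, le_rfl⟩, hUt2⟩
  have hTpos : 0 < T := by
    rcases hT.1.1.eq_or_lt with h | h
    · have := hT.2
      rw [← h, hU0] at this
      linarith
    · exact h
  have hUpos : ∀ t ∈ Ico 0 T, 0 < U t := by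
    intro t ht
    by_contra hcon
    push Not at hcon
    exact absurd (hTmin ⟨⟨ht.1, ht.2.le.trans hT.1.2⟩, hcon⟩) (not_le.2 ht.2)
  have hUT : U T = 0 := by
    apply le_antisymm hT.2
    have h1 : closure (Ico 0 T) = Icc 0 T := closure_Ico hTpos.ne
    have h2 : T ∈ closure (Ico 0 T) := by rw [h1]; exact ⟨hTpos.le, le_rfl⟩
    exact ContinuousWithinAt.closure_le h2 continuousWithinAt_const
      hUc.continuousAt.continuousWithinAt (fun t ht => (hUpos t ht).le)
  exact ⟨p, U, T, hp, hUd, hpd, hU0, hTpos, hUT, hUpos, hneg T hTpos hUpos⟩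

theorem contDiffOn_two_of (w w1 w2 : ℝ → ℝ) (s : Set ℝ) (hs : IsOpen s)
    (h1 : ∀ r ∈ s, HasDerivAt w (w1 r) r) (h2 : ∀ r ∈ s, HasDerivAt w1 (w2 r) r)
    (h3 : ContinuousOn w2 s) : ContDiffOn ℝ 2 w s := by
  have e : (2 : WithTop ℕ∞) = 1 + 1 := by norm_num
  have e1 : (1 : WithTop ℕ∞) = 0 + 1 := by norm_num
  have hw1 : ContDiffOn ℝ 1 w1 s := by
    rw [e1, contDiffOn_succ_iff_deriv_of_isOpen hs]
    refine ⟨fun r hr => (h2 r hr).differentiableAt.differentiableWithinAt, by simp, ?_⟩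
    rw [contDiffOn_zero]
    exact h3.congr fun r hr => (h2 r hr).deriv
  rw [e, contDiffOn_succ_iff_deriv_of_isOpen hs]
  refine ⟨fun r hr => (h1 r hr).differentiableAt.differentiableWithinAt, by simp, ?_⟩
  exact hw1.congr fun r hr => (h1 r hr).deriv

theorem core (f : ℝ → ℝ → ℝ) (lam Lam n : ℝ) (h : EllF f lam Lam n)
    (hl1 : 1 < lam / Lam * n) (γ : ℝ) (hγ0 : 0 < γ) (hγ2 : γ < 2) :
    ∃ (T : ℝ) (u : ℝ → ℝ), 0 < T ∧ 
      (∀ μ, T < μ → ¬ ∃ v : ℝ → ℝ, ContDiffOn ℝ 2 v (Ioo 0 1) ∧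
        (∀ r ∈ Ioo (0:ℝ) 1, 0 < v r) ∧
        (∀ r ∈ Ioo (0:ℝ) 1, f (deriv (deriv v) r) (deriv v r / r) + μ * v r * r ^ (-γ) ≤ 0)) ∧
      ContinuousOn u (Icc 0 1) ∧ ContDiffOn ℝ 2 u (Ioo 0 1) ∧
      (∀ r ∈ Ico (0:ℝ) 1, 0 < u r) ∧ u 1 = 0 ∧
      (∀ r ∈ Ioo (0:ℝ) 1,
        f (deriv (deriv u) r) (deriv u r / r) + T * u r * r ^ (-γ) = 0) ∧
      (γ ≤ 1 → ∃ K : ℝ, ∀ x ∈ Icc (0:ℝ) 1, ∀ y ∈ Icc (0:ℝ) 1,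
        |u x - u y| ≤ K * |x - y|) ∧
      (γ < 1 → ContDiffOn ℝ 1 u (Ico 0 1)) ∧
      (1 < γ → ∃ C : ℝ, ∀ x ∈ Icc (0:ℝ) 1, ∀ y ∈ Icc (0:ℝ) 1,
        |u x - u y| ≤ C * |x - y| ^ (2 - γ)) := by
  obtain ⟨β, hβe⟩ : ∃ β, β = 2 - γ := ⟨_, rfl⟩
  have hβ : 0 < β := by linarith
  obtain ⟨k, L, c, M, hL, hc, hM, hmono, hM0, hfM⟩ := h.exM hl1 β hβ
  obtain ⟨p, U, T, hp, hUd, hpd, hU0, hT, hUT, hUpos, hpneg⟩ :=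
    singular_solution M k L c hL hc hM hmono hM0
  have hMc := lip_cont2 M k L hM
  have hUc : Continuous U := continuous_iff_continuousAt.2 fun t => (hUd t).continuousAt
  -- derivatives of the rescaled solutions
  have hw1 : ∀ μ r, 0 < μ → 0 < r →
      HasDerivAt (fun r => U (μ * r ^ β)) (p (μ * r ^ β) * (μ * (β * r ^ (β - 1)))) r := by
    intro μ r hμ hr
    have h1 : HasDerivAt (fun r : ℝ => μ * r ^ β) (μ * (β * r ^ (β - 1))) r :=
      (Real.hasDerivAt_rpow_const (Or.inl hr.ne')).const_mul μ
    exact HasDerivAt.comp r (hUd _) h1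
  have hw2 : ∀ μ r, 0 < μ → 0 < r →
      HasDerivAt (fun r => p (μ * r ^ β) * (μ * (β * r ^ (β - 1))))
        ((μ * r ^ (-γ)) * (β * ((β - 1) * p (μ * r ^ β)
          + β * (M (p (μ * r ^ β)) (U (μ * r ^ β)) - (k + 1) * p (μ * r ^ β))))) r := by
    intro μ r hμ hr
    have h1 : HasDerivAt (fun r : ℝ => μ * r ^ β) (μ * (β * r ^ (β - 1))) r :=
      (Real.hasDerivAt_rpow_const (Or.inl hr.ne')).const_mul μ
    have h2 : HasDerivAt (fun r : ℝ => μ * (β * r ^ (β - 1))) (μ * (β * ((β - 1) * r ^ (β - 1 - 1)))) r :=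
      ((Real.hasDerivAt_rpow_const (Or.inl hr.ne')).const_mul β).const_mul μ
    have hrb : 0 < r ^ β := Real.rpow_pos_of_pos hr _
    have h3 := ((hpd (μ * r ^ β) (mul_pos hμ hrb)).comp r h1).mul h2
    refine h3.congr_deriv ?_
    have e1 : β - 1 - 1 = -γ := by rw [hβe]; ring
    have e2 : r ^ (β - 1) * r ^ (β - 1) = r ^ β * r ^ (-γ) := by
      rw [← Real.rpow_add hr, ← Real.rpow_add hr]; congr 1; rw [hβe]; ring
    rw [e1]
    simp only [Function.comp]
    generalize r ^ (β - 1) = A at *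
    generalize r ^ β = B at *
    generalize r ^ (-γ) = C at *
    generalize M (p (μ * B)) (U (μ * B)) = m
    generalize p (μ * B) = q
    have e3 : (m - (k + 1) * q) / (μ * B) * (μ * (β * A)) * (μ * (β * A))
      = (m - (k + 1) * q) * μ * β ^ 2 * (A * A) / B := by field_simp
    rw [e3, e2]
    field_simp
    ring
  have hfw : ∀ μ r, 0 < μ → 0 < r →
      f ((μ * r ^ (-γ)) * (β * ((β - 1) * p (μ * r ^ β)
          + β * (M (p (μ * r ^ β)) (U (μ * r ^ β)) - (k + 1) * p (μ * r ^ β)))))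
        (p (μ * r ^ β) * (μ * (β * r ^ (β - 1))) / r) = - (μ * U (μ * r ^ β) * r ^ (-γ)) := by
    intro μ r hμ hr
    have e1 : r ^ (β - 1) / r = r ^ (-γ) := by
      rw [← Real.rpow_sub_one hr.ne']; congr 1; rw [hβe]; ring
    have e2 : p (μ * r ^ β) * (μ * (β * r ^ (β - 1))) / r
        = (μ * r ^ (-γ)) * (β * p (μ * r ^ β)) := by
      rw [← e1]; ring
    rw [e2, h.homog _ _ _ (mul_pos hμ (Real.rpow_pos_of_pos hr _)), hfM]
    ring
  obtain ⟨B0, hB0⟩ := isCompact_Icc.exists_bound_of_continuousOn (hp.continuousOn (s := Icc 0 T))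
  obtain ⟨B, hBe⟩ : ∃ B, B = max B0 0 := ⟨_, rfl⟩
  have hB : 0 ≤ B := by rw [hBe]; exact le_max_right _ _
  have hLip : ∀ x ∈ Icc (0:ℝ) 1, ∀ y ∈ Icc (0:ℝ) 1,
      |U (T * x ^ β) - U (T * y ^ β)| ≤ B * (T * |x ^ β - y ^ β|) := by
    have hmem : ∀ x ∈ Icc (0:ℝ) 1, T * x ^ β ∈ Icc 0 T := by
      intro x hx
      have h1 := Real.rpow_le_one hx.1 hx.2 hβ.le
      exact ⟨mul_nonneg hT.le (Real.rpow_nonneg hx.1 _), by nlinarith⟩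
    intro x hx y hy
    have := (convex_Icc (0:ℝ) T).norm_image_sub_le_of_norm_hasDerivWithin_le
        (f := U) (f' := p) (C := B)
        (fun r _ => (hUd r).hasDerivWithinAt)
        (fun r hr => (hB0 r hr).trans (by rw [hBe]; exact le_max_left _ _)) (hmem y hy) (hmem x hx)
    rw [Real.norm_eq_abs, Real.norm_eq_abs, ← mul_sub, abs_mul, abs_of_pos hT] at this
    exact this
  refine ⟨T, fun r => U (T * r ^ β), hT, ?_, ?_, ?_, ?_, ?_, ?_, ?_, ?_, ?_⟩
  · -- maximality
    rintro μ hμ ⟨v, hvC, hvpos, hv⟩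
    have hμ0 : 0 < μ := hT.trans hμ
    obtain ⟨R, hR⟩ : ∃ R : ℝ, R = (T / μ) ^ (1 / β) := ⟨_, rfl⟩
    have hR0 : 0 < R := by rw [hR]; positivity
    have hR1 : R < 1 := by
      rw [hR]
      exact Real.rpow_lt_one (by positivity) ((div_lt_one hμ0).2 hμ) (by positivity)
    have hRb : μ * R ^ β = T := by
      rw [hR, ← Real.rpow_mul (by positivity), one_div, inv_mul_cancel₀ hβ.ne', Real.rpow_one]
      field_simp
    have hlt : ∀ r ∈ Ioo 0 R, μ * r ^ β ∈ Ico 0 T := by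
      intro r hr
      have := Real.rpow_lt_rpow hr.1.le hr.2 hβ
      refine ⟨mul_nonneg hμ0.le (Real.rpow_nonneg hr.1.le _), ?_⟩
      rw [← hRb]
      exact mul_lt_mul_of_pos_left this hμ0
    have hv1 : ∀ r ∈ Ioo (0:ℝ) 1, HasDerivAt v (deriv v r) r := fun r hr =>
      ((hvC.differentiableOn (by norm_num)).differentiableAt (isOpen_Ioo.mem_nhds hr)).hasDerivAt
    have hvC1 : ContDiffOn ℝ 1 (deriv v) (Ioo 0 1) :=
      hvC.deriv_of_isOpen isOpen_Ioo (by norm_num)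
    have hv2 : ∀ r ∈ Ioo (0:ℝ) 1, HasDerivAt (deriv v) (deriv (deriv v) r) r := fun r hr =>
      ((hvC1.differentiableOn (by norm_num)).differentiableAt (isOpen_Ioo.mem_nhds hr)).hasDerivAt
    obtain ⟨w, hw⟩ : ∃ w : ℝ → ℝ, w = fun r => U (μ * r ^ β) := ⟨_, rfl⟩
    obtain ⟨w1, hw1e⟩ : ∃ w1 : ℝ → ℝ, w1 = fun r => p (μ * r ^ β) * (μ * (β * r ^ (β - 1))) :=
      ⟨_, rfl⟩
    obtain ⟨w2, hw2e⟩ : ∃ w2 : ℝ → ℝ, w2 = fun r => (μ * r ^ (-γ)) * (β * ((β - 1) * p (μ * r ^ β)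
          + β * (M (p (μ * r ^ β)) (U (μ * r ^ β)) - (k + 1) * p (μ * r ^ β)))) := ⟨_, rfl⟩
    have hwd : ∀ r, 0 < r → HasDerivAt w (w1 r) r := by
      intro r hr; rw [hw, hw1e]; exact hw1 μ r hμ0 hr
    have hwd1 : ∀ r, 0 < r → HasDerivAt w1 (w2 r) r := by
      intro r hr; rw [hw1e, hw2e]; exact hw2 μ r hμ0 hr
    have hwf : ∀ r, 0 < r → f (w2 r) (w1 r / r) = - (μ * w r * r ^ (-γ)) := by
      intro r hr; rw [hw, hw1e, hw2e]; exact hfw μ r hμ0 hr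
    have hwpos : ∀ r ∈ Ioo 0 R, 0 < w r := by
      intro r hr; rw [hw]; exact hUpos _ (hlt r hr)
    have hsub : ∀ r ∈ Ioo 0 R, r ∈ Ioo (0:ℝ) 1 := fun r hr => ⟨hr.1, hr.2.trans hR1⟩
    have key := riccati_cmp (fun r => deriv v r / v r) (fun r => w1 r / w r)
      (fun r => (deriv (deriv v) r * v r - deriv v r * deriv v r) / v r ^ 2)
      (fun r => (w2 r * w r - w1 r * w1 r) / w r ^ 2) R (lam / Lam * n)
      (fun r hr => (hv2 r (hsub r hr)).div (hv1 r (hsub r hr)) (hvpos r (hsub r hr)).ne')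
      (fun r hr => (hwd1 r hr.1).div (hwd r hr.1) (hwpos r hr).ne')
      (by linarith) ?_ ?_
    · have h1 : ∀ r ∈ Ioo 0 R, deriv v r * w r ≤ w1 r * v r := by
        intro r hr
        have := key r hr
        rwa [div_le_div_iff₀ (hvpos r (hsub r hr)) (hwpos r hr)] at this
      have hcl : R ∈ closure (Ioo 0 R) := by
        rw [closure_Ioo hR0.ne]; exact ⟨hR0.le, le_rfl⟩
      have hRm : R ∈ Ioo (0:ℝ) 1 := ⟨hR0, hR1⟩
      have h2 := ContinuousWithinAt.closure_le hcl
        (((hv2 R hRm).continuousAt.mul (hwd R hR0).continuousAt).continuousWithinAt)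
        (((hwd1 R hR0).continuousAt.mul (hv1 R hRm).continuousAt).continuousWithinAt) h1
      have h3 : w R = 0 := by rw [hw]; simp only; rw [hRb, hUT]
      have h4 : w1 R < 0 := by
        rw [hw1e]; simp only; rw [hRb]
        have := hpneg T ⟨hT.le, le_rfl⟩
        have h5 : 0 < μ * (β * R ^ (β - 1)) := by positivity
        nlinarith
      have h5 := hvpos R hRm
      have h6 : deriv v R * w R ≤ w1 R * v R := h2
      rw [h3] at h6
      nlinarith
    · intro r hr hlt'
      have hr0 := hr.1
      have hV := hvpos r (hsub r hr)
      have hW := hwpos r hr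
      have hfv : f (deriv (deriv v) r / v r) (deriv v r / v r / r) ≤ -(μ * r ^ (-γ)) := by
        have h1 := h.homog (1 / v r) (deriv (deriv v) r) (deriv v r / r) (by positivity)
        have h2 := hv r (hsub r hr)
        have e1 : 1 / v r * deriv (deriv v) r = deriv (deriv v) r / v r := by ring
        have e2 : 1 / v r * (deriv v r / r) = deriv v r / v r / r := by ring
        rw [e1, e2] at h1
        rw [h1, one_div, inv_mul_le_iff₀ hV]
        linarith
      have hfw' : f (w2 r / w r) (w1 r / w r / r) = -(μ * r ^ (-γ)) := by
        have h1 := h.homog (1 / w r) (w2 r) (w1 r / r) (by positivity)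
        have h2 := hwf r hr0
        have e1 : 1 / w r * w2 r = w2 r / w r := by ring
        have e2 : 1 / w r * (w1 r / r) = w1 r / w r / r := by ring
        rw [e1, e2] at h1
        rw [h1, h2]
        field_simp
      have h3 := h.cmp (div_le_div_of_nonneg_right hlt'.le hr0.le) (hfv.trans hfw'.ge)
      have e3 : (deriv (deriv v) r * v r - deriv v r * deriv v r) / v r ^ 2
        = deriv (deriv v) r / v r - (deriv v r / v r) ^ 2 := by field_simp
      have e4 : (w2 r * w r - w1 r * w1 r) / w r ^ 2 = w2 r / w r - (w1 r / w r) ^ 2 := by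
        field_simp
      rw [e3, e4, sub_div]
      linarith
    · have hg : ContinuousAt (fun r : ℝ => 2 * (μ * (β * r ^ β) * p (μ * r ^ β) / U (μ * r ^ β))) 0 := by
        have hrp : ContinuousAt (fun r : ℝ => r ^ β) 0 :=
          Real.continuousAt_rpow_const _ _ (Or.inr hβ.le)
        have hz : μ * (0:ℝ) ^ β = 0 := by rw [Real.zero_rpow hβ.ne', mul_zero]
        have hmr : ContinuousAt (fun r : ℝ => μ * r ^ β) 0 := continuousAt_const.mul hrp
        have hpr : ContinuousAt (fun r : ℝ => p (μ * r ^ β)) 0 :=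
          ContinuousAt.comp (g := p) hp.continuousAt hmr
        have hUr : ContinuousAt (fun r : ℝ => U (μ * r ^ β)) 0 :=
          ContinuousAt.comp (g := U) hUc.continuousAt hmr
        refine continuousAt_const.mul (((continuousAt_const.mul (continuousAt_const.mul hrp)).mul hpr).div hUr ?_)
        rw [hz, hU0]; norm_num
      have hev := hg.eventually (lt_mem_nhds (a := -(lam / Lam * n - 1)) (by
        beta_reduce; rw [Real.zero_rpow hβ.ne']; simp; linarith))
      obtain ⟨δ, hδ, hδ'⟩ := Metric.eventually_nhds_iff.1 hev
      refine ⟨δ, hδ, fun r hr => ?_⟩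
      have h1 := hδ' (y := r) (by rw [Real.dist_eq, sub_zero, abs_of_pos hr.1]; exact hr.2)
      have hr0 := hr.1
      have e : r * (w1 r / w r) = μ * (β * r ^ β) * p (μ * r ^ β) / U (μ * r ^ β) := by
        rw [hw, hw1e]
        simp only
        have : r ^ β = r ^ (β - 1) * r := by
          rw [← Real.rpow_add_one hr0.ne']; congr 1; ring
        have e5 : ∀ a b : ℝ, r * (a / b) = (r * a) / b := fun a b => by ring
        rw [e5]
        congr 1
        conv_rhs => rw [show μ * (β * r ^ β) = μ * (β * (r ^ (β - 1) * r)) by rw [this]]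
        ring
      rw [e]
      exact h1.le
  · exact (hUc.comp (continuous_const.mul (Real.continuous_rpow_const hβ.le))).continuousOn
  · refine contDiffOn_two_of _ _ _ _ isOpen_Ioo (fun r hr => hw1 T r hT hr.1)
      (fun r hr => hw2 T r hT hr.1) ?_
    have hrp : ContinuousOn (fun r : ℝ => r ^ (-γ)) (Ioo 0 1) := fun r hr =>
      (Real.continuousAt_rpow_const _ _ (Or.inl hr.1.ne')).continuousWithinAt
    have hmr : Continuous (fun r : ℝ => T * r ^ β) :=
      continuous_const.mul (Real.continuous_rpow_const hβ.le)
    have hpr := hp.comp hmr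
    have hUr := hUc.comp hmr
    have hMr := hMc.comp (hpr.prodMk hUr)
    exact (continuousOn_const.mul hrp).mul (continuous_const.mul ((continuous_const.mul hpr).add
      (continuous_const.mul (hMr.sub (continuous_const.mul hpr))))).continuousOn
  · intro r hr
    apply hUpos
    have := Real.rpow_lt_one hr.1 hr.2 hβ
    exact ⟨mul_nonneg hT.le (Real.rpow_nonneg hr.1 _), by nlinarith⟩
  · simp only [Real.one_rpow, mul_one, hUT]
  · intro r hr
    have e1 : deriv (fun r => U (T * r ^ β)) r = p (T * r ^ β) * (T * (β * r ^ (β - 1))) :=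
      (hw1 T r hT hr.1).deriv
    have e2 : deriv (fun r => U (T * r ^ β)) =ᶠ[nhds r]
        (fun r => p (T * r ^ β) * (T * (β * r ^ (β - 1)))) := by
      filter_upwards [lt_mem_nhds hr.1] with s hs
      exact (hw1 T s hT hs).deriv
    rw [e2.deriv_eq, (hw2 T r hT hr.1).deriv, e1, hfw T r hT hr.1]
    ring
  · intro hγ
    refine ⟨B * (T * β), fun x hx y hy => ?_⟩
    have hβ1 : 1 ≤ β := by linarith
    have h1 : |x ^ β - y ^ β| ≤ β * |x - y| := by
      have := (convex_Icc (0:ℝ) 1).norm_image_sub_le_of_norm_hasDerivWithin_le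
        (f := fun r : ℝ => r ^ β) (f' := fun r => β * r ^ (β - 1)) (C := β)
        (fun r _ => (Real.hasDerivAt_rpow_const (Or.inr hβ1)).hasDerivWithinAt)
        (fun r hr => by
          rw [Real.norm_eq_abs, abs_of_nonneg (mul_nonneg hβ.le (Real.rpow_nonneg hr.1 _))]
          have := Real.rpow_le_one hr.1 hr.2 (by linarith : 0 ≤ β - 1)
          nlinarith) hy hx
      simpa [Real.norm_eq_abs] using this
    calc _ ≤ B * (T * |x ^ β - y ^ β|) := hLip x hx y hy
      _ ≤ B * (T * (β * |x - y|)) := by gcongr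
      _ = _ := by ring
  · intro hγ
    have h1 : ContDiff ℝ 1 U := by
      rw [contDiff_one_iff_deriv]
      refine ⟨fun t => (hUd t).differentiableAt, ?_⟩
      have : deriv U = p := funext fun t => (hUd t).deriv
      rw [this]; exact hp
    have h2 : ContDiff ℝ 1 (fun r : ℝ => r ^ β) := by
      apply Real.contDiff_rpow_const_of_le (n := 1)
      push_cast; linarith
    exact (h1.comp (contDiff_const.mul h2)).contDiffOn
  · intro hγ
    refine ⟨B * T, fun x hx y hy => ?_⟩
    have hβ1 : β ≤ 1 := by linarith
    have h0 : ∀ x y : ℝ, 0 ≤ y → y ≤ x → |x ^ β - y ^ β| ≤ |x - y| ^ β := by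
      intro x y hy hyx
      rw [abs_of_nonneg (sub_nonneg.2 hyx),
        abs_of_nonneg (sub_nonneg.2 (Real.rpow_le_rpow hy hyx hβ.le))]
      have := Real.rpow_add_le_add_rpow hy (sub_nonneg.2 hyx) hβ.le hβ1
      rw [add_sub_cancel] at this
      linarith
    have h1 : |x ^ β - y ^ β| ≤ |x - y| ^ β := by
      rcases le_total y x with hh | hh
      · exact h0 x y hy.1 hh
      · rw [abs_sub_comm, abs_sub_comm x]; exact h0 y x hx.1 hh
    rw [← hβe]
    calc _ ≤ B * (T * |x ^ β - y ^ β|) := hLip x hx y hy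
      _ ≤ B * (T * |x - y| ^ β) := by gcongr
      _ = _ := by ring

theorem Dmat_posSemidef (N : ℕ) (a b : ℝ) (ha : 0 ≤ a) (hb : 0 ≤ b) : (Dmat N a b).PosSemidef := by
  apply Matrix.PosSemidef.diagonal
  intro i
  simp only [Pi.zero_apply]
  split_ifs <;> assumption

theorem Dmat_trace (N : ℕ) (hN : 2 ≤ N) (a b : ℝ) :
    (Dmat N a b).trace = a + ((N : ℝ) - 1) * b := by
  obtain ⟨m, rfl⟩ : ∃ m, N = m + 1 := ⟨N - 1, by omega⟩
  rw [Dmat, Matrix.trace_diagonal, Fin.sum_univ_succ]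
  simp

theorem Dmat_ellF (N : ℕ) (hN : 2 ≤ N) (lam Lam : ℝ) (hlam : 0 < lam) (hlL : lam ≤ Lam)
    (F : Matrix (Fin N) (Fin N) ℝ → ℝ)
    (hF1 : UnifElliptic N lam Lam F) (hF3 : PosHomog N F) :
    EllF (fun a b => F (Dmat N a b)) lam Lam ((N : ℝ) - 1) := by
  have hN' : (2:ℝ) ≤ N := by exact_mod_cast hN
  refine ⟨hlam, hlL, by linarith, ?_, ?_⟩
  · intro a b a' b' ha hb
    have h1 := hF1 (Dmat N a b) (Dmat N (a' - a) (b' - b))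
      (by rw [Dmat]; exact Matrix.isSymm_diagonal _)
      (Dmat_posSemidef N _ _ (by linarith) (by linarith))
    have h2 : Dmat N a b + Dmat N (a' - a) (b' - b) = Dmat N a' b' := by
      simp only [Dmat, Matrix.diagonal_add]
      congr 1; ext i; split_ifs <;> ring
    rw [h2, Dmat_trace N hN] at h1
    exact h1
  · intro t a b ht
    have h2 : Dmat N (t * a) (t * b) = t • Dmat N a b := by
      simp only [Dmat, ← Matrix.diagonal_smul]
      congr 1; ext i; simp
    rw [h2, hF3 t ht]


theorem stmt0 (N : ℕ) (hN : 2 ≤ N) (lam Lam : ℝ) (hlam : 0 < lam) (hlL : lam ≤ Lam)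
    (hNp : 2 < lam / Lam * ((N : ℝ) - 1) + 1)
    (F : Matrix (Fin N) (Fin N) ℝ → ℝ)
    (hF1 : UnifElliptic N lam Lam F) (hF2 : RotInvariant N F) (hF3 : PosHomog N F)
    (γ : ℝ) (hγ0 : 0 < γ) (hγ2 : γ < 2) :
    0 < radialEV N F γ ∧
    ∃ u : ℝ → ℝ, ContinuousOn u (Icc 0 1) ∧ ContDiffOn ℝ 2 u (Ioo 0 1) ∧
      (∀ r ∈ Ico (0:ℝ) 1, 0 < u r) ∧ u 1 = 0 ∧
      (∀ r ∈ Ioo (0:ℝ) 1,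
        F (Dmat N (deriv (deriv u) r) (deriv u r / r))
          + radialEV N F γ * u r * r ^ (-γ) = 0) ∧
      (γ ≤ 1 → ∃ K : ℝ, ∀ x ∈ Icc (0:ℝ) 1, ∀ y ∈ Icc (0:ℝ) 1,
        |u x - u y| ≤ K * |x - y|) ∧
      (γ < 1 → ContDiffOn ℝ 1 u (Ico 0 1)) ∧
      (1 < γ → ∃ C : ℝ, ∀ x ∈ Icc (0:ℝ) 1, ∀ y ∈ Icc (0:ℝ) 1,
        |u x - u y| ≤ C * |x - y| ^ (2 - γ)) := by
  have hE := Dmat_ellF N hN lam Lam hlam hlL F hF1 hF3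
  obtain ⟨T, u, hT, hmax, h1, h2, h3, h4, h5, h6, h7, h8⟩ :=
    core _ lam Lam _ hE (by linarith) γ hγ0 hγ2
  have hev : radialEV N F γ = T := by
    apply IsGreatest.csSup_eq
    constructor
    · exact ⟨u, h2, fun r hr => h3 r ⟨hr.1.le, hr.2⟩, fun r hr => (h5 r hr).le⟩
    · intro μ hμ
      by_contra hc
      push Not at hc
      exact hmax μ hc hμ
  rw [hev]
  exact ⟨hT, u, h1, h2, h3, h4, h5, h6, h7, h8⟩

end
end

section
/- The radial principal eigenvalues of the Pucci extremal operators are stable as γ tends to 2 from below: lim_{γ→2⁻} λ̄'_γ(𝓜⁺) = Λ·((Ñ₊−2)/2)² and lim_{γ→2⁻} λ̄'_γ(𝓜⁻) = λ·((Ñ₋−2)/2)². -/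
open Set Real Filter MeasureTheory

noncomputable section

/-- The radial expression of the Pucci maximal operator `𝓜⁺` applied to a radial
function `u = u(r)`. -/
def pucciP (lam Lam : ℝ) (N : ℕ) (u : ℝ → ℝ) (r : ℝ) : ℝ :=
  Lam * max (deriv (deriv u) r) 0 - lam * max (-(deriv (deriv u) r)) 0 +
  ((N : ℝ) - 1) * (Lam * max (deriv u r / r) 0 - lam * max (-(deriv u r / r)) 0)

/-- The radial expression of the Pucci minimal operator `𝓜⁻` applied to a radial
function `u = u(r)`. -/
def pucciM (lam Lam : ℝ) (N : ℕ) (u : ℝ → ℝ) (r : ℝ) : ℝ :=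
  lam * max (deriv (deriv u) r) 0 - Lam * max (-(deriv (deriv u) r)) 0 +
  ((N : ℝ) - 1) * (lam * max (deriv u r / r) 0 - Lam * max (-(deriv u r / r)) 0)

/-- The radial principal eigenvalue `λ̄'_γ` on the punctured unit ball for a radial
operator `Op`. -/
def radialEVop (Op : (ℝ → ℝ) → ℝ → ℝ) (γ : ℝ) : ℝ :=
  sSup {μ : ℝ | ∃ u : ℝ → ℝ, ContDiffOn ℝ 2 u (Ioo 0 1) ∧
    (∀ r ∈ Ioo (0:ℝ) 1, 0 < u r) ∧
    (∀ r ∈ Ioo (0:ℝ) 1, Op u r + μ * u r * r ^ (-γ) ≤ 0)}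

lemma aux_quad (A e : ℝ) (he : 0 < e) : ∃ c : ℝ, 0 < c ∧ ∀ p : ℝ,
    c * (1 + p ^ 2) ≤ (p - A) ^ 2 + e := by
  refine ⟨e / (2 * e + (2 * A ^ 2 + 1)), by positivity, fun p => ?_⟩
  have hD : 0 < 2 * e + (2 * A ^ 2 + 1) := by positivity
  rw [div_mul_eq_mul_div, div_le_iff₀ hD]
  nlinarith [mul_nonneg he.le (sq_nonneg (p - 2 * A)), sq_nonneg ((p - A) * A),
    sq_nonneg (p - A), mul_nonneg he.le (sq_nonneg A), sq_nonneg e]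

/-- The pointwise Riccati property of an operator with threshold `T`. -/
def RicProp (Op : (ℝ → ℝ) → ℝ → ℝ) (T : ℝ) : Prop :=
  ∀ m : ℝ, T < m → ∃ c : ℝ, 0 < c ∧ ∀ (u : ℝ → ℝ) (r : ℝ), 0 < r → 0 < u r →
    Op u r + m * u r / r ^ 2 ≤ 0 →
    c * (1 + (-(r * deriv u r / u r)) ^ 2) ≤
      -(r * deriv u r / u r) + (-(r * deriv u r / u r)) ^ 2 - r ^ 2 * deriv (deriv u) r / u r

lemma no_super (c : ℝ) (hc : 0 < c) (u : ℝ → ℝ) (hu : ContDiffOn ℝ 2 u (Ioo 0 1))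
    (hpos : ∀ r ∈ Ioo (0:ℝ) 1, 0 < u r)
    (h : ∀ r ∈ Ico (exp (-(π / c) - 1)) 1, c * (1 + (-(r * deriv u r / u r)) ^ 2) ≤
      -(r * deriv u r / u r) + (-(r * deriv u r / u r)) ^ 2 - r ^ 2 * deriv (deriv u) r / u r) :
    False := by
  have hd1 : ∀ r ∈ Ioo (0:ℝ) 1, HasDerivAt u (deriv u r) r := fun r hr =>
    ((hu.differentiableOn (by norm_num)).differentiableAt
      (isOpen_Ioo.mem_nhds hr)).hasDerivAt
  have hC1 : ContDiffOn ℝ 1 (deriv u) (Ioo 0 1) :=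
    hu.deriv_of_isOpen isOpen_Ioo (by norm_num)
  have hd2 : ∀ r ∈ Ioo (0:ℝ) 1, HasDerivAt (deriv u) (deriv (deriv u) r) r := fun r hr =>
    ((hC1.differentiableOn (by norm_num)).differentiableAt
      (isOpen_Ioo.mem_nhds hr)).hasDerivAt
  set a := exp (-(π / c) - 1) with ha
  set b := exp (-1) with hb
  have hpc : 0 < π / c := div_pos pi_pos hc
  have ha0 : 0 < a := exp_pos _
  have hab : a < b := exp_lt_exp.mpr (by linarith)
  have hb1 : b < 1 := by rw [hb, exp_lt_one_iff]; norm_num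
  let g : ℝ → ℝ := fun r => arctan (-(r * deriv u r / u r)) - c * log r
  have hg : ∀ r ∈ Icc a b, ∃ g', 0 ≤ g' ∧ HasDerivAt g g' r := by
    intro r hr
    have hr0 : 0 < r := lt_of_lt_of_le ha0 hr.1
    have hr1 : r < 1 := lt_of_le_of_lt hr.2 hb1
    have hu0 := hpos r ⟨hr0, hr1⟩
    have hp := ((((hasDerivAt_id r).mul (hd2 r ⟨hr0, hr1⟩)).div (hd1 r ⟨hr0, hr1⟩) hu0.ne').neg).arctan
    have hl := (hasDerivAt_log hr0.ne').const_mul c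
    refine ⟨_, ?_, hp.sub hl⟩
    have hh := h r ⟨hr.1, hr1⟩
    simp only [Pi.mul_apply, Pi.neg_apply, Pi.div_apply, id]
    set p := -(r * deriv u r / u r) with hpdef
    have e : -(((1 * deriv u r + r * deriv (deriv u) r) * u r - r * deriv u r * deriv u r) / u r ^ 2)
        = (p + p ^ 2 - r ^ 2 * deriv (deriv u) r / u r) / r := by
      rw [hpdef]; field_simp; ring
    rw [e, sub_nonneg, div_mul_div_comm, one_mul, ← div_eq_mul_inv,
      div_le_div_iff₀ hr0 (by positivity)]
    nlinarith
  have hmono : MonotoneOn g (Icc a b) := by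
    apply monotoneOn_of_deriv_nonneg (convex_Icc a b)
    · intro r hr
      obtain ⟨g', -, h2⟩ := hg r hr
      exact h2.continuousAt.continuousWithinAt
    · intro r hr
      obtain ⟨g', -, h2⟩ := hg r (interior_subset hr)
      exact h2.differentiableAt.differentiableWithinAt
    · intro r hr
      obtain ⟨g', h1, h2⟩ := hg r (interior_subset hr)
      rw [h2.deriv]; exact h1
  have hm := hmono (left_mem_Icc.mpr hab.le) (right_mem_Icc.mpr hab.le) hab.le
  simp only [g] at hm
  rw [ha, hb, log_exp, log_exp, ← ha, ← hb] at hm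
  have h1 := arctan_lt_pi_div_two (-(b * deriv u b / u b))
  have h2 := neg_pi_div_two_lt_arctan (-(a * deriv u a / u a))
  have h3 : c * (π / c) = π := by field_simp
  nlinarith

lemma main_tendsto (Op : (ℝ → ℝ) → ℝ → ℝ) (T : ℝ) (hT : 0 < T) (hR : RicProp Op T)
    (hlow : ∃ u : ℝ → ℝ, ContDiffOn ℝ 2 u (Ioo 0 1) ∧ (∀ r ∈ Ioo (0:ℝ) 1, 0 < u r) ∧
      (∀ r ∈ Ioo (0:ℝ) 1, Op u r + T * u r / r ^ 2 ≤ 0)) :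
    Tendsto (fun γ => radialEVop Op γ) (nhdsWithin 2 (Ioo 0 2)) (nhds T) := by
  have hmem : ∀ γ ∈ Ioo (0:ℝ) 2, T ∈ {μ : ℝ | ∃ u : ℝ → ℝ, ContDiffOn ℝ 2 u (Ioo 0 1) ∧
    (∀ r ∈ Ioo (0:ℝ) 1, 0 < u r) ∧
    (∀ r ∈ Ioo (0:ℝ) 1, Op u r + μ * u r * r ^ (-γ) ≤ 0)} := by
    intro γ hγ
    obtain ⟨u, h1, h2, h3⟩ := hlow
    refine ⟨u, h1, h2, fun r hr => ?_⟩
    have h4 := h3 r hr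
    have h5 : r ^ (-γ) ≤ r ^ (-2 : ℝ) :=
      rpow_le_rpow_of_exponent_ge hr.1 hr.2.le (by linarith [hγ.2])
    have h6 : r ^ (-2 : ℝ) = 1 / r ^ 2 := by
      rw [rpow_neg hr.1.le, one_div]; norm_num
    have h7 := mul_le_mul_of_nonneg_left h5 (mul_pos hT (h2 r hr)).le
    rw [h6, mul_one_div] at h7
    linarith
  have hup : ∀ m, T < m → ∀ᶠ γ in nhdsWithin 2 (Ioo (0:ℝ) 2),
      T ≤ radialEVop Op γ ∧ radialEVop Op γ ≤ m := by
    intro m hm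
    obtain ⟨c, hc, hcp⟩ := hR ((m + T) / 2) (by linarith)
    set a := exp (-(π / c) - 1) with ha
    have ha0 : 0 < a := exp_pos _
    have hm0 : 0 < m := hT.trans hm
    have hlim : Tendsto (fun γ : ℝ => m * a ^ (2 - γ)) (nhdsWithin 2 (Ioo (0:ℝ) 2)) (nhds m) := by
      have hcont : Continuous (fun γ : ℝ => m * a ^ (2 - γ)) :=
        continuous_const.mul (continuous_const.rpow (by fun_prop) (fun _ => Or.inl ha0.ne'))
      have := (hcont.tendsto 2).mono_left (nhdsWithin_le_nhds (s := Ioo (0:ℝ) 2))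
      simpa using this
    filter_upwards [hlim.eventually (lt_mem_nhds (show (m + T) / 2 < m by linarith)),
      self_mem_nhdsWithin] with γ h1 hγ
    have hub : ∀ μ ∈ {μ : ℝ | ∃ u : ℝ → ℝ, ContDiffOn ℝ 2 u (Ioo 0 1) ∧
        (∀ r ∈ Ioo (0:ℝ) 1, 0 < u r) ∧
        (∀ r ∈ Ioo (0:ℝ) 1, Op u r + μ * u r * r ^ (-γ) ≤ 0)}, μ ≤ m := by
      rintro μ ⟨u, hu, hpos, hs⟩
      by_contra! hlt
      refine no_super c hc u hu hpos (fun r hr => ?_)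
      have hr0 : 0 < r := lt_of_lt_of_le ha0 hr.1
      have hu0 := hpos r ⟨hr0, hr.2⟩
      refine hcp u r hr0 hu0 ?_
      have h2 := hs r ⟨hr0, hr.2⟩
      have h3 : a ^ (2 - γ) ≤ r ^ (2 - γ) :=
        rpow_le_rpow ha0.le hr.1 (by linarith [hγ.2])
      have h4 : r ^ (-γ) = r ^ (2 - γ) / r ^ 2 := by
        rw [← rpow_natCast, ← rpow_sub hr0]; congr 1; push_cast; ring
      have h5 : (m + T) / 2 ≤ μ * r ^ (2 - γ) := by
        have : 0 < a ^ (2 - γ) := rpow_pos_of_pos ha0 _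
        nlinarith
      have h6 : (m + T) / 2 * (u r / r ^ 2) ≤ μ * r ^ (2 - γ) * (u r / r ^ 2) :=
        mul_le_mul_of_nonneg_right h5 (by positivity)
      have h7 : μ * u r * r ^ (-γ) = μ * r ^ (2 - γ) * (u r / r ^ 2) := by rw [h4]; ring
      rw [h7] at h2
      rw [mul_div_assoc]
      linarith
    exact ⟨le_csSup ⟨m, hub⟩ (hmem γ hγ), csSup_le ⟨T, hmem γ hγ⟩ hub⟩
  rw [tendsto_order]
  constructor
  · intro x hx
    filter_upwards [hup (T + 1) (by linarith)] with γ h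
    linarith [h.1]
  · intro x hx
    filter_upwards [hup ((T + x) / 2) (by linarith)] with γ h
    linarith [h.2]

lemma deriv_pow_aux (τ : ℝ) : ∀ r : ℝ, 0 < r →
    deriv (fun x : ℝ => x ^ (-τ)) r = -τ * r ^ (-τ - 1) ∧
    deriv (deriv (fun x : ℝ => x ^ (-τ))) r = τ * (τ + 1) * r ^ (-τ - 2) := by
  intro r hr
  have h1 : ∀ x : ℝ, 0 < x → deriv (fun x : ℝ => x ^ (-τ)) x = -τ * x ^ (-τ - 1) :=
    fun x hx => (hasDerivAt_rpow_const (Or.inl hx.ne')).deriv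
  refine ⟨h1 r hr, ?_⟩
  have h2 : deriv (fun x : ℝ => x ^ (-τ)) =ᶠ[nhds r] fun x => -τ * x ^ (-τ - 1) := by
    filter_upwards [lt_mem_nhds hr] with x hx using h1 x hx
  rw [h2.deriv_eq, ((hasDerivAt_rpow_const (p := -τ - 1) (Or.inl hr.ne')).const_mul (-τ)).deriv]
  rw [show -τ - 1 - 1 = -τ - 2 by ring]; ring

/-- Power functions are supersolutions, for both operators. -/
lemma pow_super (Op : (ℝ → ℝ) → ℝ → ℝ) (x y : ℝ) (n τ T : ℝ) (hτ : 0 < τ)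
    (hT : T = τ * (y * n - x * (τ + 1)))
    (hOp : ∀ (u : ℝ → ℝ) (r : ℝ), 0 ≤ deriv (deriv u) r → deriv u r / r ≤ 0 →
      Op u r = x * deriv (deriv u) r + n * (y * (deriv u r / r))) :
    ∃ u : ℝ → ℝ, ContDiffOn ℝ 2 u (Ioo 0 1) ∧ (∀ r ∈ Ioo (0:ℝ) 1, 0 < u r) ∧
      (∀ r ∈ Ioo (0:ℝ) 1, Op u r + T * u r / r ^ 2 ≤ 0) := by
  refine ⟨fun r => r ^ (-τ), ?_, fun r hr => rpow_pos_of_pos hr.1 _, fun r hr => ?_⟩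
  · intro r hr
    exact (contDiffAt_rpow_const_of_ne hr.1.ne').contDiffWithinAt
  · obtain ⟨h1, h2⟩ := deriv_pow_aux τ r hr.1
    have hr0 := hr.1
    have e1 : r ^ (-τ - 1) = r ^ (-τ) / r := by rw [rpow_sub hr0, rpow_one]
    have e2 : r ^ (-τ - 2) = r ^ (-τ) / r ^ 2 := by
      rw [rpow_sub hr0]; norm_num
    have hpos : 0 < r ^ (-τ) := rpow_pos_of_pos hr0 _
    have h3 : deriv (fun x : ℝ => x ^ (-τ)) r / r = -(τ * (r ^ (-τ) / r ^ 2)) := by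
      rw [h1, e1]; field_simp
    rw [hOp, h2, h3, e2, hT]
    · apply le_of_eq; field_simp; ring
    · rw [h2, e2]; positivity
    · rw [h3, neg_nonpos]; positivity

lemma max_scale {k s x : ℝ} (hk : 0 < k) (h : s = x / k) : max s 0 = max x 0 / k := by
  subst h
  rcases le_total x 0 with hx | hx
  · rw [max_eq_right hx, max_eq_right (div_nonpos_of_nonpos_of_nonneg hx hk.le), zero_div]
  · rw [max_eq_left hx, max_eq_left (by positivity)]

lemma scaled (x y n m : ℝ) (u : ℝ → ℝ) (r : ℝ) (hr : 0 < r) (hu : 0 < u r)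
    (h : x * max (deriv (deriv u) r) 0 - y * max (-(deriv (deriv u) r)) 0 +
      n * (x * max (deriv u r / r) 0 - y * max (-(deriv u r / r)) 0) + m * u r / r ^ 2 ≤ 0) :
    x * max (r ^ 2 * deriv (deriv u) r / u r) 0 - y * max (-(r ^ 2 * deriv (deriv u) r / u r)) 0 +
      n * (x * max (r * deriv u r / u r) 0 - y * max (-(r * deriv u r / u r)) 0) + m ≤ 0 := by
  have hk : 0 < u r / r ^ 2 := by positivity
  rw [max_scale hk (s := r ^ 2 * deriv (deriv u) r / u r) (x := deriv (deriv u) r) (by field_simp),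
    max_scale hk (s := -(r ^ 2 * deriv (deriv u) r / u r)) (x := -deriv (deriv u) r) (by field_simp),
    max_scale hk (s := r * deriv u r / u r) (x := deriv u r / r) (by field_simp),
    max_scale hk (s := -(r * deriv u r / u r)) (x := -(deriv u r / r)) (by field_simp)]
  have := div_nonpos_of_nonpos_of_nonneg h hk.le
  have hm : m = (m * u r / r ^ 2) / (u r / r ^ 2) := by field_simp
  calc _ = _ := by
        rw [add_div, ← hm]
        ring
    _ ≤ 0 := this

lemma ric_P (N : ℕ) (hN : 2 ≤ N) (lam Lam : ℝ) (hlam : 0 < lam) (hlL : lam ≤ Lam)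
    (Np : ℝ) (hNpdef : Np = lam / Lam * ((N : ℝ) - 1) + 1) :
    RicProp (pucciP lam Lam N) (Lam * ((Np - 2) / 2) ^ 2) := by
  intro m hm
  have hL : 0 < Lam := hlam.trans_le hlL
  have hn : (2:ℝ) ≤ N := by exact_mod_cast hN
  obtain ⟨c, hc, hcp⟩ := aux_quad ((Np - 2) / 2) (m / Lam - ((Np - 2) / 2) ^ 2) (by
    rw [sub_pos, lt_div_iff₀ hL]; linarith)
  refine ⟨c, hc, fun u r hr hu h => ?_⟩
  have h' := scaled _ _ _ _ u r hr hu h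
  set q := r ^ 2 * deriv (deriv u) r / u r
  set s := r * deriv u r / u r
  have h1 : Lam * q ≤ Lam * max q 0 - lam * max (-q) 0 := by
    rcases le_total q 0 with hq | hq
    · rw [max_eq_right hq, max_eq_left (by linarith)]; nlinarith
    · rw [max_eq_left hq, max_eq_right (by linarith)]; linarith
  have h2 : lam * s ≤ Lam * max s 0 - lam * max (-s) 0 := by
    rcases le_total s 0 with hq | hq
    · rw [max_eq_right hq, max_eq_left (by linarith)]; linarith
    · rw [max_eq_left hq, max_eq_right (by linarith)]; nlinarith
  have h3 := mul_le_mul_of_nonneg_left h2 (show (0:ℝ) ≤ (N:ℝ) - 1 by linarith)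
  refine (hcp (-s)).trans ?_
  have h4 : q ≤ -(m / Lam) - (Np - 1) * s := by
    have : Lam * q ≤ Lam * (-(m / Lam) - (Np - 1) * s) := by
      have e : Lam * (-(m / Lam) - (Np - 1) * s) = -m - ((N:ℝ) - 1) * (lam * s) := by
        rw [hNpdef]; field_simp; ring
      rw [e]; linarith
    exact le_of_mul_le_mul_left this hL
  nlinarith

lemma ric_M (N : ℕ) (hN : 2 ≤ N) (lam Lam : ℝ) (hlam : 0 < lam) (hlL : lam ≤ Lam)
    (Np Nm : ℝ) (hNpdef : Np = lam / Lam * ((N : ℝ) - 1) + 1)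
    (hNmdef : Nm = Lam / lam * ((N : ℝ) - 1) + 1) (hNp : 2 < Np) :
    RicProp (pucciM lam Lam N) (lam * ((Nm - 2) / 2) ^ 2) := by
  intro m hm
  have hL : 0 < Lam := hlam.trans_le hlL
  have hn : (2:ℝ) ≤ N := by exact_mod_cast hN
  have hm0 : 0 < m := lt_of_le_of_lt (by positivity) hm
  obtain ⟨n, hndef⟩ : ∃ n : ℝ, n = (N:ℝ) - 1 := ⟨_, rfl⟩
  have hn1 : 1 ≤ n := by linarith
  have hn0 : 0 < n := by linarith
  obtain ⟨c₁, hc₁, hcp₁⟩ := aux_quad ((Nm - 2) / 2) (m / lam - ((Nm - 2) / 2) ^ 2) (by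
    rw [sub_pos, lt_div_iff₀ hlam]; linarith)
  obtain ⟨c₂, hc₂, hcp₂⟩ := aux_quad 0 (m / Lam / n) (by positivity)
  refine ⟨min c₁ c₂, lt_min hc₁ hc₂, fun u r hr hu h => ?_⟩
  have h' := scaled _ _ _ _ u r hr hu h
  rw [← hndef] at h' hNpdef hNmdef
  set q := r ^ 2 * deriv (deriv u) r / u r
  set s := r * deriv u r / u r
  have hsq : 0 ≤ 1 + (-s) ^ 2 := by positivity
  rcases le_total 0 q with hq | hq
  · rw [max_eq_left hq, max_eq_right (by linarith : -q ≤ 0)] at h'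
    rcases le_total 0 s with hs | hs
    · exfalso
      rw [max_eq_left hs, max_eq_right (by linarith : -s ≤ 0)] at h'
      have : 0 ≤ n * (lam * s) := by positivity
      have : 0 ≤ lam * q := by positivity
      linarith
    · rw [max_eq_right hs, max_eq_left (by linarith : 0 ≤ -s)] at h'
      refine (mul_le_mul_of_nonneg_right (min_le_left _ _) hsq).trans ((hcp₁ (-s)).trans ?_)
      have h4 : q ≤ -(m / lam) - (Nm - 1) * s := by
        have : lam * q ≤ lam * (-(m / lam) - (Nm - 1) * s) := by
          have e : lam * (-(m / lam) - (Nm - 1) * s) = -m - n * (Lam * s) := by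
            rw [hNmdef]; field_simp; ring
          rw [e]; linarith
        exact le_of_mul_le_mul_left this hlam
      nlinarith
  · rw [max_eq_right hq, max_eq_left (by linarith : 0 ≤ -q)] at h'
    refine (mul_le_mul_of_nonneg_right (min_le_right _ _) hsq).trans ((hcp₂ (-s)).trans ?_)
    have hmn : m / Lam / n ≤ m / Lam := div_le_self (by positivity) hn1
    rcases le_total 0 s with hs | hs
    · rw [max_eq_left hs, max_eq_right (by linarith : -s ≤ 0)] at h'
      have h4 : q ≤ -(m / Lam) - (Np - 1) * s := by
        have : Lam * q ≤ Lam * (-(m / Lam) - (Np - 1) * s) := by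
          have e : Lam * (-(m / Lam) - (Np - 1) * s) = -m - n * (lam * s) := by
            rw [hNpdef]; field_simp; ring
          rw [e]; linarith
        exact le_of_mul_le_mul_left this hL
      nlinarith
    · rw [max_eq_right hs, max_eq_left (by linarith : 0 ≤ -s)] at h'
      have h4 : m / Lam ≤ -q - n * s := by
        rw [div_le_iff₀ hL]; nlinarith
      have h5 : m / Lam / n ≤ -q - s := by
        rw [div_le_iff₀ hn0]; nlinarith
      nlinarith

theorem stmt5 (N : ℕ) (hN : 2 ≤ N) (lam Lam : ℝ) (hlam : 0 < lam) (hlL : lam ≤ Lam)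
    (Np Nm : ℝ) (hNpdef : Np = lam / Lam * ((N : ℝ) - 1) + 1)
    (hNmdef : Nm = Lam / lam * ((N : ℝ) - 1) + 1) (hNp : 2 < Np) :
    Tendsto (fun γ => radialEVop (pucciP lam Lam N) γ) (nhdsWithin 2 (Ioo 0 2))
      (nhds (Lam * ((Np - 2) / 2) ^ 2)) ∧
    Tendsto (fun γ => radialEVop (pucciM lam Lam N) γ) (nhdsWithin 2 (Ioo 0 2))
      (nhds (lam * ((Nm - 2) / 2) ^ 2)) := by
  have hL : 0 < Lam := hlam.trans_le hlL
  have hn : (2:ℝ) ≤ N := by exact_mod_cast hN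
  have hNm : 2 < Nm := by
    have h1 : lam / Lam ≤ 1 := (div_le_one hL).mpr hlL
    have h2 : 1 ≤ Lam / lam := (one_le_div hlam).mpr hlL
    nlinarith
  have hp : 0 < (Np - 2) / 2 := by linarith
  have hq : 0 < (Nm - 2) / 2 := by linarith
  constructor
  · refine main_tendsto _ _ (by positivity) (ric_P N hN lam Lam hlam hlL Np hNpdef)
      (pow_super _ Lam lam ((N:ℝ) - 1) ((Np - 2) / 2) _ hp ?_ ?_)
    · have e : lam * ((N:ℝ) - 1) = Lam * (Np - 1) := by rw [hNpdef]; field_simp; ring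
      rw [e]; ring
    · intro u r h1 h2
      simp only [pucciP]
      rw [max_eq_left h1, max_eq_right (by linarith : -deriv (deriv u) r ≤ 0),
        max_eq_right h2, max_eq_left (by linarith : 0 ≤ -(deriv u r / r))]
      ring
  · refine main_tendsto _ _ (by positivity)
      (ric_M N hN lam Lam hlam hlL Np Nm hNpdef hNmdef hNp)
      (pow_super _ lam Lam ((N:ℝ) - 1) ((Nm - 2) / 2) _ hq ?_ ?_)
    · have e : Lam * ((N:ℝ) - 1) = lam * (Nm - 1) := by rw [hNmdef]; field_simp; ring
      rw [e]; ring
    · intro u r h1 h2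
      simp only [pucciM]
      rw [max_eq_left h1, max_eq_right (by linarith : -deriv (deriv u) r ≤ 0),
        max_eq_right h2, max_eq_left (by linarith : 0 ≤ -(deriv u r / r))]
      ring

end
end

section
/- Let 0 < γ < 2, let f : (0,1) → ℝ be continuous and bounded, let β ≥ 0 and b ∈ ℝ. Then there exists a unique bounded function u, continuous on (0,1] and C² on (0,1), satisfying F(D(u''(r), u'(r)/r)) − β·u(r)·r^{−γ} = f(r)·r^{−γ} for all r ∈ (0,1) and u(1) = b. Moreover u extends continuously to [0,1], and the extension is of class C¹ on [0,1) if γ < 1, Lipschitz continuous on [0,1] if γ ≤ 1, and Hölder continuous with exponent 2−γ on [0,1] if γ > 1. -/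
open Set Real Filter MeasureTheory Matrix

noncomputable section

/-- Bounded continuous functions on the open unit interval. -/
def BCI (q : ℝ → ℝ) : Prop :=
  ContinuousOn q (Ioo 0 1) ∧ ∃ C : ℝ, ∀ r ∈ Ioo (0:ℝ) 1, |q r| ≤ C

lemma BCI.exists_nonneg {q : ℝ → ℝ} (h : BCI q) :
    ∃ C : ℝ, 0 ≤ C ∧ ∀ r ∈ Ioo (0:ℝ) 1, |q r| ≤ C := by
  obtain ⟨C, hC⟩ := h.2
  exact ⟨C, (abs_nonneg _).trans (hC (1/2) (by norm_num)), hC⟩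

open Classical in
lemma fixpt (κ : ℝ) (hκ0 : 0 ≤ κ) (hκ1 : κ < 1) (T : (ℝ → ℝ) → (ℝ → ℝ))
    (hT : ∀ q, BCI q → BCI (T q))
    (hcon : ∀ q₁ q₂, BCI q₁ → BCI q₂ → ∀ D : ℝ, 0 ≤ D →
      (∀ r ∈ Ioo (0:ℝ) 1, |q₁ r - q₂ r| ≤ D) →
      ∀ r ∈ Ioo (0:ℝ) 1, |T q₁ r - T q₂ r| ≤ κ * D) :
    ∃ q, BCI q ∧ ∀ r ∈ Ioo (0:ℝ) 1, T q r = q r := by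
  let X := BoundedContinuousFunction (Ioo (0:ℝ) 1) ℝ
  let ext : X → ℝ → ℝ := fun Y t => if h : t ∈ Ioo (0:ℝ) 1 then Y ⟨t, h⟩ else 0
  have ext_eq : ∀ (Y : X) (t : Ioo (0:ℝ) 1), ext Y t = Y t := by
    intro Y t
    simp only [ext, t.2, dif_pos]
  have hext : ∀ Y : X, BCI (ext Y) := by
    intro Y
    refine ⟨?_, ‖Y‖, ?_⟩
    · rw [continuousOn_iff_continuous_domRestrict]
      have : (Ioo (0:ℝ) 1).domRestrict (ext Y) = Y := by
        funext t; exact ext_eq Y t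
      rw [this]; exact Y.continuous
    · intro r hr
      have := ext_eq Y ⟨r, hr⟩
      simp only at this
      rw [this]
      exact Y.norm_coe_le_norm _
  let S : X → X := fun Y => BoundedContinuousFunction.ofNormedAddCommGroup
    ((Ioo (0:ℝ) 1).domRestrict (T (ext Y)))
    (continuousOn_iff_continuous_domRestrict.1 (hT _ (hext Y)).1)
    (hT _ (hext Y)).2.choose
    (fun x => (hT _ (hext Y)).2.choose_spec x x.2)
  have hS : ∀ (Y : X) (t : Ioo (0:ℝ) 1), S Y t = T (ext Y) t := fun Y t => rfl
  have hc : ContractingWith ⟨κ, hκ0⟩ S := by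
    refine ⟨by exact_mod_cast hκ1, LipschitzWith.of_dist_le_mul fun Y₁ Y₂ => ?_⟩
    rw [BoundedContinuousFunction.dist_le (by positivity)]
    intro t
    rw [hS, hS, Real.dist_eq]
    refine hcon _ _ (hext _) (hext _) _ dist_nonneg ?_ t t.2
    intro r hr
    have h1 := ext_eq Y₁ ⟨r, hr⟩
    have h2 := ext_eq Y₂ ⟨r, hr⟩
    simp only at h1 h2
    rw [h1, h2, ← Real.dist_eq]
    exact BoundedContinuousFunction.dist_coe_le_dist _
  have hne : Nonempty X := ⟨0⟩
  have hfix := hc.fixedPoint_isFixedPt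
  refine ⟨ext (ContractingWith.fixedPoint S hc), hext _, ?_⟩
  intro r hr
  have h1 := hS (ContractingWith.fixedPoint S hc) ⟨r, hr⟩
  rw [hfix] at h1
  have h2 := ext_eq (ContractingWith.fixedPoint S hc) ⟨r, hr⟩
  simp only at h1 h2
  rw [← h1, h2]

/-- Weighted primitive. -/
def WP (a : ℝ) (g : ℝ → ℝ) (r : ℝ) : ℝ := ∫ t in (0:ℝ)..r, t ^ a * g t

lemma WP_int {a : ℝ} (ha : -1 < a) {g : ℝ → ℝ} (hg : BCI g) {x y : ℝ}
    (hx : x ∈ Icc (0:ℝ) 1) (hy : y ∈ Icc (0:ℝ) 1) :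
    IntervalIntegrable (fun t => t ^ a * g t) volume x y := by
  obtain ⟨C, hC0, hC⟩ := hg.exists_nonneg
  have h01 : IntervalIntegrable (fun t => t ^ a * g t) volume 0 1 := by
    have h1 : IntervalIntegrable (fun t : ℝ => t ^ a) volume 0 1 :=
      intervalIntegral.intervalIntegrable_rpow' ha
    rw [intervalIntegrable_iff_integrableOn_Ioo_of_le zero_le_one] at h1 ⊢
    refine Integrable.mono' (g := fun t => t ^ a * C) (h1.mul_const C) ?_ ?_
    · refine ContinuousOn.aestronglyMeasurable ?_ measurableSet_Ioo
      refine ContinuousOn.mul ?_ hg.1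
      exact fun t ht => (Real.continuousAt_rpow_const _ _ (Or.inl ht.1.ne')).continuousWithinAt
    · refine (ae_restrict_iff' measurableSet_Ioo).2 (Eventually.of_forall fun t ht => ?_)
      rw [norm_mul, Real.norm_eq_abs, Real.norm_eq_abs, abs_of_nonneg (Real.rpow_nonneg ht.1.le _)]
      exact mul_le_mul_of_nonneg_left (hC t ht) (Real.rpow_nonneg ht.1.le _)
  refine h01.mono_set ?_
  rw [uIcc_of_le (zero_le_one (α := ℝ))]
  exact uIcc_subset_Icc hx hy

lemma WP_bound_le {a : ℝ} (ha : -1 < a) {g : ℝ → ℝ} (hg : BCI g) {C : ℝ}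
    (hC : ∀ r ∈ Ioo (0:ℝ) 1, |g r| ≤ C) {x y : ℝ}
    (hx : x ∈ Icc (0:ℝ) 1) (hy : y ∈ Icc (0:ℝ) 1) (hxy : x ≤ y) :
    |WP a g y - WP a g x| ≤ C / (a + 1) * (y ^ (a + 1) - x ^ (a + 1)) := by
  have h0 : (0:ℝ) ∈ Icc (0:ℝ) 1 := by simp
  unfold WP
  rw [intervalIntegral.integral_interval_sub_left (WP_int ha hg h0 hy) (WP_int ha hg h0 hx)]
  have h1 : IntervalIntegrable (fun t : ℝ => t ^ a * C) volume x y :=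
    (intervalIntegral.intervalIntegrable_rpow' ha).mul_const C
  have := intervalIntegral.norm_integral_le_of_norm_le (f := fun t => t ^ a * g t) hxy (g := fun t : ℝ => t ^ a * C)
    (μ := volume) ?_ h1
  · rw [Real.norm_eq_abs] at this
    refine this.trans (le_of_eq ?_)
    rw [intervalIntegral.integral_mul_const, integral_rpow (Or.inl ha)]
    ring
  · have hne : ∀ᵐ t : ℝ ∂volume, t ≠ 1 := by
      simp [ae_iff]
    filter_upwards [hne] with t ht1 ht
    have ht' : t ∈ Ioo (0:ℝ) 1 :=
      ⟨hx.1.trans_lt ht.1, lt_of_le_of_ne (ht.2.trans hy.2) ht1⟩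
    rw [norm_mul, Real.norm_eq_abs, Real.norm_eq_abs, abs_of_nonneg (Real.rpow_nonneg ht'.1.le _)]
    exact mul_le_mul_of_nonneg_left (hC t ht') (Real.rpow_nonneg ht'.1.le _)

lemma WP_bound {a : ℝ} (ha : -1 < a) {g : ℝ → ℝ} (hg : BCI g) {C : ℝ}
    (hC : ∀ r ∈ Ioo (0:ℝ) 1, |g r| ≤ C) {x y : ℝ}
    (hx : x ∈ Icc (0:ℝ) 1) (hy : y ∈ Icc (0:ℝ) 1) :
    |WP a g x - WP a g y| ≤ C / (a + 1) * |x ^ (a + 1) - y ^ (a + 1)| := by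
  have hC0 : 0 ≤ C := (abs_nonneg _).trans (hC (1/2) (by norm_num))
  have ha1 : 0 < a + 1 := by linarith
  rcases le_total x y with h | h
  · rw [abs_sub_comm, abs_sub_comm (x ^ (a+1))]
    refine (WP_bound_le ha hg hC hx hy h).trans ?_
    exact mul_le_mul_of_nonneg_left (le_abs_self _) (by positivity)
  · refine (WP_bound_le ha hg hC hy hx h).trans ?_
    exact mul_le_mul_of_nonneg_left (le_abs_self _) (by positivity)

lemma WP_zero (a : ℝ) (g : ℝ → ℝ) : WP a g 0 = 0 := by simp [WP]

lemma WP_sub {a : ℝ} (ha : -1 < a) {g h : ℝ → ℝ} (hg : BCI g) (hh : BCI h) {x : ℝ}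
    (hx : x ∈ Icc (0:ℝ) 1) :
    WP a g x - WP a h x = WP a (fun t => g t - h t) x := by
  have h0 : (0:ℝ) ∈ Icc (0:ℝ) 1 := by simp
  unfold WP
  rw [← intervalIntegral.integral_sub (WP_int ha hg h0 hx) (WP_int ha hh h0 hx)]
  congr 1
  funext t
  ring

lemma BCI.sub {g h : ℝ → ℝ} (hg : BCI g) (hh : BCI h) : BCI (fun t => g t - h t) := by
  obtain ⟨C, hC⟩ := hg.2
  obtain ⟨D, hD⟩ := hh.2
  refine ⟨hg.1.sub hh.1, C + D, fun r hr => ?_⟩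
  exact (abs_sub _ _).trans (add_le_add (hC r hr) (hD r hr))

lemma BCI.add {g h : ℝ → ℝ} (hg : BCI g) (hh : BCI h) : BCI (fun t => g t + h t) := by
  obtain ⟨C, hC⟩ := hg.2
  obtain ⟨D, hD⟩ := hh.2
  refine ⟨hg.1.add hh.1, C + D, fun r hr => ?_⟩
  exact (abs_add_le _ _).trans (add_le_add (hC r hr) (hD r hr))

lemma BCI.const_mul {g : ℝ → ℝ} (c : ℝ) (hg : BCI g) : BCI (fun t => c * g t) := by
  obtain ⟨C, hC⟩ := hg.2
  refine ⟨continuousOn_const.mul hg.1, |c| * C, fun r hr => ?_⟩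
  rw [abs_mul]
  exact mul_le_mul_of_nonneg_left (hC r hr) (abs_nonneg _)

lemma WP_deriv {a : ℝ} (ha : -1 < a) {g : ℝ → ℝ} (hg : BCI g) {x : ℝ}
    (hx : x ∈ Ioo (0:ℝ) 1) : HasDerivAt (WP a g) (x ^ a * g x) x := by
  have h0 : (0:ℝ) ∈ Icc (0:ℝ) 1 := by simp
  have hcont : ContinuousOn (fun t : ℝ => t ^ a * g t) (Ioo 0 1) := by
    refine ContinuousOn.mul ?_ hg.1
    exact fun t ht => (Real.continuousAt_rpow_const _ _ (Or.inl ht.1.ne')).continuousWithinAt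
  exact intervalIntegral.integral_hasDerivAt_right (WP_int ha hg h0 ⟨hx.1.le, hx.2.le⟩)
    (hcont.stronglyMeasurableAtFilter isOpen_Ioo x hx)
    (hcont.continuousAt (Ioo_mem_nhds hx.1 hx.2))

lemma second_deriv_max {f f' : ℝ → ℝ} {c x : ℝ}
    (h1 : ∀ᶠ y in nhds x, HasDerivAt f (f' y) y) (h2 : HasDerivAt f' c x)
    (hm : IsLocalMax f x) : f' x = 0 ∧ c ≤ 0 := by
  have hd : deriv f =ᶠ[nhds x] f' := h1.mono fun y hy => hy.deriv
  have h0 : f' x = 0 := hm.hasDerivAt_eq_zero h1.self_of_nhds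
  refine ⟨h0, ?_⟩
  by_contra! hc
  have hdd : deriv (deriv f) x = c := by rw [hd.deriv_eq]; exact h2.deriv
  have hmin := isLocalMin_of_deriv_deriv_pos (f := f) (x₀ := x) (by rw [hdd]; exact hc)
    (by rw [hd.self_of_nhds]; exact h0) h1.self_of_nhds.continuousAt
  have hconst : f =ᶠ[nhds x] fun _ => f x := by
    filter_upwards [hm, hmin] with y hy1 hy2
    exact le_antisymm hy1 hy2
  have : deriv (deriv f) x = 0 := by
    rw [hconst.deriv.deriv_eq]
    simp
  linarith

/-- The hypotheses on the two-variable function `G a y = F (Dmat N a y)`. -/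
structure GHyp (G : ℝ → ℝ → ℝ) (lam Lam n : ℝ) : Prop where
  lpos : 0 < lam
  lle : lam ≤ Lam
  ln : Lam < lam * n
  el : ∀ a y p q : ℝ, 0 ≤ p → 0 ≤ q →
    lam * (p + n * q) ≤ G (a + p) (y + q) - G a y ∧
      G (a + p) (y + q) - G a y ≤ Lam * (p + n * q)
  hom : ∀ t a y : ℝ, 0 < t → G (t * a) (t * y) = t * G a y

lemma ghyp_of (N : ℕ) (hN : 2 ≤ N) (lam Lam : ℝ) (hlam : 0 < lam) (hlL : lam ≤ Lam)
    (hNp : 2 < lam / Lam * ((N : ℝ) - 1) + 1)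
    (F : Matrix (Fin N) (Fin N) ℝ → ℝ)
    (hF1 : UnifElliptic N lam Lam F) (hF3 : PosHomog N F) :
    GHyp (fun a y => F (Dmat N a y)) lam Lam ((N : ℝ) - 1) := by
  have hL : 0 < Lam := hlam.trans_le hlL
  refine ⟨hlam, hlL, ?_, ?_, ?_⟩
  · have : 1 < lam * ((N : ℝ) - 1) / Lam := by
      rw [mul_div_right_comm]; linarith
    rwa [one_lt_div hL] at this
  · intro a y p q hp hq
    have hadd : Dmat N (a + p) (y + q) = Dmat N a y + Dmat N p q := by
      unfold Dmat
      rw [Matrix.diagonal_add]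
      congr 1
      funext i
      split_ifs <;> rfl
    have htr : (Dmat N p q).trace = p + ((N : ℝ) - 1) * q := by
      unfold Dmat
      rw [Matrix.trace_diagonal]
      obtain ⟨M, rfl⟩ : ∃ M, N = M + 1 := ⟨N - 1, by omega⟩
      rw [Fin.sum_univ_succ]
      simp
    have hps : (Dmat N p q).PosSemidef := by
      unfold Dmat
      refine Matrix.PosSemidef.diagonal ?_
      intro i
      simp only [Pi.zero_apply]
      split_ifs <;> assumption
    have hs : (Dmat N a y).IsSymm := Matrix.isSymm_diagonal _
    have := hF1 _ _ hs hps
    simp only [hadd]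
    rwa [htr] at this
  · intro t a y ht
    have : Dmat N (t * a) (t * y) = t • Dmat N a y := by
      unfold Dmat
      rw [← Matrix.diagonal_smul]
      congr 1
      funext i
      simp only [Pi.smul_apply, smul_eq_mul]
      split_ifs <;> rfl
    simp only [this]
    exact hF3 t ht _

section
variable {G : ℝ → ℝ → ℝ} {lam Lam n : ℝ}

lemma GHyp.npos (h : GHyp G lam Lam n) : 0 < n := by
  have h1 := h.lpos; have h2 := h.lle; have h3 := h.ln
  by_contra! hn
  nlinarith

lemma GHyp.el1 (h : GHyp G lam Lam n) (a y p : ℝ) (hp : 0 ≤ p) :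
    lam * p ≤ G (a + p) y - G a y ∧ G (a + p) y - G a y ≤ Lam * p := by
  simpa using h.el a y p 0 hp le_rfl

lemma GHyp.el2 (h : GHyp G lam Lam n) (a y q : ℝ) (hq : 0 ≤ q) :
    lam * (n * q) ≤ G a (y + q) - G a y ∧ G a (y + q) - G a y ≤ Lam * (n * q) := by
  simpa using h.el a y 0 q le_rfl hq

lemma GHyp.mono1 (h : GHyp G lam Lam n) (y : ℝ) : StrictMono (fun a => G a y) := by
  intro a b hab
  have := (h.el1 a y (b - a) (by linarith)).1
  have h2 : 0 < lam * (b - a) := mul_pos h.lpos (by linarith)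
  simp only [add_sub_cancel] at this
  simp only
  linarith

lemma GHyp.cont1 (h : GHyp G lam Lam n) (y : ℝ) : Continuous (fun a => G a y) := by
  have hL : 0 ≤ Lam := h.lpos.le.trans h.lle
  refine (LipschitzWith.of_le_add_mul ⟨Lam, hL⟩ ?_).continuous
  intro a b
  rw [Real.dist_eq]
  change G a y ≤ G b y + Lam * |a - b|
  rcases le_total a b with hab | hab
  · have := (h.mono1 y).monotone hab
    have : 0 ≤ Lam * |a - b| := by positivity
    linarith
  · have := (h.el1 b y (a - b) (by linarith)).2
    simp only [add_sub_cancel] at this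
    rw [abs_of_nonneg (by linarith)]
    linarith

lemma GHyp.surj (h : GHyp G lam Lam n) (y A : ℝ) : ∃ a, G a y = A := by
  have hl := h.lpos
  set p := |A - G 0 y| / lam with hp
  have hp0 : 0 ≤ p := by positivity
  have hlp : lam * p = |A - G 0 y| := by rw [hp]; field_simp
  have h1 := (h.el1 0 y p hp0).1
  have h2 := (h.el1 (-p) y p hp0).1
  simp only [zero_add, neg_add_cancel] at h1 h2
  have h3 := abs_le.1 (le_refl |A - G 0 y|)
  obtain ⟨a, -, ha⟩ := intermediate_value_Icc (show -p ≤ p by linarith)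
    (h.cont1 y).continuousOn (show A ∈ Icc (G (-p) y) (G p y) by
      constructor <;> linarith [h3.1, h3.2])
  exact ⟨a, ha⟩

lemma GHyp.inv (h : GHyp G lam Lam n) : ∃ H : ℝ → ℝ → ℝ,
    (∀ A y, G (H A y) y = A) ∧
    (∀ A y A' y', |(H A y + Lam / lam * n * y) - (H A' y' + Lam / lam * n * y')|
      ≤ 1 / lam * |A - A'| + (Lam / lam * n - lam / Lam * n) * |y - y'|) ∧
    (∀ t A y, 0 < t → H (t * A) (t * y) = t * H A y) := by
  have hl := h.lpos
  have hL : 0 < Lam := hl.trans_le h.lle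
  have hn := h.npos
  choose H hH using fun A y => h.surj y A
  have hle : ∀ a b y, G a y ≤ G b y ↔ a ≤ b := fun a b y => (h.mono1 y).le_iff_le
  have e1 : ∀ A A' y, A ≤ A' → |H A y - H A' y| ≤ 1 / lam * (A' - A) := by
    intro A A' y hA
    have h0 : H A y ≤ H A' y := by rw [← hle _ _ y, hH, hH]; exact hA
    have := (h.el1 (H A y) y (H A' y - H A y) (by linarith)).1
    rw [add_sub_cancel, hH, hH] at this
    rw [abs_sub_comm, abs_of_nonneg (by linarith), div_mul_eq_mul_div, one_mul, le_div_iff₀ hl]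
    linarith
  have e2 : ∀ A y y', y ≤ y' →
      |(H A y + Lam / lam * n * y) - (H A y' + Lam / lam * n * y')|
        ≤ (Lam / lam * n - lam / Lam * n) * (y' - y) := by
    intro A y y' hy
    have h1 := h.el2 (H A y') y (y' - y) (by linarith)
    rw [add_sub_cancel, hH] at h1
    have hpos : 0 ≤ lam * (n * (y' - y)) :=
      mul_nonneg hl.le (mul_nonneg hn.le (by linarith))
    have h0 : H A y' ≤ H A y := by
      rw [← hle _ _ y, hH]; linarith
    have h2 := h.el1 (H A y') y (H A y - H A y') (by linarith)
    rw [add_sub_cancel, hH] at h2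
    have h3 : H A y - H A y' ≤ Lam / lam * n * (y' - y) := by
      rw [div_mul_eq_mul_div, div_mul_eq_mul_div, le_div_iff₀ hl]
      nlinarith [h1.2, h2.1]
    have h4 : lam / Lam * n * (y' - y) ≤ H A y - H A y' := by
      rw [div_mul_eq_mul_div, div_mul_eq_mul_div, div_le_iff₀ hL]
      nlinarith [h1.1, h2.2]
    rw [abs_le]
    constructor <;> nlinarith
  have e1' : ∀ A A' y, |H A y - H A' y| ≤ 1 / lam * |A - A'| := by
    intro A A' y
    rcases le_total A A' with hA | hA
    · rw [abs_sub_comm A, abs_of_nonneg (by linarith : 0 ≤ A' - A)]; exact e1 _ _ _ hA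
    · rw [abs_of_nonneg (by linarith : 0 ≤ A - A'), abs_sub_comm]; exact e1 _ _ _ hA
  refine ⟨H, hH, ?_, ?_⟩
  · intro A y A' y'
    have ha := e1' A A' y
    have hb : |(H A' y + Lam / lam * n * y) - (H A' y' + Lam / lam * n * y')|
        ≤ (Lam / lam * n - lam / Lam * n) * |y - y'| := by
      rcases le_total y y' with hA | hA
      · rw [abs_sub_comm y, abs_of_nonneg (by linarith : 0 ≤ y' - y)]; exact e2 _ _ _ hA
      · rw [abs_of_nonneg (by linarith : 0 ≤ y - y'), abs_sub_comm]; exact e2 _ _ _ hA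
    have : (H A y + Lam / lam * n * y) - (H A' y' + Lam / lam * n * y') =
      (H A y - H A' y) + ((H A' y + Lam / lam * n * y) - (H A' y' + Lam / lam * n * y')) := by
      ring
    rw [this]
    exact (abs_add_le _ _).trans (add_le_add ha hb)
  · intro t A y ht
    apply (h.mono1 (t * y)).injective
    simp only
    rw [hH, h.hom _ _ _ ht, hH]

lemma hasDeriv_of_C2 {u : ℝ → ℝ} (hu : ContDiffOn ℝ 2 u (Ioo 0 1)) {x : ℝ}
    (hx : x ∈ Ioo (0:ℝ) 1) :
    HasDerivAt u (deriv u x) x ∧ HasDerivAt (deriv u) (deriv (deriv u) x) x := by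
  have hn := isOpen_Ioo.mem_nhds hx
  constructor
  · exact ((hu.differentiableOn (by norm_num)).differentiableAt hn).hasDerivAt
  · have h1 : ContDiffOn ℝ 1 (deriv u) (Ioo 0 1) :=
      hu.deriv_of_isOpen isOpen_Ioo (by norm_num)
    exact ((h1.differentiableOn (by norm_num)).differentiableAt hn).hasDerivAt

lemma GHyp.comparison (h : GHyp G lam Lam n) {u₁ u₂ : ℝ → ℝ} {η : ℝ} (hη : 0 ≤ η)
    (hb1 : ∃ C : ℝ, ∀ r ∈ Ioc (0:ℝ) 1, |u₁ r| ≤ C)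
    (hb2 : ∃ C : ℝ, ∀ r ∈ Ioc (0:ℝ) 1, |u₂ r| ≤ C)
    (hc1 : ContinuousOn u₁ (Ioc 0 1)) (hc2 : ContinuousOn u₂ (Ioc 0 1))
    (hd1 : ContDiffOn ℝ 2 u₁ (Ioo 0 1)) (hd2 : ContDiffOn ℝ 2 u₂ (Ioo 0 1))
    (h1 : u₁ 1 = u₂ 1)
    (hG : ∀ r ∈ Ioo (0:ℝ) 1, η < u₁ r - u₂ r →
      G (deriv (deriv u₂) r) (deriv u₂ r / r) ≤ G (deriv (deriv u₁) r) (deriv u₁ r / r)) :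
    ∀ r ∈ Ioc (0:ℝ) 1, u₁ r - u₂ r ≤ η := by
  by_contra! hcon
  obtain ⟨x0, hx0, hw0⟩ := hcon
  have hl := h.lpos
  have hL : 0 < Lam := hl.trans_le h.lle
  have hn := h.npos
  have hln := h.ln
  obtain ⟨C1, hC1⟩ := hb1
  obtain ⟨C2, hC2⟩ := hb2
  obtain ⟨τ, hτ0, hτ⟩ : ∃ τ : ℝ, 0 < τ ∧ Lam * (τ + 1) < lam * n := by
    refine ⟨(lam * n - Lam) / (2 * Lam), div_pos (by linarith) (by linarith), ?_⟩
    have : Lam * ((lam * n - Lam) / (2 * Lam) + 1) = (lam * n - Lam) / 2 + Lam := by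
      field_simp
    rw [this]; linarith
  have hx0p : 0 < x0 ^ (-τ) := Real.rpow_pos_of_pos hx0.1 _
  obtain ⟨ε, hε0, hε⟩ : ∃ ε : ℝ, 0 < ε ∧ η < u₁ x0 - u₂ x0 - ε * x0 ^ (-τ) := by
    refine ⟨(u₁ x0 - u₂ x0 - η) / 2 / x0 ^ (-τ), div_pos (by linarith) hx0p, ?_⟩
    rw [div_mul_cancel₀ _ hx0p.ne']; linarith
  have htend : Tendsto (fun r : ℝ => r ^ (-τ)) (nhdsWithin 0 (Ioi 0)) atTop :=
    tendsto_rpow_neg_nhdsGT_zero (by linarith)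
  have hev : ∀ᶠ r : ℝ in nhdsWithin 0 (Ioi 0), (C1 + C2) / ε ≤ r ^ (-τ) ∧ r < x0 :=
    (htend.eventually_ge_atTop _).and
      (mem_nhdsWithin_of_mem_nhds (Iio_mem_nhds hx0.1))
  obtain ⟨δ, ⟨hδ1, hδ2⟩, hδ0⟩ := (hev.and self_mem_nhdsWithin).exists
  have hδ0 : 0 < δ := hδ0
  set z : ℝ → ℝ := fun r => u₁ r - u₂ r - ε * r ^ (-τ) with hz
  have hsub : Icc δ 1 ⊆ Ioc (0:ℝ) 1 := fun r hr => ⟨hδ0.trans_le hr.1, hr.2⟩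
  have hzc : ContinuousOn z (Icc δ 1) := by
    refine ((hc1.mono hsub).sub (hc2.mono hsub)).sub (continuousOn_const.mul ?_)
    exact fun t ht => (Real.continuousAt_rpow_const _ _
      (Or.inl (hsub ht).1.ne')).continuousWithinAt
  obtain ⟨x, hx, hxm⟩ := isCompact_Icc.exists_isMaxOn ⟨x0, hδ2.le, hx0.2⟩ hzc
  have hzx : η < z x := hε.trans_le (hxm ⟨hδ2.le, hx0.2⟩)
  have hxδ : x ≠ δ := by
    rintro rfl
    have a1 := abs_le.1 (hC1 x (hsub hx))
    have a2 := abs_le.1 (hC2 x (hsub hx))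
    rw [div_le_iff₀ hε0] at hδ1
    simp only [hz] at hzx
    linarith [a1.2, a2.1]
  have hx1 : x ≠ 1 := by
    rintro rfl
    simp only [hz, h1, Real.one_rpow] at hzx
    linarith
  have hxI : x ∈ Ioo δ 1 := ⟨lt_of_le_of_ne hx.1 hxδ.symm, lt_of_le_of_ne hx.2 hx1⟩
  have hxI' : x ∈ Ioo (0:ℝ) 1 := ⟨hδ0.trans hxI.1, hxI.2⟩
  have hxp := hxI'.1
  have hlm : IsLocalMax z x := hxm.isLocalMax (Icc_mem_nhds hxI.1 hxI.2)
  have hφ : ∀ (y c : ℝ), 0 < y → HasDerivAt (fun r : ℝ => r ^ c) (c * y ^ (c - 1)) y :=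
    fun y c hy => Real.hasDerivAt_rpow_const (Or.inl hy.ne')
  have hz1 : ∀ y ∈ Ioo (0:ℝ) 1, HasDerivAt z
      (deriv u₁ y - deriv u₂ y - ε * (-τ * y ^ (-τ - 1))) y := by
    intro y hy
    exact ((hasDeriv_of_C2 hd1 hy).1.sub (hasDeriv_of_C2 hd2 hy).1).sub
      ((hφ y (-τ) hy.1).const_mul ε)
  have hz2 : HasDerivAt (fun y => deriv u₁ y - deriv u₂ y - ε * (-τ * y ^ (-τ - 1)))
      (deriv (deriv u₁) x - deriv (deriv u₂) x
        - ε * (-τ * ((-τ - 1) * x ^ (-τ - 1 - 1)))) x :=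
    ((hasDeriv_of_C2 hd1 hxI').2.sub (hasDeriv_of_C2 hd2 hxI').2).sub
      (((hφ x (-τ - 1) hxp).const_mul (-τ)).const_mul ε)
  obtain ⟨e1, e2⟩ := second_deriv_max
    (Filter.eventually_of_mem (isOpen_Ioo.mem_nhds hxI') hz1) hz2 hlm
  set R := x ^ (-τ - 1 - 1) with hR
  have hRp : 0 < R := Real.rpow_pos_of_pos hxp _
  have hRx : x ^ (-τ - 1) = R * x := by
    rw [hR, Real.rpow_sub_one hxp.ne' (-τ - 1)]; field_simp
  rw [hRx] at e1
  have hw : η < u₁ x - u₂ x := by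
    have : 0 < ε * x ^ (-τ) := mul_pos hε0 (Real.rpow_pos_of_pos hxp _)
    simp only [hz] at hzx
    linarith
  have hGx := hG x hxI' hw
  set q := ε * τ * R with hq
  have hq0 : 0 < q := by positivity
  have hy : deriv u₂ x / x = deriv u₁ x / x + q := by
    rw [div_add' _ _ _ hxp.ne']
    congr 1
    rw [hq]; linarith
  have ha : deriv (deriv u₁) x ≤ deriv (deriv u₂) x + (τ + 1) * q := by
    rw [hq]; nlinarith
  rw [hy] at hGx
  have g1 := (h.mono1 (deriv u₁ x / x)).monotone ha
  have g2 := (h.el1 (deriv (deriv u₂) x) (deriv u₁ x / x) ((τ + 1) * q) (by positivity)).2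
  have g3 := (h.el2 (deriv (deriv u₂) x) (deriv u₁ x / x) q hq0.le).1
  nlinarith

end

section
variable {G : ℝ → ℝ → ℝ} {lam Lam n : ℝ}

/-- Bounded solutions of the boundary value problem. -/
def Sol (G : ℝ → ℝ → ℝ) (γ β : ℝ) (f : ℝ → ℝ) (b : ℝ) (u : ℝ → ℝ) : Prop :=
  (∃ C : ℝ, ∀ r ∈ Ioc (0:ℝ) 1, |u r| ≤ C) ∧
    ContinuousOn u (Ioc 0 1) ∧ ContDiffOn ℝ 2 u (Ioo 0 1) ∧
    (∀ r ∈ Ioo (0:ℝ) 1,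
      G (deriv (deriv u) r) (deriv u r / r) - β * u r * r ^ (-γ) = f r * r ^ (-γ)) ∧
    u 1 = b

/-- Regularity up to the origin. -/
def Reg (γ : ℝ) (u : ℝ → ℝ) : Prop :=
  (∃ A : ℝ, ∀ x ∈ Icc (0:ℝ) 1, ∀ y ∈ Icc (0:ℝ) 1,
    |u x - u y| ≤ A * |x ^ (2 - γ) - y ^ (2 - γ)|) ∧
  (γ < 1 → ContDiffOn ℝ 1 u (Ico 0 1))

lemma BCI.comp₂ {K : ℝ → ℝ → ℝ} {c d : ℝ} (hc : 0 ≤ c) (hd : 0 ≤ d)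
    (hK : ∀ A y A' y', |K A y - K A' y'| ≤ c * |A - A'| + d * |y - y'|)
    {g h : ℝ → ℝ} (hg : BCI g) (hh : BCI h) : BCI (fun t => K (g t) (h t)) := by
  constructor
  · intro x hx
    have h1 : Tendsto g (nhdsWithin x (Ioo 0 1)) (nhds (g x)) := hg.1 x hx
    have h2 : Tendsto h (nhdsWithin x (Ioo 0 1)) (nhds (h x)) := hh.1 x hx
    refine tendsto_iff_dist_tendsto_zero.2 ?_
    have h3 : Tendsto (fun t => c * |g t - g x| + d * |h t - h x|)
        (nhdsWithin x (Ioo 0 1)) (nhds 0) := by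
      have := ((h1.sub_const (g x)).abs.const_mul c).add ((h2.sub_const (h x)).abs.const_mul d)
      simpa using this
    refine squeeze_zero (fun _ => dist_nonneg) (fun t => ?_) h3
    rw [Real.dist_eq]
    exact hK _ _ _ _
  · obtain ⟨C, hC0, hC⟩ := hg.exists_nonneg
    obtain ⟨D, hD0, hD⟩ := hh.exists_nonneg
    refine ⟨|K 0 0| + (c * C + d * D), fun r hr => ?_⟩
    have h1 := hK (g r) (h r) 0 0
    rw [sub_zero, sub_zero] at h1
    have h2 := mul_le_mul_of_nonneg_left (hC r hr) hc
    have h3 := mul_le_mul_of_nonneg_left (hD r hr) hd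
    have h4 := abs_sub_abs_le_abs_sub (K (g r) (h r)) (K 0 0)
    linarith

lemma avg_bound {a : ℝ} (ha : -1 < a) {g : ℝ → ℝ} (hg : BCI g) {C : ℝ}
    (hC : ∀ r ∈ Ioo (0:ℝ) 1, |g r| ≤ C) {r : ℝ} (hr : r ∈ Ioo (0:ℝ) 1) :
    |r ^ (-(a + 1)) * WP a g r| ≤ C / (a + 1) := by
  have hrp : 0 < r ^ (-(a + 1)) := Real.rpow_pos_of_pos hr.1 _
  have h0 : (0:ℝ) ∈ Icc (0:ℝ) 1 := by simp
  have ha1 : 0 < a + 1 := by linarith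
  have h1 := WP_bound_le ha hg hC h0 ⟨hr.1.le, hr.2.le⟩ hr.1.le
  rw [WP_zero, sub_zero, Real.zero_rpow ha1.ne', sub_zero] at h1
  rw [abs_mul, abs_of_pos hrp]
  refine (mul_le_mul_of_nonneg_left h1 hrp.le).trans (le_of_eq ?_)
  rw [mul_left_comm, ← Real.rpow_add hr.1]
  simp

lemma WP_cont {a : ℝ} (ha : -1 < a) {g : ℝ → ℝ} (hg : BCI g) :
    ContinuousOn (WP a g) (Ioo 0 1) :=
  fun _ hx => (WP_deriv ha hg hx).continuousAt.continuousWithinAt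

lemma avg_BCI {a : ℝ} (ha : -1 < a) {g : ℝ → ℝ} (hg : BCI g) :
    BCI (fun r => r ^ (-(a + 1)) * WP a g r) := by
  obtain ⟨C, hC⟩ := hg.2
  refine ⟨ContinuousOn.mul ?_ (WP_cont ha hg), _, fun r hr => avg_bound ha hg hC hr⟩
  exact fun t ht => (Real.continuousAt_rpow_const _ _ (Or.inl ht.1.ne')).continuousWithinAt

lemma WP_BCI {a : ℝ} (ha : -1 < a) {g : ℝ → ℝ} (hg : BCI g) : BCI (WP a g) := by
  obtain ⟨C, hC0, hC⟩ := hg.exists_nonneg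
  have ha1 : 0 < a + 1 := by linarith
  refine ⟨WP_cont ha hg, C / (a + 1), fun r hr => ?_⟩
  have h0 : (0:ℝ) ∈ Icc (0:ℝ) 1 := by simp
  have h1 := WP_bound_le ha hg hC h0 ⟨hr.1.le, hr.2.le⟩ hr.1.le
  rw [WP_zero, sub_zero, Real.zero_rpow ha1.ne', sub_zero] at h1
  refine h1.trans (mul_le_of_le_one_right (by positivity) ?_)
  exact Real.rpow_le_one hr.1.le hr.2.le ha1.le

lemma base_reg {γ : ℝ} (hγ2 : γ < 2) {q u : ℝ → ℝ} {b : ℝ} (hq : BCI q)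
    (hu : u = fun r => b - (WP (1 - γ) q 1 - WP (1 - γ) q r)) : Reg γ u := by
  have ha : -1 < 1 - γ := by linarith
  obtain ⟨C, hC0, hC⟩ := hq.exists_nonneg
  have hA : ∀ x ∈ Icc (0:ℝ) 1, ∀ y ∈ Icc (0:ℝ) 1,
    |u x - u y| ≤ C / (2 - γ) * |x ^ (2 - γ) - y ^ (2 - γ)| := by
    intro x hx y hy
    have := WP_bound ha hq hC hx hy
    rw [show 1 - γ + 1 = 2 - γ by ring] at this
    rw [hu]
    convert this using 2
    ring
  refine ⟨⟨_, hA⟩, fun hγ1 => ?_⟩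
  have hd : ∀ x ∈ Ioo (0:ℝ) 1, HasDerivAt u (x ^ (1 - γ) * q x) x := by
    intro x hx
    rw [hu]
    simpa using ((WP_deriv ha hq hx).const_sub (WP (1 - γ) q 1)).const_sub b
  have hp : 0 < 1 - γ := by linarith
  have hlim : Tendsto (fun x : ℝ => x ^ (1 - γ)) (nhds 0) (nhds 0) := by
    have := (Real.continuousAt_rpow_const 0 (1 - γ) (Or.inr hp.le)).tendsto
    rwa [Real.zero_rpow hp.ne'] at this
  have h01 : Ioo (0:ℝ) 1 ∈ nhdsWithin 0 (Ioi 0) := Ioo_mem_nhdsGT one_pos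
  have hlim2 : Tendsto (fun x : ℝ => x ^ (1 - γ) * q x) (nhdsWithin 0 (Ioi 0)) (nhds 0) := by
    have h1 : Tendsto (fun x : ℝ => x ^ (1 - γ) * C) (nhdsWithin 0 (Ioi 0)) (nhds 0) := by
      simpa using (hlim.mono_left nhdsWithin_le_nhds).mul_const C
    refine squeeze_zero_norm' ?_ h1
    filter_upwards [h01] with x hx
    rw [norm_mul, Real.norm_eq_abs, Real.norm_eq_abs, abs_of_nonneg (Real.rpow_nonneg hx.1.le _)]
    exact mul_le_mul_of_nonneg_left (hC x hx) (Real.rpow_nonneg hx.1.le _)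
  have huc0 : ContinuousWithinAt u (Ioo 0 1) 0 := by
    have hlims : Tendsto (fun x : ℝ => x ^ (2 - γ)) (nhds 0) (nhds 0) := by
      have := (Real.continuousAt_rpow_const 0 (2 - γ) (Or.inr (by linarith))).tendsto
      rwa [Real.zero_rpow (by linarith)] at this
    have h1 : Tendsto (fun x : ℝ => C / (2 - γ) * |x ^ (2 - γ)|) (nhdsWithin 0 (Ioo 0 1))
        (nhds 0) := by
      simpa using ((hlims.mono_left nhdsWithin_le_nhds).abs.const_mul (C / (2 - γ)))
    refine tendsto_iff_dist_tendsto_zero.2 (squeeze_zero' (Eventually.of_forall fun _ => dist_nonneg) ?_ h1)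
    filter_upwards [self_mem_nhdsWithin] with x hx
    have := hA x ⟨hx.1.le, hx.2.le⟩ 0 (by simp)
    rw [Real.zero_rpow (by linarith), sub_zero] at this
    rw [Real.dist_eq]; exact this
  have hd0 : HasDerivWithinAt u 0 (Ici 0) 0 := by
    refine hasDerivWithinAt_Ici_of_tendsto_deriv (s := Ioo 0 1)
      (fun x hx => (hd x hx).differentiableAt.differentiableWithinAt) huc0 h01 ?_
    refine hlim2.congr' ?_
    filter_upwards [h01] with x hx
    exact (hd x hx).deriv.symm
  have hud : UniqueDiffOn ℝ (Ico (0:ℝ) 1) := uniqueDiffOn_Ico 0 1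
  have hd' : ∀ x ∈ Ico (0:ℝ) 1, HasDerivWithinAt u (if x = 0 then 0 else x ^ (1 - γ) * q x)
      (Ico 0 1) x := by
    intro x hx
    split_ifs with h
    · rw [h]; exact hd0.mono Ico_subset_Ici_self
    · exact (hd x ⟨lt_of_le_of_ne hx.1 (Ne.symm h), hx.2⟩).hasDerivWithinAt
  rw [contDiffOn_one_iff_derivWithin hud]
  refine ⟨fun x hx => (hd' x hx).differentiableWithinAt, ?_⟩
  have heq : EqOn (derivWithin u (Ico 0 1)) (fun x => if x = 0 then 0 else x ^ (1 - γ) * q x)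
      (Ico 0 1) := fun x hx => (hd' x hx).derivWithin (hud x hx)
  refine ContinuousOn.congr ?_ heq
  intro x hx
  rcases eq_or_lt_of_le hx.1 with h | h
  · subst h
    rw [← continuousWithinAt_sdiff_self]
    have : Ico (0:ℝ) 1 \ {0} = Ioo 0 1 := by ext y; simp
    rw [this]
    unfold ContinuousWithinAt
    simp only [if_true]
    refine (hlim2.mono_left (nhdsWithin_mono _ fun y hy => hy.1)).congr' ?_
    filter_upwards [self_mem_nhdsWithin] with y hy
    rw [if_neg hy.1.ne']
  · have hx' : x ∈ Ioo (0:ℝ) 1 := ⟨h, hx.2⟩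
    have h1 : ContinuousAt (fun x : ℝ => x ^ (1 - γ) * q x) x :=
      (Real.continuousAt_rpow_const _ _ (Or.inl h.ne')).mul
        (hq.1.continuousAt (isOpen_Ioo.mem_nhds hx'))
    refine (h1.congr ?_).continuousWithinAt
    filter_upwards [lt_mem_nhds h] with y hy
    rw [if_neg hy.ne']

lemma GHyp.base (h : GHyp G lam Lam n) {γ : ℝ} (hγ0 : 0 < γ) (hγ2 : γ < 2)
    {β : ℝ} (hβ : 0 ≤ β) (hβ' : β ≤ lam * (2 - γ) ^ 2) {f : ℝ → ℝ} (hf : BCI f) (b : ℝ) :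
    ∃ u, Sol G γ β f b u ∧ Reg γ u := by
  have hl := h.lpos
  have hL : 0 < Lam := hl.trans_le h.lle
  have hn := h.npos
  obtain ⟨H, hH, hlip, hhom⟩ := h.inv
  set k := Lam / lam * n with hk
  set m := lam / Lam * n with hm
  have hm1 : 1 < m := by
    rw [hm, div_mul_eq_mul_div, one_lt_div hL]; exact h.ln
  have hmk : m ≤ k := by
    rw [hm, hk]
    refine mul_le_mul_of_nonneg_right ?_ hn.le
    exact ((div_le_one hL).2 h.lle).trans ((one_le_div hl).2 h.lle)
  have ha : -1 < 1 - γ := by linarith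
  have ha' : -1 < k - γ := by linarith
  have hs : 0 < 2 - γ := by linarith
  have he : 0 < k - γ + 1 := by linarith
  have hli : 0 < 1 / lam := by positivity
  have h1I : (1:ℝ) ∈ Icc (0:ℝ) 1 := by simp
  let U : (ℝ → ℝ) → ℝ → ℝ := fun q r => b - (WP (1 - γ) q 1 - WP (1 - γ) q r)
  let Q : (ℝ → ℝ) → ℝ → ℝ := fun q t => H (β * U q t + f t) (q t) + k * q t
  let T : (ℝ → ℝ) → ℝ → ℝ := fun q r => r ^ (-(k - γ + 1)) * WP (k - γ) (Q q) r
  have hconst : ∀ c : ℝ, BCI (fun _ => c) := fun c =>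
    ⟨continuousOn_const, |c|, fun _ _ => le_rfl⟩
  have hU : ∀ q, BCI q → BCI (U q) := fun q hq =>
    (hconst b).sub ((hconst _).sub (WP_BCI ha hq))
  have hQ : ∀ q, BCI q → BCI (Q q) := fun q hq =>
    BCI.comp₂ (K := fun A y => H A y + k * y) hli.le (by linarith : 0 ≤ k - m) hlip
      (((hU q hq).const_mul β).add hf) hq
  set κ := (1 / lam * (β * (1 / (2 - γ))) + (k - m)) / (k - γ + 1) with hκ
  have hκ0 : 0 ≤ κ := by
    have : 0 ≤ k - m := by linarith
    positivity
  have hκ1 : κ < 1 := by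
    rw [hκ, div_lt_one he]
    have : 1 / lam * (β * (1 / (2 - γ))) ≤ 2 - γ := by
      rw [show 1 / lam * (β * (1 / (2 - γ))) = β / (lam * (2 - γ)) by field_simp,
        div_le_iff₀ (by positivity)]
      nlinarith
    linarith
  obtain ⟨q, hq, hfix⟩ := fixpt κ hκ0 hκ1 T (fun q hq => avg_BCI ha' (hQ q hq)) (by
    intro q₁ q₂ hq₁ hq₂ D hD0 hD r hr
    have hr' : r ∈ Icc (0:ℝ) 1 := ⟨hr.1.le, hr.2.le⟩
    have hUd : ∀ t ∈ Ioo (0:ℝ) 1, |U q₁ t - U q₂ t| ≤ 1 / (2 - γ) * D := by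
      intro t ht
      have ht' : t ∈ Icc (0:ℝ) 1 := ⟨ht.1.le, ht.2.le⟩
      have e1 := WP_sub ha hq₁ hq₂ h1I
      have e2 := WP_sub ha hq₁ hq₂ ht'
      have e3 := WP_bound ha (hq₁.sub hq₂) hD ht' h1I
      have e4 : U q₁ t - U q₂ t = WP (1 - γ) (fun t => q₁ t - q₂ t) t
          - WP (1 - γ) (fun t => q₁ t - q₂ t) 1 := by
        rw [← e1, ← e2]; simp only [U]; ring
      rw [e4]
      refine e3.trans ?_
      rw [show 1 - γ + 1 = 2 - γ by ring, Real.one_rpow]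
      have e5 : |t ^ (2 - γ) - 1| ≤ 1 := by
        have := Real.rpow_nonneg ht.1.le (2 - γ)
        have := Real.rpow_le_one ht.1.le ht.2.le hs.le
        rw [abs_le]; constructor <;> linarith
      rw [one_div_mul_eq_div]
      exact mul_le_of_le_one_right (by positivity) e5
    have hQd : ∀ t ∈ Ioo (0:ℝ) 1, |Q q₁ t - Q q₂ t| ≤
        (1 / lam * (β * (1 / (2 - γ))) + (k - m)) * D := by
      intro t ht
      have e1 := hlip (β * U q₁ t + f t) (q₁ t) (β * U q₂ t + f t) (q₂ t)
      have e2 : |β * U q₁ t + f t - (β * U q₂ t + f t)| ≤ β * (1 / (2 - γ) * D) := by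
        rw [show β * U q₁ t + f t - (β * U q₂ t + f t) = β * (U q₁ t - U q₂ t) by ring,
          abs_mul, abs_of_nonneg hβ]
        exact mul_le_mul_of_nonneg_left (hUd t ht) hβ
      have e3 := mul_le_mul_of_nonneg_left e2 hli.le
      have e4 := mul_le_mul_of_nonneg_left (hD t ht) (by linarith : 0 ≤ k - m)
      simp only [Q]
      linarith
    have e1 := avg_bound ha' ((hQ q₁ hq₁).sub (hQ q₂ hq₂)) hQd hr
    rw [← WP_sub ha' (hQ q₁ hq₁) (hQ q₂ hq₂) hr', mul_sub] at e1
    refine e1.trans (le_of_eq ?_)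
    rw [hκ]; ring)
  set u := U q with hu
  have hreg : Reg γ u := base_reg hγ2 hq hu
  have hd : ∀ x ∈ Ioo (0:ℝ) 1, HasDerivAt u (x ^ (1 - γ) * q x) x := by
    intro x hx
    simpa using ((WP_deriv ha hq hx).const_sub (WP (1 - γ) q 1)).const_sub b
  have hduq : ∀ x ∈ Ioo (0:ℝ) 1, deriv u x = x ^ (1 - γ) * q x := fun x hx => (hd x hx).deriv
  have hdu : ∀ x ∈ Ioo (0:ℝ) 1, deriv u x = x ^ (-k) * WP (k - γ) (Q q) x := by
    intro x hx
    rw [hduq x hx, ← hfix x hx]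
    simp only [T]
    rw [← mul_assoc, ← Real.rpow_add hx.1]
    congr 2; ring
  have hdd : ∀ x ∈ Ioo (0:ℝ) 1, HasDerivAt (deriv u)
      (x ^ (-γ) * H (β * u x + f x) (q x)) x := by
    intro x hx
    have e1 : HasDerivAt (fun x : ℝ => x ^ (-k) * WP (k - γ) (Q q) x)
        ((-k * x ^ (-k - 1)) * WP (k - γ) (Q q) x + x ^ (-k) * (x ^ (k - γ) * Q q x)) x :=
      (Real.hasDerivAt_rpow_const (Or.inl hx.1.ne')).mul (WP_deriv ha' (hQ q hq) hx)
    have e2 : deriv u =ᶠ[nhds x] fun x : ℝ => x ^ (-k) * WP (k - γ) (Q q) x :=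
      Filter.eventuallyEq_of_mem (isOpen_Ioo.mem_nhds hx) hdu
    refine (e1.congr_of_eventuallyEq e2).congr_deriv ?_
    have e3 : x ^ (-k) * WP (k - γ) (Q q) x = x ^ (1 - γ) * q x := by
      rw [← hdu x hx, hduq x hx]
    have e4 : x ^ (-k - 1) = x ^ (-k) / x := Real.rpow_sub_one hx.1.ne' _
    have e5 : x ^ (-k) * x ^ (k - γ) = x ^ (-γ) := by
      rw [← Real.rpow_add hx.1]; congr 1; ring
    have e6 : x ^ (1 - γ) = x ^ (-γ) * x := by
      rw [show 1 - γ = -γ + 1 by ring, Real.rpow_add_one hx.1.ne']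
    have hx0 := hx.1.ne'
    calc _ = -k * (x ^ (-k) * WP (k - γ) (Q q) x) / x + (x ^ (-k) * x ^ (k - γ)) * Q q x := by
          rw [e4]; ring
      _ = _ := by
          rw [e3, e5, e6]
          simp only [Q]
          field_simp
          ring
  have hdc : ContinuousOn (fun x => x ^ (-γ) * H (β * u x + f x) (q x)) (Ioo 0 1) := by
    refine ContinuousOn.mul (fun t ht =>
      (Real.continuousAt_rpow_const _ _ (Or.inl ht.1.ne')).continuousWithinAt) ?_
    refine (((hQ q hq).sub (hq.const_mul k)).1).congr ?_
    intro t ht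
    simp only [Q, hu]; ring
  obtain ⟨⟨A, hA⟩, -⟩ := id hreg
  have hu1 : u 1 = b := by simp [hu, U]
  refine ⟨u, ⟨?_, ?_, ?_, ?_, hu1⟩, hreg⟩
  · obtain ⟨C, hC⟩ := (hU q hq).2
    refine ⟨max C |b|, fun r hr => ?_⟩
    rcases eq_or_lt_of_le hr.2 with h1 | h1
    · rw [h1, hu1]; exact le_max_right _ _
    · exact (hC r ⟨hr.1, h1⟩).trans (le_max_left _ _)
  · intro x hx
    have hxc : ContinuousAt (fun y : ℝ => y ^ (2 - γ)) x :=
      Real.continuousAt_rpow_const _ _ (Or.inl hx.1.ne')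
    have h1 : Tendsto (fun y : ℝ => A * |y ^ (2 - γ) - x ^ (2 - γ)|) (nhdsWithin x (Ioc 0 1))
        (nhds 0) := by
      have := ((hxc.tendsto.mono_left
        (nhdsWithin_le_nhds (s := Ioc 0 1))).sub_const (x ^ (2 - γ))).abs.const_mul A
      simpa using this
    refine tendsto_iff_dist_tendsto_zero.2
      (squeeze_zero' (Eventually.of_forall fun _ => dist_nonneg) ?_ h1)
    filter_upwards [self_mem_nhdsWithin] with y hy
    exact hA y ⟨hy.1.le, hy.2⟩ x ⟨hx.1.le, hx.2⟩
  · rw [show (2 : WithTop ℕ∞) = 1 + 1 by norm_num, contDiffOn_succ_iff_deriv_of_isOpen isOpen_Ioo]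
    refine ⟨fun x hx => (hd x hx).differentiableAt.differentiableWithinAt, by simp, ?_⟩
    rw [show (1 : WithTop ℕ∞) = 0 + 1 by norm_num, contDiffOn_succ_iff_deriv_of_isOpen isOpen_Ioo]
    refine ⟨fun x hx => (hdd x hx).differentiableAt.differentiableWithinAt, by simp, ?_⟩
    rw [contDiffOn_zero]
    exact hdc.congr fun x hx => (hdd x hx).deriv
  · intro r hr
    have hrp : 0 < r ^ (-γ) := Real.rpow_pos_of_pos hr.1 _
    have e6 : r ^ (1 - γ) = r ^ (-γ) * r := by
      rw [show 1 - γ = -γ + 1 by ring, Real.rpow_add_one hr.1.ne']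
    have e7 : deriv u r / r = r ^ (-γ) * q r := by
      rw [hduq r hr, e6]
      have := hr.1.ne'
      field_simp
    rw [(hdd r hr).deriv, e7, h.hom _ _ _ hrp, hH]
    ring

lemma GHyp.step (h : GHyp G lam Lam n) {γ : ℝ}
    {β δ : ℝ} (hβ : 0 < β) (hδ0 : 0 ≤ δ) (hδ : δ ≤ β / 2)
    (hex : ∀ f, BCI f → ∀ b, ∃ u, Sol G γ β f b u ∧ Reg γ u)
    {f : ℝ → ℝ} (hf : BCI f) (b : ℝ) :
    ∃ u, Sol G γ (β + δ) f b u ∧ Reg γ u := by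
  choose! S hS using hex
  have hS' : ∀ q, BCI q → BCI (fun t => f t + δ * q t) := fun q hq => hf.add (hq.const_mul δ)
  have hsub : Ioo (0:ℝ) 1 ⊆ Ioc 0 1 := Ioo_subset_Ioc_self
  have key : ∀ q₁ q₂, BCI q₁ → BCI q₂ → ∀ D : ℝ, 0 ≤ D →
      (∀ r ∈ Ioo (0:ℝ) 1, |q₁ r - q₂ r| ≤ D) →
      ∀ r ∈ Ioo (0:ℝ) 1, S (fun t => f t + δ * q₁ t) b r - S (fun t => f t + δ * q₂ t) b r
        ≤ 1 / 2 * D := by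
    intro q₁ q₂ h₁ h₂ D hD0 hD r hr
    obtain ⟨⟨a1, a2, a3, a4, a5⟩, -⟩ := hS _ (hS' q₁ h₁) b
    obtain ⟨⟨b1, b2, b3, b4, b5⟩, -⟩ := hS _ (hS' q₂ h₂) b
    refine h.comparison (by positivity) a1 b1 a2 b2 a3 b3 (a5.trans b5.symm) ?_ r (hsub hr)
    intro t ht hη
    have c1 := a4 t ht
    have c2 := b4 t ht
    have hp : 0 < t ^ (-γ) := Real.rpow_pos_of_pos ht.1 _
    have c3 := (abs_le.1 (hD t ht)).1
    have c4 : 0 ≤ β * (S (fun t => f t + δ * q₁ t) b t - S (fun t => f t + δ * q₂ t) b t)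
        + δ * (q₁ t - q₂ t) := by
      have d1 := mul_le_mul_of_nonneg_left hη.le hβ.le
      have d2 := mul_le_mul_of_nonneg_left c3 hδ0
      have d3 := mul_le_mul_of_nonneg_right hδ hD0
      linarith
    have c5 := mul_nonneg c4 hp.le
    linarith
  obtain ⟨q, hq, hfix⟩ := fixpt (1 / 2) (by norm_num) (by norm_num)
    (fun q => S (fun t => f t + δ * q t) b)
    (fun q hq => by
      obtain ⟨⟨⟨C, a1⟩, a2, a3, a4, a5⟩, -⟩ := hS _ (hS' q hq) b
      exact ⟨a2.mono hsub, C, fun r hr => a1 r (hsub hr)⟩)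
    (fun q₁ q₂ h₁ h₂ D hD0 hD r hr => by
      rw [abs_le]
      have e1 := key q₁ q₂ h₁ h₂ D hD0 hD r hr
      have e2 := key q₂ q₁ h₂ h₁ D hD0
        (fun r hr => by rw [abs_sub_comm]; exact hD r hr) r hr
      constructor <;> linarith)
  obtain ⟨⟨a1, a2, a3, a4, a5⟩, hr⟩ := hS _ (hS' q hq) b
  refine ⟨_, ⟨a1, a2, a3, fun r hr => ?_, a5⟩, hr⟩
  have e1 := a4 r hr
  have e2 := hfix r hr
  simp only at e1 e2
  rw [← e2] at e1
  linarith

lemma GHyp.exists_sol (h : GHyp G lam Lam n) {γ : ℝ} (hγ0 : 0 < γ) (hγ2 : γ < 2)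
    {β : ℝ} (hβ : 0 ≤ β) {f : ℝ → ℝ} (hf : BCI f) (b : ℝ) :
    ∃ u, Sol G γ β f b u ∧ Reg γ u := by
  have hl := h.lpos
  have hs : 0 < 2 - γ := by linarith
  have hβ0 : 0 < lam * (2 - γ) ^ 2 := by positivity
  set β₀ := lam * (2 - γ) ^ 2 with hβ₀
  have key : ∀ j : ℕ, ∀ β : ℝ, 0 ≤ β → β ≤ β₀ * (3 / 2) ^ j → ∀ f, BCI f → ∀ b,
      ∃ u, Sol G γ β f b u ∧ Reg γ u := by
    intro j
    induction j with
    | zero =>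
      intro β h0 h1 f hf b
      exact h.base hγ0 hγ2 h0 (by simpa using h1) hf b
    | succ j ih =>
      intro β h0 h1 f hf b
      rcases eq_or_lt_of_le h0 with hz | hz
      · exact ih β h0 (hz ▸ (by positivity)) f hf b
      · have := h.step (γ := γ) (β := β / (3 / 2)) (δ := β / 3) (by positivity) (by positivity)
          (by linarith) (ih _ (by positivity) (by
            rw [div_le_iff₀ (by norm_num)]; rw [pow_succ] at h1; linarith)) hf b
        rwa [show β / (3 / 2) + β / 3 = β by ring] at this
  obtain ⟨j, hj⟩ := pow_unbounded_of_one_lt (β / β₀) (by norm_num : (1:ℝ) < 3 / 2)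
  refine key j β hβ ?_ f hf b
  rw [div_lt_iff₀ hβ0] at hj
  linarith

end

lemma rpow_sub_holder {s x y : ℝ} (hs0 : 0 < s) (hs1 : s ≤ 1) (hx : 0 ≤ x) (hy : 0 ≤ y) :
    |x ^ s - y ^ s| ≤ |x - y| ^ s := by
  have key : ∀ x y : ℝ, 0 ≤ y → y ≤ x → |x ^ s - y ^ s| ≤ |x - y| ^ s := by
    intro x y hy hxy
    have h1 : y ^ s ≤ x ^ s := Real.rpow_le_rpow hy hxy hs0.le
    rw [abs_of_nonneg (by linarith), abs_of_nonneg (by linarith)]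
    have h2 := NNReal.rpow_add_le_add_rpow ⟨y, hy⟩ ⟨x - y, by linarith⟩ hs0.le hs1
    have h3 : (y + (x - y)) ^ s ≤ y ^ s + (x - y) ^ s := by exact_mod_cast h2
    rw [add_sub_cancel] at h3
    linarith
  rcases le_total y x with h | h
  · exact key x y hy h
  · rw [abs_sub_comm, abs_sub_comm x]; exact key y x hx h

lemma rpow_sub_lip {s x y : ℝ} (hs1 : 1 ≤ s) (hx : x ∈ Icc (0:ℝ) 1) (hy : y ∈ Icc (0:ℝ) 1) :
    |x ^ s - y ^ s| ≤ s * |x - y| := by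
  have := Convex.norm_image_sub_le_of_norm_hasDerivWithin_le (f := fun t : ℝ => t ^ s)
    (f' := fun t => s * t ^ (s - 1)) (C := s) (s := Icc 0 1)
    (fun t _ => (Real.hasDerivAt_rpow_const (Or.inr hs1)).hasDerivWithinAt)
    (fun t ht => by
      rw [Real.norm_eq_abs, abs_of_nonneg
        (mul_nonneg (by linarith) (Real.rpow_nonneg ht.1 _))]
      exact mul_le_of_le_one_right (by linarith) (Real.rpow_le_one ht.1 ht.2 (by linarith)))
    (convex_Icc 0 1) hy hx
  simpa [Real.norm_eq_abs] using this

theorem stmt11 (N : ℕ) (hN : 2 ≤ N) (lam Lam : ℝ) (hlam : 0 < lam) (hlL : lam ≤ Lam)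
    (hNp : 2 < lam / Lam * ((N : ℝ) - 1) + 1)
    (F : Matrix (Fin N) (Fin N) ℝ → ℝ)
    (hF1 : UnifElliptic N lam Lam F) (hF2 : RotInvariant N F) (hF3 : PosHomog N F)
    (γ : ℝ) (hγ0 : 0 < γ) (hγ2 : γ < 2)
    (f : ℝ → ℝ) (hfc : ContinuousOn f (Ioo 0 1))
    (hfb : ∃ C : ℝ, ∀ r ∈ Ioo (0:ℝ) 1, |f r| ≤ C)
    (β : ℝ) (hβ : 0 ≤ β) (b : ℝ) :
    ∃ u : ℝ → ℝ,
      ((∃ C : ℝ, ∀ r ∈ Ioc (0:ℝ) 1, |u r| ≤ C) ∧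
        ContinuousOn u (Ioc 0 1) ∧ ContDiffOn ℝ 2 u (Ioo 0 1) ∧
        (∀ r ∈ Ioo (0:ℝ) 1,
          F (Dmat N (deriv (deriv u) r) (deriv u r / r)) - β * u r * r ^ (-γ)
            = f r * r ^ (-γ)) ∧
        u 1 = b) ∧
      (∀ w : ℝ → ℝ,
        ((∃ C : ℝ, ∀ r ∈ Ioc (0:ℝ) 1, |w r| ≤ C) ∧
          ContinuousOn w (Ioc 0 1) ∧ ContDiffOn ℝ 2 w (Ioo 0 1) ∧
          (∀ r ∈ Ioo (0:ℝ) 1,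
            F (Dmat N (deriv (deriv w) r) (deriv w r / r)) - β * w r * r ^ (-γ)
              = f r * r ^ (-γ)) ∧
          w 1 = b) → EqOn w u (Ioc 0 1)) ∧
      ∃ v : ℝ → ℝ, EqOn v u (Ioc 0 1) ∧ ContinuousOn v (Icc 0 1) ∧
        (γ < 1 → ContDiffOn ℝ 1 v (Ico 0 1)) ∧
        (γ ≤ 1 → ∃ K : ℝ, ∀ x ∈ Icc (0:ℝ) 1, ∀ y ∈ Icc (0:ℝ) 1,
          |v x - v y| ≤ K * |x - y|) ∧
        (1 < γ → ∃ C : ℝ, ∀ x ∈ Icc (0:ℝ) 1, ∀ y ∈ Icc (0:ℝ) 1,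
          |v x - v y| ≤ C * |x - y| ^ (2 - γ)) := by
  have h := ghyp_of N hN lam Lam hlam hlL hNp F hF1 hF3
  obtain ⟨u, hu, ⟨A, hA⟩, hC1⟩ := h.exists_sol hγ0 hγ2 hβ ⟨hfc, hfb⟩ b
  have hA0 : 0 ≤ |A| := abs_nonneg A
  have hs : 0 < 2 - γ := by linarith
  have hA' : ∀ x ∈ Icc (0:ℝ) 1, ∀ y ∈ Icc (0:ℝ) 1,
      |u x - u y| ≤ |A| * |x ^ (2 - γ) - y ^ (2 - γ)| := fun x hx y hy =>
    (hA x hx y hy).trans (mul_le_mul_of_nonneg_right (le_abs_self A) (abs_nonneg _))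
  refine ⟨u, hu, ?_, u, fun _ _ => rfl, ?_, hC1, ?_, ?_⟩
  · intro w hw r hr
    obtain ⟨a1, a2, a3, a4, a5⟩ := hu
    obtain ⟨b1, b2, b3, b4, b5⟩ := hw
    have key : ∀ t ∈ Ioo (0:ℝ) 1,
        F (Dmat N (deriv (deriv w) t) (deriv w t / t))
          - F (Dmat N (deriv (deriv u) t) (deriv u t / t)) = β * (w t - u t) * t ^ (-γ) := by
      intro t ht
      have c1 := a4 t ht
      have c2 := b4 t ht
      simp only at c1
      linarith
    refine le_antisymm ?_ ?_
    · have := h.comparison le_rfl b1 a1 b2 a2 b3 a3 (b5.trans a5.symm) (fun t ht hη => by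
        have c3 : 0 ≤ β * (w t - u t) * t ^ (-γ) :=
          mul_nonneg (mul_nonneg hβ hη.le) (Real.rpow_nonneg ht.1.le _)
        have := key t ht
        linarith) r hr
      linarith
    · have := h.comparison le_rfl a1 b1 a2 b2 a3 b3 (a5.trans b5.symm) (fun t ht hη => by
        have c3 : 0 ≤ β * (u t - w t) * t ^ (-γ) :=
          mul_nonneg (mul_nonneg hβ hη.le) (Real.rpow_nonneg ht.1.le _)
        have := key t ht
        linarith) r hr
      linarith
  · intro x hx
    have hxc : ContinuousAt (fun y : ℝ => y ^ (2 - γ)) x :=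
      Real.continuousAt_rpow_const _ _ (Or.inr hs.le)
    have h1 : Tendsto (fun y : ℝ => A * |y ^ (2 - γ) - x ^ (2 - γ)|) (nhdsWithin x (Icc 0 1))
        (nhds 0) := by
      have := ((hxc.tendsto.mono_left
        (nhdsWithin_le_nhds (s := Icc 0 1))).sub_const (x ^ (2 - γ))).abs.const_mul A
      simpa using this
    refine tendsto_iff_dist_tendsto_zero.2
      (squeeze_zero' (Eventually.of_forall fun _ => dist_nonneg) ?_ h1)
    filter_upwards [self_mem_nhdsWithin] with y hy
    exact hA y hy x hx
  · intro hγ1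
    refine ⟨|A| * (2 - γ), fun x hx y hy => (hA' x hx y hy).trans ?_⟩
    rw [mul_assoc]
    exact mul_le_mul_of_nonneg_left (rpow_sub_lip (by linarith) hx hy) hA0
  · intro hγ1
    refine ⟨|A|, fun x hx y hy => (hA' x hx y hy).trans ?_⟩
    exact mul_le_mul_of_nonneg_left (rpow_sub_holder hs (by linarith) hx.1 hy.1) hA0


end
end

section
/- Compactness of bounded radial solutions: let 0 < γ < 2 and let u_n : (0,1) → ℝ be C² functions, uniformly bounded, satisfying F(D(u_n''(r), u_n'(r)/r)) = f_n(r)·r^{−γ} on (0,1), where each f_n : (0,1) → ℝ is continuous and the sequence {f_n} is uniformly bounded. If f_n converges uniformly on (0,1) to a function f which extends continuously to [0,1], then each u_n extends continuously to [0,1] and there exist a subsequence {u_{n_k}} and a function u, continuous on [0,1] and C² on (0,1), such that u_{n_k} converges uniformly on [0,1] to u and F(D(u''(r), u'(r)/r)) = f(r)·r^{−γ} for all r ∈ (0,1). -/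
open Set Real Filter MeasureTheory Matrix

noncomputable section

lemma aux_mono {D : Set ℝ} (hD : Convex ℝ D) {f f' : ℝ → ℝ}
    (hf : ∀ x ∈ D, HasDerivAt f (f' x) x) (h0 : ∀ x ∈ interior D, 0 ≤ f' x) : MonotoneOn f D := by
  refine monotoneOn_of_deriv_nonneg hD (fun x hx => (hf x hx).continuousAt.continuousWithinAt)
    (fun x hx => (hf x (interior_subset hx)).differentiableAt.differentiableWithinAt) ?_
  intro x hx
  rw [(hf x (interior_subset hx)).deriv]
  exact h0 x hx

lemma aux_grad (u p a : ℝ → ℝ) (κ γ C0 C : ℝ) (hκ : 1 < κ) (hγ2 : γ < 2)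
    (hC0 : 0 ≤ C0)
    (hu : ∀ r ∈ Ioo (0:ℝ) 1, HasDerivAt u (p r) r)
    (hp : ∀ r ∈ Ioo (0:ℝ) 1, HasDerivAt p (a r) r)
    (hine : ∀ r ∈ Ioo (0:ℝ) 1, 0 < p r → a r + κ * (p r / r) ≤ C0 * r ^ (-γ))
    (hb : ∀ r ∈ Ioo (0:ℝ) 1, |u r| ≤ C) :
    ∀ r ∈ Ioo (0:ℝ) 1, p r ≤ C0 / (κ + 1 - γ) * r ^ (1 - γ) := by
  intro r0 hr0
  by_contra! hcon
  have hden : 0 < κ + 1 - γ := by linarith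
  set C' := C0 / (κ + 1 - γ) with hC'
  have hC'0 : 0 ≤ C' := by positivity
  let q : ℝ → ℝ := fun r => r ^ κ * p r - C' * r ^ (κ + 1 - γ)
  have hqd : ∀ r ∈ Ioo (0:ℝ) 1, HasDerivAt q
      (κ * r ^ (κ - 1) * p r + r ^ κ * a r - C' * ((κ + 1 - γ) * r ^ (κ + 1 - γ - 1))) r := by
    intro r hr
    have h1 := Real.hasDerivAt_rpow_const (x := r) (p := κ) (Or.inl hr.1.ne')
    have h2 := Real.hasDerivAt_rpow_const (x := r) (p := κ + 1 - γ) (Or.inl hr.1.ne')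
    exact (h1.mul (hp r hr)).sub (h2.const_mul C')
  have hqpos : ∀ r ∈ Ioo (0:ℝ) 1, 0 < q r → 0 < p r := by
    intro r hr h
    have h1 : 0 < r ^ κ := Real.rpow_pos_of_pos hr.1 _
    have h2 : 0 < r ^ (κ + 1 - γ) := Real.rpow_pos_of_pos hr.1 _
    have h3 : 0 ≤ C' * r ^ (κ + 1 - γ) := by positivity
    have h4 : 0 < r ^ κ * p r := by
      have : q r = r ^ κ * p r - C' * r ^ (κ + 1 - γ) := rfl
      linarith
    exact (pos_iff_pos_of_mul_pos h4).1 h1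
  have hqneg : ∀ r ∈ Ioo (0:ℝ) 1, 0 < q r →
      κ * r ^ (κ - 1) * p r + r ^ κ * a r - C' * ((κ + 1 - γ) * r ^ (κ + 1 - γ - 1)) ≤ 0 := by
    intro r hr h
    have h1 := hine r hr (hqpos r hr h)
    have h2 : r ^ (κ - 1) = r ^ κ / r := Real.rpow_sub_one hr.1.ne' _
    have h3 : r ^ (κ + 1 - γ - 1) = r ^ κ * r ^ (-γ) := by
      rw [← Real.rpow_add hr.1]; congr 1; ring
    have h4 : C' * (κ + 1 - γ) = C0 := by rw [hC']; field_simp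
    have h5 : 0 < r ^ κ := Real.rpow_pos_of_pos hr.1 _
    have h6 := mul_le_mul_of_nonneg_left h1 h5.le
    rw [h2, h3, ← mul_assoc, h4]
    have h7 : κ * (r ^ κ / r) * p r = r ^ κ * (κ * (p r / r)) := by ring
    rw [h7]
    nlinarith
  have hq0 : 0 < q r0 := by
    have h1 : 0 < r0 ^ κ := Real.rpow_pos_of_pos hr0.1 _
    have h2 : r0 ^ (κ + 1 - γ) = r0 ^ κ * r0 ^ (1 - γ) := by
      rw [← Real.rpow_add hr0.1]; congr 1; ring
    change 0 < r0 ^ κ * p r0 - C' * r0 ^ (κ + 1 - γ)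
    rw [h2]
    have := mul_lt_mul_of_pos_left hcon h1
    nlinarith
  have hsub : ∀ r1 ∈ Ioc (0:ℝ) r0, Icc r1 r0 ⊆ Ioo (0:ℝ) 1 := fun r1 h1 x hx =>
    ⟨h1.1.trans_le hx.1, hx.2.trans_lt hr0.2⟩
  have hqge : ∀ r1 ∈ Ioc (0:ℝ) r0, q r0 ≤ q r1 := by
    intro r1 hr1
    by_contra! hlt
    set l := max (q r1) (q r0 / 2) with hl
    have hl0 : 0 < l := lt_of_lt_of_le (by linarith) (le_max_right _ _)
    have hl1 : l < q r0 := max_lt hlt (by linarith)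
    have hcont : ContinuousOn q (Icc r1 r0) := fun x hx =>
      (hqd x (hsub r1 hr1 hx)).continuousAt.continuousWithinAt
    have hcpt : IsCompact (Icc r1 r0 ∩ q ⁻¹' Iic l) :=
      isCompact_Icc.of_isClosed_subset (hcont.preimage_isClosed_of_isClosed isClosed_Icc isClosed_Iic)
        inter_subset_left
    obtain ⟨s, ⟨hs1, hs2⟩, hs3⟩ := hcpt.exists_isGreatest
      ⟨r1, ⟨le_refl _, hr1.2⟩, show q r1 ≤ l from le_max_left _ _⟩
    have hm : MonotoneOn (fun x => - q x) (Icc s r0) := by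
      refine aux_mono (convex_Icc _ _) (fun x hx => (hqd x (hsub r1 hr1
        ⟨hs1.1.trans hx.1, hx.2⟩)).neg) ?_
      intro x hx
      rw [interior_Icc] at hx
      have hxI : x ∈ Icc r1 r0 := ⟨hs1.1.trans hx.1.le, hx.2.le⟩
      have : l < q x := by
        by_contra! hle
        exact absurd (hs3 ⟨hxI, hle⟩) (not_le.2 hx.1)
      have := hqneg x (hsub r1 hr1 hxI) (hl0.trans this)
      linarith
    have := hm ⟨le_refl s, hs1.2⟩ ⟨hs1.2, le_refl r0⟩ hs1.2
    have hs2' : q s ≤ l := hs2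
    simp only at this
    linarith
  have hpge : ∀ r ∈ Ioc (0:ℝ) r0, q r0 / r ≤ p r := by
    intro r hr
    have hr1 : r ∈ Ioo (0:ℝ) 1 := ⟨hr.1, hr.2.trans_lt hr0.2⟩
    have h1 := hqge r hr
    have hpp := hqpos r hr1 (hq0.trans_le h1)
    have h2 : r ^ κ ≤ r := by
      have := Real.rpow_le_rpow_of_exponent_ge hr1.1 hr1.2.le hκ.le
      simpa using this
    have h3 : 0 ≤ C' * r ^ (κ + 1 - γ) := mul_nonneg hC'0 (Real.rpow_nonneg hr.1.le _)
    have h4 : q r = r ^ κ * p r - C' * r ^ (κ + 1 - γ) := rfl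
    rw [div_le_iff₀ hr.1]
    have := mul_le_mul_of_nonneg_right h2 hpp.le
    linarith
  have hm : MonotoneOn (fun x => u x - q r0 * Real.log x) (Ioc 0 r0) := by
    refine aux_mono (f' := fun x => p x - q r0 * x⁻¹) (convex_Ioc _ _) (fun x hx => (hu x ⟨hx.1, hx.2.trans_lt hr0.2⟩).sub
      ((Real.hasDerivAt_log hx.1.ne').const_mul _)) ?_
    intro x hx
    have := hpge x (interior_subset hx)
    rw [div_eq_mul_inv] at this
    linarith
  set r := r0 * Real.exp (-(2 * C + 1) / q r0) with hr
  have hC : 0 ≤ C := (abs_nonneg _).trans (hb r0 hr0)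
  have hrr : r ∈ Ioc (0:ℝ) r0 := by
    refine ⟨mul_pos hr0.1 (Real.exp_pos _), mul_le_of_le_one_right hr0.1.le ?_⟩
    rw [Real.exp_le_one_iff]
    exact div_nonpos_of_nonpos_of_nonneg (by linarith) hq0.le
  have h1 := hm hrr ⟨hr0.1, le_refl _⟩ hrr.2
  simp only at h1
  rw [hr, Real.log_mul hr0.1.ne' (Real.exp_pos _).ne', Real.log_exp, ← hr, mul_add,
    mul_div_cancel₀ _ hq0.ne'] at h1
  have h2 := abs_le.1 (hb r0 hr0)
  have h3 := abs_le.1 (hb r ⟨hrr.1, hrr.2.trans_lt hr0.2⟩)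
  linarith

lemma aux_grad_abs (u p a : ℝ → ℝ) (κ γ C0 C : ℝ) (hκ : 1 < κ) (hγ2 : γ < 2)
    (hC0 : 0 ≤ C0)
    (hu : ∀ r ∈ Ioo (0:ℝ) 1, HasDerivAt u (p r) r)
    (hp : ∀ r ∈ Ioo (0:ℝ) 1, HasDerivAt p (a r) r)
    (hine : ∀ r ∈ Ioo (0:ℝ) 1, 0 < p r → a r + κ * (p r / r) ≤ C0 * r ^ (-γ))
    (hine' : ∀ r ∈ Ioo (0:ℝ) 1, p r < 0 → -(C0 * r ^ (-γ)) ≤ a r + κ * (p r / r))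
    (hb : ∀ r ∈ Ioo (0:ℝ) 1, |u r| ≤ C) :
    ∀ r ∈ Ioo (0:ℝ) 1, |p r| ≤ C0 / (κ + 1 - γ) * r ^ (1 - γ) := by
  intro r hr
  have h1 := aux_grad u p a κ γ C0 C hκ hγ2 hC0 hu hp hine hb r hr
  have h2 := aux_grad (fun x => - u x) (fun x => - p x) (fun x => - a x) κ γ C0 C hκ hγ2 hC0
    (fun r hr => (hu r hr).neg) (fun r hr => (hp r hr).neg)
    (fun r hr h => by have := hine' r hr (by linarith); rw [neg_div, mul_neg]; linarith)
    (fun r hr => by simpa using hb r hr) r hr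
  exact abs_le.2 ⟨by linarith, h1⟩

/-- Hölder estimate from the gradient bound, in Lipschitz form after a change of variable. -/
lemma aux_lip (u p : ℝ → ℝ) (γ C' : ℝ) (hγ2 : γ < 2) (hC' : 0 ≤ C')
    (hu : ∀ r ∈ Ioo (0:ℝ) 1, HasDerivAt u (p r) r)
    (hp : ∀ r ∈ Ioo (0:ℝ) 1, |p r| ≤ C' * r ^ (1 - γ)) :
    LipschitzOnWith (Real.toNNReal (C' / (2 - γ))) (fun x => u (x ^ (1 / (2 - γ)))) (Ioo 0 1) := by
  have hα : 0 < 2 - γ := by linarith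
  set K := C' / (2 - γ) with hK
  have hK0 : 0 ≤ K := by positivity
  have hKd : ∀ r ∈ Ioo (0:ℝ) 1, HasDerivAt (fun r => K * r ^ (2 - γ)) (C' * r ^ (1 - γ)) r := by
    intro r hr
    have h2 := (Real.hasDerivAt_rpow_const (x := r) (p := 2 - γ) (Or.inl hr.1.ne')).const_mul K
    have h3 : K * ((2 - γ) * r ^ (2 - γ - 1)) = C' * r ^ (1 - γ) := by
      rw [← mul_assoc, hK, div_mul_cancel₀ _ hα.ne']
      congr 2; ring
    rw [h3] at h2
    exact h2
  have hm1 : MonotoneOn (fun r => K * r ^ (2 - γ) - u r) (Ioo 0 1) := by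
    refine aux_mono (convex_Ioo _ _) (fun r hr => (hKd r hr).sub (hu r hr)) ?_
    intro x hx
    have := (abs_le.1 (hp x (interior_subset hx)))
    linarith
  have hm2 : MonotoneOn (fun r => K * r ^ (2 - γ) + u r) (Ioo 0 1) := by
    refine aux_mono (convex_Ioo _ _) (fun r hr => (hKd r hr).add (hu r hr)) ?_
    intro x hx
    have := (abs_le.1 (hp x (interior_subset hx)))
    linarith
  refine LipschitzOnWith.of_dist_le_mul ?_
  have key : ∀ x ∈ Ioo (0:ℝ) 1, ∀ y ∈ Ioo (0:ℝ) 1, x ≤ y →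
      |u (x ^ (1 / (2 - γ))) - u (y ^ (1 / (2 - γ)))| ≤ K * |x - y| := by
    intro x hx y hy hxy
    have hmem : ∀ x ∈ Ioo (0:ℝ) 1, x ^ (1 / (2 - γ)) ∈ Ioo (0:ℝ) 1 := fun x hx =>
      ⟨Real.rpow_pos_of_pos hx.1 _, Real.rpow_lt_one hx.1.le hx.2 (by positivity)⟩
    have hinv : ∀ x ∈ Ioo (0:ℝ) 1, (x ^ (1 / (2 - γ))) ^ (2 - γ) = x := fun x hx => by
      rw [← Real.rpow_mul hx.1.le, one_div, inv_mul_cancel₀ hα.ne', Real.rpow_one]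
    have hle : x ^ (1 / (2 - γ)) ≤ y ^ (1 / (2 - γ)) :=
      Real.rpow_le_rpow hx.1.le hxy (by positivity)
    have h1 := hm1 (hmem x hx) (hmem y hy) hle
    have h2 := hm2 (hmem x hx) (hmem y hy) hle
    simp only [hinv x hx, hinv y hy] at h1 h2
    rw [abs_of_nonpos (by linarith : x - y ≤ 0), abs_le]
    constructor <;> nlinarith
  intro x hx y hy
  rw [Real.coe_toNNReal _ hK0, Real.dist_eq, Real.dist_eq]
  rcases le_total x y with h | h
  · exact key x hx y hy h
  · rw [abs_sub_comm, abs_sub_comm x y]; exact key y hy x hx h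

lemma aux_AA (K : NNReal) (C : ℝ) (h : ℕ → ℝ → ℝ) (hl : ∀ n, LipschitzWith K (h n))
    (hb : ∀ n, |h n (1/2)| ≤ C) :
    ∃ φ : ℕ → ℕ, StrictMono φ ∧ ∃ g : ℝ → ℝ, ContinuousOn g (Icc 0 1) ∧
      TendstoUniformlyOn (fun k => h (φ k)) g atTop (Icc 0 1) := by
  let hh : ℕ → BoundedContinuousFunction (Icc (0:ℝ) 1) ℝ := fun n =>
    BoundedContinuousFunction.mkOfCompact ⟨fun x => h n x, (hl n).continuous.comp continuous_subtype_val⟩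
  have hcomp : IsCompact (closure (range hh)) := by
    refine BoundedContinuousFunction.arzela_ascoli (Icc (-(C + K)) (C + K)) isCompact_Icc _ ?_ ?_
    · rintro _ x ⟨n, rfl⟩
      have h1 := (hl n).dist_le_mul x (1/2)
      have h2 : dist (x:ℝ) (1/2) ≤ 1 := by
        rw [Real.dist_eq, abs_le]; constructor <;> linarith [x.2.1, x.2.2]
      have h3 : (K:ℝ) * dist (x:ℝ) (1/2) ≤ K := mul_le_of_le_one_right K.2 h2
      rw [Real.dist_eq] at h1
      have h4 := abs_le.1 (h1.trans h3)
      have h5 := abs_le.1 (hb n)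
      change h n x ∈ _
      constructor <;> linarith
    · refine UniformEquicontinuous.equicontinuous ?_
      refine LipschitzWith.uniformEquicontinuous _ K ?_
      rintro ⟨_, n, rfl⟩
      exact (hl n).comp (LipschitzWith.subtype_val _) |>.weaken (by simp)
  obtain ⟨g, -, φ, hφ, hlim⟩ := hcomp.tendsto_subseq (x := hh) (fun n => subset_closure ⟨n, rfl⟩)
  have hu := BoundedContinuousFunction.tendsto_iff_tendstoUniformly.1 hlim
  refine ⟨φ, hφ, fun x => g (projIcc 0 1 zero_le_one x), ?_, ?_⟩
  · exact (g.continuous.comp continuous_projIcc).continuousOn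
  · rw [Metric.tendstoUniformlyOn_iff]
    rw [Metric.tendstoUniformly_iff] at hu
    intro ε hε
    filter_upwards [hu ε hε] with k hk x hx
    have := hk ⟨x, hx⟩
    rw [projIcc_of_mem _ hx]
    exact this

lemma aux_G (N : ℕ) (hN : 2 ≤ N) (lam Lam : ℝ)
    (F : Matrix (Fin N) (Fin N) ℝ → ℝ)
    (hF1 : UnifElliptic N lam Lam F) (hF3 : PosHomog N F) :
    (∀ a a' b, a ≤ a' → lam * (a' - a) ≤ F (Dmat N a' b) - F (Dmat N a b) ∧
      F (Dmat N a' b) - F (Dmat N a b) ≤ Lam * (a' - a)) ∧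
    (∀ a b b', b ≤ b' → lam * ((N:ℝ) - 1) * (b' - b) ≤ F (Dmat N a b') - F (Dmat N a b) ∧
      F (Dmat N a b') - F (Dmat N a b) ≤ Lam * ((N:ℝ) - 1) * (b' - b)) ∧
    F (Dmat N 0 0) = 0 := by
  have hsymm : ∀ a b, (Dmat N a b).IsSymm := fun a b => Matrix.isSymm_diagonal _
  have hpsd : ∀ a b, 0 ≤ a → 0 ≤ b → (Dmat N a b).PosSemidef := by
    intro a b ha hb
    refine Matrix.PosSemidef.diagonal ?_
    intro i
    simp only [Pi.zero_apply]
    split_ifs <;> assumption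
  have htr : ∀ a b, (Dmat N a b).trace = a + ((N:ℝ) - 1) * b := by
    intro a b
    obtain ⟨M, rfl⟩ : ∃ M, N = M + 1 := ⟨N - 1, by omega⟩
    rw [Dmat, Matrix.trace_diagonal, Fin.sum_univ_succ]
    simp
  have hadd : ∀ a b c d, Dmat N a b + Dmat N c d = Dmat N (a + c) (b + d) := by
    intro a b c d
    rw [Dmat, Dmat, Dmat, Matrix.diagonal_add]
    congr 1
    ext i
    split_ifs <;> rfl
  refine ⟨?_, ?_, ?_⟩
  · intro a a' b h
    have := hF1 (Dmat N a b) (Dmat N (a' - a) 0) (hsymm _ _) (hpsd _ _ (by linarith) le_rfl)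
    rw [hadd, htr] at this
    simpa using this
  · intro a b b' h
    have := hF1 (Dmat N a b) (Dmat N 0 (b' - b)) (hsymm _ _) (hpsd _ _ le_rfl (by linarith))
    rw [hadd, htr] at this
    simpa [mul_assoc] using this
  · have h0 : Dmat N 0 0 = 0 := by
      rw [Dmat]; simp
    have := hF3 2 (by norm_num) 0
    rw [smul_zero] at this
    rw [h0]; linarith

lemma aux_uc (s : Set ℝ) (a b : ℕ → ℝ → ℝ) (a' b' : ℝ → ℝ) (c : ℝ) (d : ℕ → ℝ → ℝ) (d' : ℝ → ℝ)
    (ha : TendstoUniformlyOn a a' atTop s) (hb : TendstoUniformlyOn b b' atTop s)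
    (hc : 0 ≤ c)
    (h : ∀ n, ∀ x ∈ s, |d n x - d' x| ≤ c * (|a n x - a' x| + |b n x - b' x|)) :
    TendstoUniformlyOn d d' atTop s := by
  rw [Metric.tendstoUniformlyOn_iff] at *
  intro ε hε
  have hδ : 0 < ε / (2 * (c + 1)) := by positivity
  filter_upwards [ha _ hδ, hb _ hδ] with n h1 h2 x hx
  have h1 := h1 x hx
  have h2 := h2 x hx
  rw [dist_comm, Real.dist_eq] at h1 h2 ⊢
  have h3 := h n x hx
  calc |d n x - d' x| ≤ c * (|a n x - a' x| + |b n x - b' x|) := h3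
    _ ≤ c * (ε / (2 * (c + 1)) + ε / (2 * (c + 1))) := by gcongr
    _ = ε * (c / (c + 1)) := by field_simp; ring
    _ < ε * 1 := by
      gcongr
      rw [div_lt_one (by linarith)]; linarith
    _ = ε := mul_one _

lemma aux_C2 (w p q : ℝ → ℝ) (h1 : ∀ r ∈ Ioo (0:ℝ) 1, HasDerivAt w (p r) r)
    (h2 : ∀ r ∈ Ioo (0:ℝ) 1, HasDerivAt p (q r) r) (h3 : ContinuousOn q (Ioo 0 1)) :
    ContDiffOn ℝ 2 w (Ioo 0 1) ∧ ∀ r ∈ Ioo (0:ℝ) 1, deriv w r = p r ∧ deriv (deriv w) r = q r := by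
  have e1 : ∀ r ∈ Ioo (0:ℝ) 1, deriv w r = p r := fun r hr => (h1 r hr).deriv
  have e1' : ∀ r ∈ Ioo (0:ℝ) 1, HasDerivAt (deriv w) (q r) r := fun r hr =>
    (h2 r hr).congr_of_eventuallyEq (by
      filter_upwards [isOpen_Ioo.mem_nhds hr] with x hx using e1 x hx)
  refine ⟨?_, fun r hr => ⟨e1 r hr, (e1' r hr).deriv⟩⟩
  rw [show (2 : WithTop ℕ∞) = 1 + 1 by norm_num, contDiffOn_succ_iff_deriv_of_isOpen isOpen_Ioo]
  refine ⟨fun r hr => (h1 r hr).differentiableAt.differentiableWithinAt, by simp, ?_⟩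
  rw [show (1 : WithTop ℕ∞) = 0 + 1 by norm_num, contDiffOn_succ_iff_deriv_of_isOpen isOpen_Ioo]
  refine ⟨fun r hr => (e1' r hr).differentiableAt.differentiableWithinAt, by simp, ?_⟩
  rw [contDiffOn_zero]
  exact h3.congr fun r hr => (e1' r hr).deriv

/-- Comparison: the second-order entry is controlled by the other data. -/
lemma aux_H (G : ℝ → ℝ → ℝ) (lam Lam m : ℝ) (hlam : 0 < lam) 
    (hG1 : ∀ a a' b, a ≤ a' → lam * (a' - a) ≤ G a' b - G a b ∧ G a' b - G a b ≤ Lam * (a' - a))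
    (hG2 : ∀ a b b', b ≤ b' → lam * m * (b' - b) ≤ G a b' - G a b ∧
      G a b' - G a b ≤ Lam * m * (b' - b)) (hm : 0 < m) (a a' b b' : ℝ) :
    |a - a'| ≤ (|G a b - G a' b'| + Lam * m * |b - b'|) / lam := by
  have hb : |G a' b - G a' b'| ≤ Lam * m * |b - b'| := by
    rcases le_total b b' with h | h
    · have := hG2 a' b b' h
      have h0 : 0 ≤ lam * m * (b' - b) := mul_nonneg (by positivity) (by linarith)
      rw [abs_of_nonpos (by linarith), abs_of_nonpos (by linarith)]
      linarith
    · have := hG2 a' b' b h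
      have h0 : 0 ≤ lam * m * (b - b') := mul_nonneg (by positivity) (by linarith)
      rw [abs_of_nonneg (by linarith), abs_of_nonneg (by linarith)]
      linarith
  have ha : lam * |a - a'| ≤ |G a b - G a' b| := by
    rcases le_total a a' with h | h
    · have := hG1 a a' b h
      rw [abs_of_nonpos (by linarith : a - a' ≤ 0)]
      have := neg_le_abs (G a b - G a' b)
      linarith
    · have := hG1 a' a b h
      rw [abs_of_nonneg (by linarith : 0 ≤ a - a')]
      have := le_abs_self (G a b - G a' b)
      linarith
  rw [le_div_iff₀ hlam]
  have := abs_sub_le (G a b) (G a' b') (G a' b)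
  rw [abs_sub_comm (G a' b') (G a' b)] at this
  linarith

lemma aux_surj (G : ℝ → ℝ → ℝ) (lam Lam : ℝ) (hlam : 0 < lam) 
    (hG1 : ∀ a a' b, a ≤ a' → lam * (a' - a) ≤ G a' b - G a b ∧ G a' b - G a b ≤ Lam * (a' - a))
    (b c : ℝ) : ∃ a, G a b = c := by
  have hcont : Continuous (fun a => G a b) := by
    have : LipschitzWith (Real.toNNReal Lam) (fun a => G a b) := by
      refine LipschitzWith.of_dist_le_mul ?_
      have hL : 0 ≤ Lam := by have := hG1 0 1 b zero_le_one; linarith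
      intro x y
      rw [Real.coe_toNNReal _ hL, Real.dist_eq, Real.dist_eq]
      rcases le_total x y with h | h
      · have := hG1 x y b h
        have h0 : 0 ≤ lam * (y - x) := mul_nonneg hlam.le (by linarith)
        rw [abs_of_nonpos (by linarith), abs_of_nonpos (by linarith)]
        linarith
      · have := hG1 y x b h
        have h0 : 0 ≤ lam * (x - y) := mul_nonneg hlam.le (by linarith)
        rw [abs_of_nonneg (by linarith), abs_of_nonneg (by linarith)]
        linarith
    exact this.continuous
  set t := |c - G 0 b| / lam with ht
  have ht0 : 0 ≤ t := by positivity
  have hlt : lam * t = |c - G 0 b| := by rw [ht]; field_simp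
  have h1 := hG1 0 t b ht0
  have h2 := hG1 (-t) 0 b (by linarith)
  have := intermediate_value_Icc (by linarith : -t ≤ t) hcont.continuousOn
  have h3 := le_abs_self (c - G 0 b)
  have h4 := neg_le_abs (c - G 0 b)
  obtain ⟨a, -, ha⟩ := this (show c ∈ Icc (G (-t) b) (G t b) from ⟨by linarith, by linarith⟩)
  exact ⟨a, ha⟩

lemma aux_ine (G : ℝ → ℝ → ℝ) (lam Lam m : ℝ) (hlam : 0 < lam) (hlL : lam ≤ Lam) (hm : 0 < m)
    (hG1 : ∀ a a' b, a ≤ a' → lam * (a' - a) ≤ G a' b - G a b ∧ G a' b - G a b ≤ Lam * (a' - a))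
    (hG2 : ∀ a b b', b ≤ b' → lam * m * (b' - b) ≤ G a b' - G a b ∧
      G a b' - G a b ≤ Lam * m * (b' - b)) (hG0 : G 0 0 = 0) (a b : ℝ) :
    (0 < b → a + lam / Lam * m * b ≤ |G a b| / lam) ∧
    (b < 0 → -(|G a b| / lam) ≤ a + lam / Lam * m * b) := by
  have hL : 0 < Lam := by linarith
  have hq : lam / Lam ≤ 1 := (div_le_one hL).2 hlL
  have habs : |G a b| / Lam ≤ |G a b| / lam := by gcongr
  constructor
  · intro hb
    have h1 := (hG2 a 0 b hb.le).1
    have hle := le_abs_self (G a b)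
    rcases le_total a 0 with h | h
    · have h2 := (hG1 a 0 0 h).2
      refine le_trans ?_ habs
      rw [le_div_iff₀ hL]
      have : (a + lam / Lam * m * b) * Lam = Lam * a + lam * m * b := by field_simp
      rw [this]; linarith
    · have h2 := (hG1 0 a 0 h).1
      have h3 : lam / Lam * (m * b) ≤ 1 * (m * b) := by gcongr
      rw [le_div_iff₀ hlam]
      nlinarith
  · intro hb
    have h1 := (hG2 a b 0 hb.le).1
    have hle := neg_le_abs (G a b)
    rw [neg_le]
    rcases le_total 0 a with h | h
    · have h2 := (hG1 0 a 0 h).2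
      refine le_trans ?_ habs
      rw [le_div_iff₀ hL]
      have : -(a + lam / Lam * m * b) * Lam = -(Lam * a + lam * m * b) := by field_simp
      rw [this]; linarith
    · have h2 := (hG1 a 0 0 h).1
      have h3 : lam / Lam * (m * (-b)) ≤ 1 * (m * (-b)) := by
        have : 0 ≤ m * (-b) := mul_nonneg hm.le (by linarith)
        gcongr
      rw [le_div_iff₀ hlam]
      nlinarith

/-- The weighted derivative `r² p` is Lipschitz. -/
lemma aux_lip2 (p a : ℝ → ℝ) (γ C' C'' : ℝ) (hγ2 : γ < 2) (hC' : 0 ≤ C') (hC'' : 0 ≤ C'')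
    (hp : ∀ r ∈ Ioo (0:ℝ) 1, HasDerivAt p (a r) r)
    (hpb : ∀ r ∈ Ioo (0:ℝ) 1, |p r| ≤ C' * r ^ (1 - γ))
    (hab : ∀ r ∈ Ioo (0:ℝ) 1, |a r| ≤ C'' * r ^ (-γ)) :
    LipschitzOnWith (Real.toNNReal (2 * C' + C'')) (fun r => r ^ 2 * p r) (Ioo 0 1) := by
  refine Convex.lipschitzOnWith_of_nnnorm_hasDerivWithin_le (f' := fun r => 2 * r * p r + r ^ 2 * a r)
    (convex_Ioo _ _) ?_ ?_
  · intro r hr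
    have := (((hasDerivAt_pow 2 r).mul (hp r hr))).hasDerivWithinAt (s := Ioo 0 1)
    simp only [Nat.cast_ofNat, Nat.add_one_sub_one, pow_one] at this
    exact this
  · intro r hr
    rw [← NNReal.coe_le_coe, Real.coe_toNNReal _ (by positivity), coe_nnnorm, Real.norm_eq_abs]
    have hr1 : r ^ (2 - γ) ≤ 1 := Real.rpow_le_one hr.1.le hr.2.le (by linarith)
    have e1 : r * r ^ (1 - γ) = r ^ (2 - γ) := by
      rw [show (2 - γ) = 1 + (1 - γ) by ring, Real.rpow_add hr.1, Real.rpow_one]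
    have e2 : r ^ 2 * r ^ (-γ) = r ^ (2 - γ) := by
      rw [show (2 - γ) = 2 + (-γ) by ring, Real.rpow_add hr.1, Real.rpow_two]
    have hr0 := hr.1
    calc |2 * r * p r + r ^ 2 * a r| ≤ |2 * r * p r| + |r ^ 2 * a r| := abs_add_le _ _
      _ = 2 * r * |p r| + r ^ 2 * |a r| := by
        rw [abs_mul, abs_mul (r ^ 2), abs_of_pos (by positivity : 0 < 2 * r),
          abs_of_pos (by positivity : 0 < r ^ 2)]
      _ ≤ 2 * r * (C' * r ^ (1 - γ)) + r ^ 2 * (C'' * r ^ (-γ)) := by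
        gcongr
        · exact hpb r hr
        · exact hab r hr
      _ = 2 * C' * (r * r ^ (1 - γ)) + C'' * (r ^ 2 * r ^ (-γ)) := by ring
      _ ≤ 2 * C' * 1 + C'' * 1 := by
        rw [e1, e2]; gcongr
      _ = _ := by ring

theorem stmt12 (N : ℕ) (hN : 2 ≤ N) (lam Lam : ℝ) (hlam : 0 < lam) (hlL : lam ≤ Lam)
    (hNp : 2 < lam / Lam * ((N : ℝ) - 1) + 1)
    (F : Matrix (Fin N) (Fin N) ℝ → ℝ)
    (hF1 : UnifElliptic N lam Lam F) (hF2 : RotInvariant N F) (hF3 : PosHomog N F)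
    (γ : ℝ) (hγ0 : 0 < γ) (hγ2 : γ < 2)
    (u : ℕ → ℝ → ℝ) (hu2 : ∀ n, ContDiffOn ℝ 2 (u n) (Ioo 0 1))
    (hub : ∃ C : ℝ, ∀ n, ∀ r ∈ Ioo (0:ℝ) 1, |u n r| ≤ C)
    (fn : ℕ → ℝ → ℝ) (hfc : ∀ n, ContinuousOn (fn n) (Ioo 0 1))
    (hfb : ∃ C : ℝ, ∀ n, ∀ r ∈ Ioo (0:ℝ) 1, |fn n r| ≤ C)
    (heq : ∀ n, ∀ r ∈ Ioo (0:ℝ) 1,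
      F (Dmat N (deriv (deriv (u n)) r) (deriv (u n) r / r)) = fn n r * r ^ (-γ))
    (f : ℝ → ℝ) (hfcont : ContinuousOn f (Icc 0 1))
    (hconv : TendstoUniformlyOn fn f atTop (Ioo 0 1)) :
    ∃ v : ℕ → ℝ → ℝ,
      (∀ n, ContinuousOn (v n) (Icc 0 1) ∧ EqOn (v n) (u n) (Ioo 0 1)) ∧
      ∃ φ : ℕ → ℕ, StrictMono φ ∧
        ∃ w : ℝ → ℝ, ContinuousOn w (Icc 0 1) ∧ ContDiffOn ℝ 2 w (Ioo 0 1) ∧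
          TendstoUniformlyOn (fun k => v (φ k)) w atTop (Icc 0 1) ∧
          ∀ r ∈ Ioo (0:ℝ) 1,
            F (Dmat N (deriv (deriv w) r) (deriv w r / r)) = f r * r ^ (-γ) := by
  obtain ⟨hG1, hG2, hG0⟩ := aux_G N hN lam Lam F hF1 hF3
  set m : ℝ := (N : ℝ) - 1 with hm
  have hm0 : 0 < m := by
    have : (2:ℝ) ≤ N := by exact_mod_cast hN
    linarith
  obtain ⟨G, hGdef⟩ : ∃ G : ℝ → ℝ → ℝ, ∀ a b, F (Dmat N a b) = G a b := ⟨_, fun _ _ => rfl⟩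
  simp only [hGdef] at *
  have hL : 0 < Lam := by linarith
  have hα : 0 < 2 - γ := by linarith
  obtain ⟨C, hC⟩ := hub
  obtain ⟨Cf, hCf⟩ := hfb
  have hhalf : (1/2 : ℝ) ∈ Ioo (0:ℝ) 1 := by constructor <;> norm_num
  have hCf0 : 0 ≤ Cf := (abs_nonneg _).trans (hCf 0 _ hhalf)
  set κ := lam / Lam * m with hκ
  have hκ1 : 1 < κ := by linarith
  -- derivatives
  have hd1 : ∀ n, ∀ r ∈ Ioo (0:ℝ) 1, HasDerivAt (u n) (deriv (u n) r) r := fun n r hr =>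
    (((hu2 n).contDiffAt (isOpen_Ioo.mem_nhds hr)).differentiableAt (by norm_num)).hasDerivAt
  have hc1 : ∀ n, ContDiffOn ℝ 1 (deriv (u n)) (Ioo 0 1) := fun n =>
    ((contDiffOn_succ_iff_deriv_of_isOpen isOpen_Ioo).1 (hu2 n)).2.2
  have hd2 : ∀ n, ∀ r ∈ Ioo (0:ℝ) 1, HasDerivAt (deriv (u n)) (deriv (deriv (u n)) r) r :=
    fun n r hr =>
    (((hc1 n).contDiffAt (isOpen_Ioo.mem_nhds hr)).differentiableAt (by norm_num)).hasDerivAt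
  have hc2 : ∀ n, ContinuousOn (deriv (deriv (u n))) (Ioo 0 1) := fun n =>
    (hc1 n).continuousOn_deriv_of_isOpen isOpen_Ioo le_rfl
  have hGb : ∀ n, ∀ r ∈ Ioo (0:ℝ) 1,
      |G (deriv (deriv (u n)) r) (deriv (u n) r / r)| ≤ Cf * r ^ (-γ) := by
    intro n r hr
    rw [heq n r hr, abs_mul, abs_of_pos (Real.rpow_pos_of_pos hr.1 _)]
    exact mul_le_mul_of_nonneg_right (hCf n r hr) (Real.rpow_nonneg hr.1.le _)
  have hGb' : ∀ n, ∀ r ∈ Ioo (0:ℝ) 1,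
      |G (deriv (deriv (u n)) r) (deriv (u n) r / r)| / lam ≤ Cf / lam * r ^ (-γ) := by
    intro n r hr
    rw [div_mul_eq_mul_div]
    exact div_le_div_of_nonneg_right (hGb n r hr) hlam.le
  set C' := Cf / lam / (κ + 1 - γ) with hC'
  have hC'0 : 0 ≤ C' := by
    have : 0 < κ + 1 - γ := by linarith
    positivity
  have hp : ∀ n, ∀ r ∈ Ioo (0:ℝ) 1, |deriv (u n) r| ≤ C' * r ^ (1 - γ) := by
    intro n
    refine aux_grad_abs (u n) _ _ κ γ (Cf / lam) C hκ1 hγ2 (by positivity) (hd1 n) (hd2 n) ?_ ?_ (hC n)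
    · intro r hr h
      exact ((aux_ine G lam Lam m hlam hlL hm0 hG1 hG2 hG0 _ _).1 (div_pos h hr.1)).trans (hGb' n r hr)
    · intro r hr h
      refine le_trans ?_ ((aux_ine G lam Lam m hlam hlL hm0 hG1 hG2 hG0 _ _).2
        (div_neg_of_neg_of_pos h hr.1))
      exact neg_le_neg (hGb' n r hr)
  set C'' := (Cf + Lam * m * C') / lam with hC''
  have hC''0 : 0 ≤ C'' := by positivity
  have hab : ∀ n, ∀ r ∈ Ioo (0:ℝ) 1, |deriv (deriv (u n)) r| ≤ C'' * r ^ (-γ) := by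
    intro n r hr
    have h1 := aux_H G lam Lam m hlam hG1 hG2 hm0 (deriv (deriv (u n)) r) 0 (deriv (u n) r / r) 0
    rw [hG0, sub_zero, sub_zero, sub_zero] at h1
    refine h1.trans ?_
    rw [hC'', div_mul_eq_mul_div]
    refine div_le_div_of_nonneg_right ?_ hlam.le
    have h2 : |deriv (u n) r / r| ≤ C' * r ^ (-γ) := by
      rw [abs_div, abs_of_pos hr.1, div_le_iff₀ hr.1]
      have : r ^ (1 - γ) = r ^ (-γ) * r := by
        rw [show 1 - γ = -γ + 1 by ring, Real.rpow_add hr.1, Real.rpow_one]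
      have h3 := hp n r hr
      rw [this] at h3
      linarith
    have h4 := mul_le_mul_of_nonneg_left h2 (by positivity : 0 ≤ Lam * m)
    have h5 := hGb n r hr
    linarith
  -- extensions
  have hext1 := fun n => (aux_lip (u n) _ γ C' hγ2 hC'0 (hd1 n) (hp n)).extend_real
  have hext2 := fun n => (aux_lip2 _ _ γ C' C'' hγ2 hC'0 hC''0 (hd2 n) (hp n) (hab n)).extend_real
  choose U hUl hUe using hext1
  choose g hgl hge using hext2
  have hpowmem : ∀ r ∈ Ioo (0:ℝ) 1, r ^ (2 - γ) ∈ Ioo (0:ℝ) 1 := fun r hr =>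
    ⟨Real.rpow_pos_of_pos hr.1 _, Real.rpow_lt_one hr.1.le hr.2 hα⟩
  have hpowmem' : ∀ r ∈ Icc (0:ℝ) 1, r ^ (2 - γ) ∈ Icc (0:ℝ) 1 := fun r hr =>
    ⟨Real.rpow_nonneg hr.1 _, Real.rpow_le_one hr.1 hr.2 hα.le⟩
  have hpowcont : Continuous (fun r : ℝ => r ^ (2 - γ)) := Real.continuous_rpow_const hα.le
  have hUb : ∀ n, |U n (1/2)| ≤ C := by
    intro n
    rw [← hUe n hhalf]
    exact hC n _ ⟨Real.rpow_pos_of_pos hhalf.1 _, Real.rpow_lt_one hhalf.1.le hhalf.2 (by positivity)⟩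
  have hveq : ∀ n, EqOn (fun r => U n (r ^ (2 - γ))) (u n) (Ioo 0 1) := by
    intro n r hr
    have := hUe n (hpowmem r hr)
    simp only at this ⊢
    rw [← this, ← Real.rpow_mul hr.1.le, mul_one_div_cancel hα.ne', Real.rpow_one]
  have hgb : ∀ n, |g n (1/2)| ≤ C' * (1/2 : ℝ) ^ (1 - γ) := by
    intro n
    rw [← hge n hhalf]
    refine le_trans ?_ (hp n _ hhalf)
    rw [abs_mul]
    exact mul_le_of_le_one_left (abs_nonneg _) (by norm_num)
  obtain ⟨φ1, hφ1, U0, hU0c, hU0⟩ := aux_AA _ C U hUl hUb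
  obtain ⟨φ2, hφ2, g0, hg0c, hg0⟩ := aux_AA _ _ (fun k => g (φ1 k)) (fun k => hgl _) (fun k => hgb _)
  refine ⟨fun n r => U n (r ^ (2 - γ)), fun n => ⟨((hUl n).continuous.comp hpowcont).continuousOn,
    hveq n⟩, φ1 ∘ φ2, hφ1.comp hφ2, fun r => U0 (r ^ (2 - γ)), ?_, ?_⟩
  · exact hU0c.comp hpowcont.continuousOn hpowmem'
  have hconvU : TendstoUniformlyOn (fun k r => U ((φ1 ∘ φ2) k) (r ^ (2 - γ)))
      (fun r => U0 (r ^ (2 - γ))) atTop (Icc 0 1) := by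
    rw [Metric.tendstoUniformlyOn_iff] at hU0 ⊢
    intro ε hε
    filter_upwards [hφ2.tendsto_atTop.eventually (hU0 ε hε)] with k hk r hr
    exact hk _ (hpowmem' r hr)
  choose H hH using aux_surj G lam Lam hlam hG1
  set ψ := φ1 ∘ φ2 with hψ
  have hψm : StrictMono ψ := hφ1.comp hφ2
  set p : ℝ → ℝ := fun r => g0 r / r ^ 2 with hpdef
  set q : ℝ → ℝ := fun r => H (p r / r) (f r * r ^ (-γ)) with hqdef
  have hfψ : TendstoUniformlyOn (fun k => fn (ψ k)) f atTop (Ioo 0 1) := by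
    rw [Metric.tendstoUniformlyOn_iff] at hconv ⊢
    intro ε hε
    exact hψm.tendsto_atTop.eventually (hconv ε hε)
  have hg0' : TendstoUniformlyOn (fun k => g (ψ k)) g0 atTop (Ioo 0 1) := hg0.mono Ioo_subset_Icc_self
  have hgp : ∀ n, ∀ r ∈ Ioo (0:ℝ) 1, g n r = r ^ 2 * deriv (u n) r := fun n r hr => (hge n hr).symm
  have hpu : ∀ s : ℝ, 0 < s → TendstoUniformlyOn (fun k => deriv (u (ψ k))) p atTop (Ioo s 1) := by
    intro s hs
    have hsub : Ioo s 1 ⊆ Ioo (0:ℝ) 1 := Ioo_subset_Ioo_left hs.le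
    refine aux_uc _ _ _ _ _ (1 / s ^ 2) _ _ (hg0'.mono hsub) (hg0'.mono hsub) (by positivity) ?_
    intro k r hr
    have hr' := hsub hr
    rw [hgp _ r hr']
    have hr0 : 0 < r := hr'.1
    have e : deriv (u (ψ k)) r - p r = (r ^ 2 * deriv (u (ψ k)) r - g0 r) / r ^ 2 := by
      rw [hpdef]; field_simp
    rw [e, abs_div, abs_of_pos (by positivity : 0 < r ^ 2), div_eq_inv_mul, ← one_div]
    have h1 : s ^ 2 ≤ r ^ 2 := by
      have := hr.1.le
      gcongr
    have h2 : 1 / r ^ 2 ≤ 1 / s ^ 2 := one_div_le_one_div_of_le (by positivity) h1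
    have h3 := abs_nonneg (r ^ 2 * deriv (u (ψ k)) r - g0 r)
    refine mul_le_mul h2 (by linarith) h3 (by positivity)
  have hqu : ∀ s : ℝ, 0 < s →
      TendstoUniformlyOn (fun k => deriv (deriv (u (ψ k)))) q atTop (Ioo s 1) := by
    intro s hs
    have hsub : Ioo s 1 ⊆ Ioo (0:ℝ) 1 := Ioo_subset_Ioo_left hs.le
    refine aux_uc _ _ _ _ _ (s ^ (-γ) / lam + Lam * m / (lam * s)) _ _ (hfψ.mono hsub) (hpu s hs)
      (by positivity) ?_
    intro k r hr
    have hr' := hsub hr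
    have hr0 : 0 < r := hr'.1
    have h1 := aux_H G lam Lam m hlam hG1 hG2 hm0 (deriv (deriv (u (ψ k))) r) (q r)
      (deriv (u (ψ k)) r / r) (p r / r)
    rw [heq _ r hr', hqdef, hH] at h1
    refine h1.trans ?_
    rw [← sub_mul, ← sub_div, abs_mul, abs_div, abs_of_pos hr0,
      abs_of_pos (Real.rpow_pos_of_pos hr0 _)]
    have hA := abs_nonneg (fn (ψ k) r - f r)
    have hB := abs_nonneg (deriv (u (ψ k)) r - p r)
    have h2 : r ^ (-γ) ≤ s ^ (-γ) := Real.rpow_le_rpow_of_nonpos hs hr.1.le (by linarith)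
    have h3 : |deriv (u (ψ k)) r - p r| / r ≤ |deriv (u (ψ k)) r - p r| / s := by
      have := hr.1.le
      gcongr
    generalize |fn (ψ k) r - f r| = A at *
    generalize |deriv (u (ψ k)) r - p r| = B at *
    have h4 : (A * r ^ (-γ) + Lam * m * (B / r)) / lam ≤ (A * s ^ (-γ) + Lam * m * (B / s)) / lam := by
      gcongr
    refine h4.trans ?_
    have h5 : (A * s ^ (-γ) + Lam * m * (B / s)) / lam
        = s ^ (-γ) / lam * A + Lam * m / (lam * s) * B := by field_simp
    rw [h5]
    have h6 : 0 ≤ s ^ (-γ) / lam * B := by positivity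
    have h7 : 0 ≤ Lam * m / (lam * s) * A := by positivity
    linarith
  have hmid : ∀ r ∈ Ioo (0:ℝ) 1, r ∈ Ioo (r / 2) 1 := fun r hr => ⟨by linarith [hr.1], hr.2⟩
  have hw : ∀ r ∈ Ioo (0:ℝ) 1, HasDerivAt (fun r => U0 (r ^ (2 - γ))) (p r) r := by
    intro r hr
    have hs : 0 < r / 2 := by linarith [hr.1]
    have hsub : Ioo (r / 2) 1 ⊆ Ioo (0:ℝ) 1 := Ioo_subset_Ioo_left hs.le
    refine hasDerivAt_of_tendstoUniformlyOn (f := fun k => u (ψ k)) isOpen_Ioo (hpu _ hs)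
      (Eventually.of_forall fun k x hx => hd1 _ x (hsub hx)) ?_ (hmid r hr)
    intro x hx
    have := hconvU.tendsto_at (Ioo_subset_Icc_self (hsub hx))
    refine this.congr fun k => ?_
    exact hveq _ (hsub hx)
  have hpd : ∀ r ∈ Ioo (0:ℝ) 1, HasDerivAt p (q r) r := by
    intro r hr
    have hs : 0 < r / 2 := by linarith [hr.1]
    have hsub : Ioo (r / 2) 1 ⊆ Ioo (0:ℝ) 1 := Ioo_subset_Ioo_left hs.le
    exact hasDerivAt_of_tendstoUniformlyOn (f := fun k => deriv (u (ψ k))) isOpen_Ioo (hqu _ hs)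
      (Eventually.of_forall fun k x hx => hd2 _ x (hsub hx)) (fun x hx => (hpu _ hs).tendsto_at hx)
      (hmid r hr)
  have hqc : ContinuousOn q (Ioo 0 1) := by
    intro r hr
    have hs : 0 < r / 2 := by linarith [hr.1]
    have hsub : Ioo (r / 2) 1 ⊆ Ioo (0:ℝ) 1 := Ioo_subset_Ioo_left hs.le
    have := (hqu _ hs).continuousOn (Frequently.of_forall fun k => (hc2 (ψ k)).mono hsub)
    exact (this.continuousAt (isOpen_Ioo.mem_nhds (hmid r hr))).continuousWithinAt
  obtain ⟨hC2, hder⟩ := aux_C2 _ p q hw hpd hqc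
  refine ⟨hC2, hconvU, ?_⟩
  intro r hr
  rw [(hder r hr).1, (hder r hr).2]
  exact hH _ _


end
end
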